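/- Assume condition (Cond1) and additionally that b, ω ∈ W^{1,2}_loc(ℝ). Let u_τ ∈ V^{2r} with 3/4 < r < 1 be positive with (d/dx)u_τ(0) > 0 and (d/dx)u_τ(1) < 0. Then there is a unique strong solution u to problem (Incl) (unique in the class of all solutions, not only the non-negative ones); it satisfies that u(t) is positive for all t ≥ τ, u ∈ C((τ,∞),H³(0,1)) ∩ C¹((τ,∞),V) with d²u/dt² ∈ L²_loc(τ+ε,∞;H) for all ε > 0, u_x(t,0) > 0 and u_x(t,1) < 0 for all t ≥ τ, and the partial derivatives u_t, u_xx exist in the classical sense and are continuous on (τ,∞)×[0,1]. -/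

import Mathlib

open MeasureTheory Set

noncomputable section

/-- Lebesgue measure restricted to the spatial interval `(0,1)`. -/
def μ01 : Measure ℝ := volume.restrict (Ioo (0:ℝ) 1)

/-- `H = L²(0,1)`. -/
abbrev Hsp : Type := Lp ℝ 2 μ01

/-- The Heaviside multifunction. -/
def heaviside (s : ℝ) : Set ℝ :=
  if s < 0 then {-1} else if s = 0 then Icc (-1) 1 else {1}

/-- Condition (Cond1). -/
structure Cond1 (b ω : ℝ → ℝ) (b0 b1 ω0 ω1 : ℝ) : Prop where
  contb : Continuous b
  contω : Continuous ω
  b0pos : 0 < b0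
  blb : ∀ t, b0 ≤ b t
  bub : ∀ t, b t ≤ b1
  ω0nonneg : 0 ≤ ω0
  ωlb : ∀ t, ω0 ≤ ω t
  ωub : ∀ t, ω t ≤ ω1

/-- `v ∈ H²(0,1) ∩ H¹₀(0,1)` with (weak) second derivative `w ∈ L²(0,1)`:
`v` has a representative that is continuous on `[0,1]`, vanishes at the boundary,
is differentiable on `(0,1)` and whose derivative is an antiderivative of `w`. -/
def InDomainA (v w : Hsp) : Prop :=
  ∃ vt : ℝ → ℝ, ContinuousOn vt (Icc 0 1) ∧ vt 0 = 0 ∧ vt 1 = 0 ∧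
    (∀ᵐ x ∂μ01, vt x = v x) ∧
    ∃ g : ℝ → ℝ,
      (∀ x ∈ Ioo (0:ℝ) 1, HasDerivAt vt (g x) x) ∧
      ∀ x ∈ Ioo (0:ℝ) 1, ∀ y ∈ Ioo (0:ℝ) 1, g x - g y = ∫ z in y..x, w z

/-- A strong solution of the inclusion on `[τ,∞)`, with explicit data:
`r` is the `L²`-selection, `u'` the time derivative, `uxx` the second spatial derivative. -/
structure IsStrongSolutionWith (b ω : ℝ → ℝ) (τ : ℝ) (u r u' uxx : ℝ → Hsp) : Prop where
  cont : ContinuousOn u (Ici τ)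
  rmem : ∀ T, τ < T → MemLp r 2 (volume.restrict (Ioo τ T))
  sel : ∀ᵐ t ∂(volume.restrict (Ioi τ)), ∀ᵐ x ∂μ01,
      ∃ h ∈ heaviside (u t x), r t x = b t * h + ω t * u t x
  dom : ∀ᵐ t ∂(volume.restrict (Ioi τ)), InDomainA (u t) (uxx t)
  eq : ∀ᵐ t ∂(volume.restrict (Ioi τ)), u' t = r t + uxx t
  fund : ∀ T1 T2 : ℝ, τ < T1 → T1 < T2 →
      IntervalIntegrable u' volume T1 T2 ∧
      ∀ t ∈ Icc T1 T2, u t = u T1 + ∫ s in T1..t, u' s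

/-- A strong solution of the inclusion on `[τ,∞)`. -/
def IsStrongSolution (b ω : ℝ → ℝ) (τ : ℝ) (u : ℝ → Hsp) : Prop :=
  ∃ r u' uxx, IsStrongSolutionWith b ω τ u r u' uxx

/-- The solution is non-negative on `[τ,∞)`. -/
def NonnegOn (u : ℝ → Hsp) (τ : ℝ) : Prop :=
  ∀ t, τ ≤ t → ∀ᵐ x ∂μ01, 0 ≤ u t x

/-- `v` is positive: it has a continuous representative on `[0,1]`
which is strictly positive on `(0,1)`. -/
def IsPositive (v : Hsp) : Prop :=
  ∃ vt : ℝ → ℝ, ContinuousOn vt (Icc 0 1) ∧ (∀ᵐ x ∂μ01, vt x = v x) ∧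
    ∀ x ∈ Ioo (0:ℝ) 1, 0 < vt x


/-- `f'` is the weak derivative of `f : ℝ → E` on the open set `S ⊆ ℝ`. -/
def HasWeakDerivOn {E : Type*} [NormedAddCommGroup E] [NormedSpace ℝ E]
    (f f' : ℝ → E) (S : Set ℝ) : Prop :=
  ∀ φ : ℝ → ℝ, ContDiff ℝ (⊤ : ℕ∞) φ → HasCompactSupport φ → tsupport φ ⊆ S →
    ∫ t in S, deriv φ t • f t = - ∫ t in S, φ t • f' t

/-- `f ∈ W^{k,2}_loc(ℝ)`. -/
def Wkloc (k : ℕ) (f : ℝ → ℝ) : Prop :=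
  ∀ T1 T2 : ℝ, T1 < T2 →
    ∃ D : ℕ → ℝ → ℝ, D 0 = f ∧
      (∀ j < k, HasWeakDerivOn (D j) (D (j + 1)) (Ioo T1 T2)) ∧
      ∀ j ≤ k, MemLp (D j) 2 (volume.restrict (Ioo T1 T2))

/-- `w` is the spatial weak derivative of `v` on `(0,1)`. -/
def IsSpatialWeakDeriv (v w : Hsp) : Prop :=
  ∀ φ : ℝ → ℝ, ContDiff ℝ (⊤ : ℕ∞) φ → HasCompactSupport φ → tsupport φ ⊆ Ioo (0:ℝ) 1 →
    ∫ x in Ioo (0:ℝ) 1, deriv φ x * v x = - ∫ x in Ioo (0:ℝ) 1, φ x * w x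

/-- `v : s → H` is of class `C^m` (in the `L²(0,1)` norm). -/
def TimeCk (m : ℕ) (v : ℝ → Hsp) (s : Set ℝ) : Prop :=
  ∃ Dt : ℕ → ℝ → Hsp, Dt 0 = v ∧
    (∀ j < m, ∀ t ∈ s, HasDerivAt (Dt j) (Dt (j + 1) t) t) ∧
    ∀ j ≤ m, ContinuousOn (Dt j) s

/-- `v : s → V = H¹₀(0,1)` is of class `C^m`: both `v` and its spatial derivative
are `C^m` into `L²(0,1)`. -/
def CkIntoV (m : ℕ) (v : ℝ → Hsp) (s : Set ℝ) : Prop :=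
  TimeCk m v s ∧
  ∃ d1 : ℝ → Hsp, (∀ t ∈ s, IsSpatialWeakDeriv (v t) (d1 t)) ∧ TimeCk m d1 s

/-- `v : s → H^m(0,1)` is of class `C^j`: all spatial weak derivatives up to
order `m` exist and are `C^j` in time into `L²(0,1)`. -/
def CjIntoHm (j m : ℕ) (v : ℝ → Hsp) (s : Set ℝ) : Prop :=
  ∃ Dx : ℕ → ℝ → Hsp, Dx 0 = v ∧
    (∀ i < m, ∀ t ∈ s, IsSpatialWeakDeriv (Dx i t) (Dx (i + 1) t)) ∧
    ∀ i ≤ m, TimeCk j (Dx i) s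

/-- `d^m v/dt^m ∈ L²_loc(τ+ε,∞;H)` for every `ε > 0`. -/
def HasL2locTimeDerivChain (m : ℕ) (v : ℝ → Hsp) (τ : ℝ) : Prop :=
  ∃ Dt : ℕ → ℝ → Hsp, Dt 0 = v ∧
    ∀ ε > (0:ℝ), ∀ T, τ + ε < T →
      (∀ j < m, HasWeakDerivOn (Dt j) (Dt (j + 1)) (Ioo (τ + ε) T)) ∧
      MemLp (Dt m) 2 (volume.restrict (Ioo (τ + ε) T))

/-- The partial derivatives `u_t`, `u_xx` exist in the classical sense
and are continuous on `(τ,∞)×[0,1]`. -/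
def ClassicalUtUxx (τ : ℝ) (u : ℝ → Hsp) : Prop :=
  ∃ F Fx ut uxx : ℝ → ℝ → ℝ,
    (∀ t ∈ Ioi τ, ∀ᵐ x ∂μ01, F t x = u t x) ∧
    (∀ t ∈ Ioi τ, ∀ x ∈ Icc (0:ℝ) 1, HasDerivAt (fun s => F s x) (ut t x) t) ∧
    (∀ t ∈ Ioi τ, ∀ x ∈ Icc (0:ℝ) 1, HasDerivWithinAt (F t) (Fx t x) (Icc 0 1) x) ∧
    (∀ t ∈ Ioi τ, ∀ x ∈ Icc (0:ℝ) 1, HasDerivWithinAt (Fx t) (uxx t x) (Icc 0 1) x) ∧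
    ContinuousOn (fun p : ℝ × ℝ => ut p.1 p.2) (Ioi τ ×ˢ Icc 0 1) ∧
    ContinuousOn (fun p : ℝ × ℝ => uxx p.1 p.2) (Ioi τ ×ˢ Icc 0 1)


/-- Fourier sine coefficient of `v` (eigenfunctions of `A = −d²/dx²` on `(0,1)`
with Dirichlet boundary conditions are `sin((n+1)πx)`, `n ∈ ℕ`). -/
def sinCoeff (v : Hsp) (n : ℕ) : ℝ :=
  ∫ x in (0:ℝ)..1, v x * Real.sin (((n : ℝ) + 1) * Real.pi * x)

/-- `v ∈ V^{2r} = D(A^r)`, characterized through the eigenfunction expansion: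
`Σ λₙ^{2r} |⟨v,eₙ⟩|² < ∞` with `λₙ = ((n+1)π)²`. -/
def MemV2r (r : ℝ) (v : Hsp) : Prop :=
  Summable (fun n : ℕ => ((((n : ℝ) + 1) * Real.pi) ^ (4 * r)) * (sinCoeff v n) ^ 2)

/-- `v` is positive on `(0,1)`, of class `C¹([0,1])`, vanishes at the boundary
and has strictly positive (resp. negative) derivative at `x = 0` (resp. `x = 1`). -/
def PositiveWithBoundaryDerivs (v : Hsp) : Prop :=
  ∃ vt g : ℝ → ℝ,
    ContinuousOn vt (Icc 0 1) ∧ vt 0 = 0 ∧ vt 1 = 0 ∧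
    (∀ᵐ x ∂μ01, vt x = v x) ∧
    (∀ x ∈ Icc (0:ℝ) 1, HasDerivWithinAt vt (g x) (Icc 0 1) x) ∧
    ContinuousOn g (Icc 0 1) ∧
    (∀ x ∈ Ioo (0:ℝ) 1, 0 < vt x) ∧ 0 < g 0 ∧ g 1 < 0

structure ACP (F d : ℝ → ℝ) : Prop where
  int : ∀ s t, IntervalIntegrable d volume s t
  eq : ∀ s t, F t - F s = ∫ x in s..t, d x

def L2loc (d : ℝ → ℝ) : Prop := ∀ s t, MemLp d 2 (volume.restrict (Ioo s t))

lemma L2loc.add {d e : ℝ → ℝ} (hd : L2loc d) (he : L2loc e) : L2loc (fun x => d x + e x) :=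
  fun s t => (hd s t).add (he s t)

lemma L2loc.mul_cont {d g : ℝ → ℝ} (hd : L2loc d) (hg : Continuous g) :
    L2loc (fun x => g x * d x) := by
  intro s t
  obtain ⟨C, hC⟩ := (isCompact_Icc (a := s) (b := t)).exists_bound_of_continuousOn hg.continuousOn
  refine MemLp.of_le_mul (g := d) (c := C) (hd s t)
    (hg.aestronglyMeasurable.mul (hd s t).1) ?_
  rw [ae_restrict_iff' measurableSet_Ioo]
  filter_upwards with x hx
  rw [norm_mul]
  exact mul_le_mul_of_nonneg_right (hC x ⟨hx.1.le, hx.2.le⟩) (norm_nonneg _)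

lemma L2loc.of_cont {g : ℝ → ℝ} (hg : Continuous g) : L2loc g := by
  intro s t
  have h1 : L2loc (fun _ => (1:ℝ)) := fun s t => memLp_const 1
  simpa using (h1.mul_cont hg) s t

lemma L2loc.intInt {d : ℝ → ℝ} (hd : L2loc d) (s t : ℝ) : IntervalIntegrable d volume s t := by
  rw [intervalIntegrable_iff]
  have := (hd (min s t) (max s t)).integrable (by norm_num)
  rw [uIoc]
  exact (integrableOn_Ioc_iff_integrableOn_Ioo).2 this

lemma L2loc.intInt_sq {d : ℝ → ℝ} (hd : L2loc d) (s t : ℝ) :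
    IntervalIntegrable (fun x => d x ^ 2) volume s t := by
  rw [intervalIntegrable_iff]
  have := (hd (min s t) (max s t)).integrable_sq
  rw [uIoc]
  exact (integrableOn_Ioc_iff_integrableOn_Ioo).2 this

namespace ACP
variable {F G d e : ℝ → ℝ}

lemma fun_eq (h : ACP F d) (a : ℝ) : F = fun x => F a + ∫ y in a..x, d y := by
  funext x; rw [← h.eq]; ring

lemma continuous (h : ACP F d) : Continuous F := by
  rw [h.fun_eq 0]
  exact continuous_const.add (intervalIntegral.continuous_primitive h.int 0)

lemma locInt (h : ACP F d) : LocallyIntegrable d volume := by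
  intro x
  refine ⟨Ioc (x-1) (x+1), Ioc_mem_nhds (by linarith) (by linarith), ?_⟩
  exact (intervalIntegrable_iff_integrableOn_Ioc_of_le (by linarith)).1 (h.int (x-1) (x+1))

lemma ae_deriv (h : ACP F d) : ∀ᵐ x, HasDerivAt F (d x) x := by
  filter_upwards [LocallyIntegrable.ae_hasDerivAt_integral h.locInt] with x hx
  have h2 := (hx 0).const_add (F 0)
  rwa [← h.fun_eq 0] at h2

lemma ac (h : ACP F d) (a b : ℝ) : AbsolutelyContinuousOnInterval F a b := by
  rw [h.fun_eq a]
  refine AbsolutelyContinuousOnInterval.fun_add ?_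
    ((h.int a b).absolutelyContinuousOnInterval_intervalIntegral (by simp))
  exact (LipschitzWith.const (F a)).lipschitzOnWith.absolutelyContinuousOnInterval

lemma mul (hF : ACP F d) (hG : ACP G e) :
    ACP (fun x => F x * G x) (fun x => d x * G x + F x * e x) where
  int s t := ((hF.int s t).mul_continuousOn hG.continuous.continuousOn).add
    ((hG.int s t).continuousOn_mul hF.continuous.continuousOn)
  eq s t := by
    rw [← AbsolutelyContinuousOnInterval.integral_deriv_mul_eq_sub (hF.ac s t) (hG.ac s t)]
    apply intervalIntegral.integral_congr_ae
    filter_upwards [hF.ae_deriv, hG.ae_deriv] with x h1 h2 _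
    rw [h1.deriv, h2.deriv]

lemma add (hF : ACP F d) (hG : ACP G e) : ACP (fun x => F x + G x) (fun x => d x + e x) where
  int s t := (hF.int s t).add (hG.int s t)
  eq s t := by
    rw [intervalIntegral.integral_add (hF.int s t) (hG.int s t), ← hF.eq, ← hG.eq]; ring

lemma const_mul (hF : ACP F d) (c : ℝ) : ACP (fun x => c * F x) (fun x => c * d x) where
  int s t := (hF.int s t).const_mul c
  eq s t := by rw [intervalIntegral.integral_const_mul, ← hF.eq]; ring

lemma const (c : ℝ) : ACP (fun _ => c) (fun _ => 0) where
  int s t := by simp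
  eq s t := by simp

lemma congr (hF : ACP F d) {F' d' : ℝ → ℝ} (h1 : ∀ x, F' x = F x) (h2 : ∀ x, d' x = d x) :
    ACP F' d' := by
  rwa [show F' = F from funext h1, show d' = d from funext h2]

lemma of_deriv (h : ∀ x, HasDerivAt F (d x) x) (hd : Continuous d) : ACP F d where
  int s t := hd.intervalIntegrable s t
  eq s t := (intervalIntegral.integral_eq_sub_of_hasDerivAt (fun x _ => h x)
    (hd.intervalIntegrable s t)).symm

lemma hasDerivAt (h : ACP F d) (hd : Continuous d) (x : ℝ) : HasDerivAt F (d x) x := by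
  rw [h.fun_eq 0]
  exact (intervalIntegral.integral_hasDerivAt_right (h.int 0 x)
    (hd.stronglyMeasurableAtFilter _ _) hd.continuousAt).const_add _

lemma of_int (hd : ∀ s t, IntervalIntegrable d volume s t) (a : ℝ) :
    ACP (fun x => ∫ y in a..x, d y) d where
  int := hd
  eq s t := by
    rw [intervalIntegral.integral_interval_sub_left (hd _ _) (hd _ _)]

end ACP

/-- du Bois-Reymond -/
lemma dbr {T1 T2 : ℝ} (hT : T1 < T2) {h : ℝ → ℝ} (hh : ContinuousOn h (Ioo T1 T2))
    (H : ∀ φ : ℝ → ℝ, ContDiff ℝ (⊤ : ℕ∞) φ → HasCompactSupport φ → tsupport φ ⊆ Ioo T1 T2 →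
      ∫ t in Ioo T1 T2, deriv φ t * h t = 0) : ∃ c, ∀ t ∈ Ioo T1 T2, h t = c := by
  set m := (T1 + T2) / 2 with hm
  set ρ := (T2 - T1) / 4 with hρ
  have hρ0 : 0 < ρ := by rw [hρ]; linarith
  let B : ContDiffBump m := ⟨ρ / 2, ρ, by linarith, by linarith⟩
  set η : ℝ → ℝ := B.normed volume with hη
  have hηc : ContDiff ℝ (⊤ : ℕ∞) η := B.contDiff_normed
  have hηs : tsupport η ⊆ Ioo T1 T2 := by
    rw [hη, B.tsupport_normed_eq, Real.closedBall_eq_Icc]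
    intro x hx
    have h1 := hx.1; have h2 := hx.2
    change m - ρ ≤ x at h1; change x ≤ m + ρ at h2
    constructor <;> linarith
  have hηk : HasCompactSupport η := B.hasCompactSupport_normed
  have hη1 : ∫ x, η x = 1 := B.integral_normed
  have hint : ∀ ψ : ℝ → ℝ, ContDiff ℝ (⊤ : ℕ∞) ψ → HasCompactSupport ψ → tsupport ψ ⊆ Ioo T1 T2 →
      IntegrableOn (fun t => ψ t * h t) (Ioo T1 T2) := by
    intro ψ hψ hk hs
    have : Continuous (fun t => ψ t * h t) := by
      rw [continuous_iff_continuousAt]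
      intro x
      by_cases hx : x ∈ tsupport ψ
      · exact hψ.continuous.continuousAt.mul (hh.continuousAt (Ioo_mem_nhds (hs hx).1 (hs hx).2))
      · have : (fun t => ψ t * h t) =ᶠ[nhds x] fun _ => 0 := by
          filter_upwards [(isClosed_tsupport ψ).isOpen_compl.mem_nhds hx] with t ht
          rw [image_eq_zero_of_notMem_tsupport ht, zero_mul]
        exact (continuousAt_const.congr this.symm)
    exact (this.integrable_of_hasCompactSupport hk.mul_right).integrableOn
  set c := ∫ t in Ioo T1 T2, η t * h t with hc
  have key : ∀ᵐ x ∂volume, x ∈ Ioo T1 T2 → h x - c = 0 := by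
    apply isOpen_Ioo.ae_eq_zero_of_integral_contDiff_smul_eq_zero
    · exact (hh.sub continuousOn_const).locallyIntegrableOn measurableSet_Ioo
    intro ψ hψ hk hs
    set I := ∫ x, ψ x with hI
    set χ : ℝ → ℝ := fun t => ψ t - I * η t with hχ
    have hχc : ContDiff ℝ (⊤ : ℕ∞) χ := hψ.sub (contDiff_const.mul hηc)
    have hχi : ∀ s t, IntervalIntegrable χ volume s t := fun s t =>
      hχc.continuous.intervalIntegrable s t
    set φ : ℝ → ℝ := fun t => ∫ x in T1..t, χ x with hφ
    have hd : ∀ t, HasDerivAt φ (χ t) t := fun t => (ACP.of_int hχi T1).hasDerivAt hχc.continuous t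
    have hdφ : deriv φ = χ := funext fun t => (hd t).deriv
    have hφc : ContDiff ℝ (⊤ : ℕ∞) φ := by
      rw [contDiff_infty_iff_deriv]
      refine ⟨fun t => (hd t).differentiableAt, ?_⟩
      rw [hdφ]; exact hχc
    set K := tsupport ψ ∪ tsupport η with hK
    have hKc : IsCompact K := hk.isCompact.union hηk.isCompact
    have hKs : K ⊆ Ioo T1 T2 := union_subset hs hηs
    have hχ0 : ∀ x, x ∉ K → χ x = 0 := by
      intro x hx
      rw [hK, mem_union, not_or] at hx
      simp [hχ, image_eq_zero_of_notMem_tsupport hx.1, image_eq_zero_of_notMem_tsupport hx.2]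
    have hKne : K.Nonempty := by
      refine ⟨m, Or.inr (subset_tsupport _ ?_)⟩
      rw [hη, B.support_normed_eq]; exact Metric.mem_ball_self hρ0
    obtain ⟨α, hα, hα'⟩ := hKc.exists_isLeast hKne
    obtain ⟨β, hβ, hβ'⟩ := hKc.exists_isGreatest hKne
    have hχI : ∫ x, χ x = 0 := by
      rw [hχ, integral_sub (hψ.continuous.integrable_of_hasCompactSupport hk)
        ((hηc.continuous.integrable_of_hasCompactSupport hηk).const_mul I),
        integral_const_mul, hη1]; ring
    have hφ0 : ∀ t, t ∉ Icc α β → φ t = 0 := by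
      intro t ht
      rw [mem_Icc, not_and_or, not_le, not_le] at ht
      rcases ht with ht | ht
      · simp only [hφ]
        rw [intervalIntegral.integral_congr (g := fun _ => 0)]
        · simp
        intro x hx
        apply hχ0
        intro hxK
        have h1 := hα' hxK
        have h2 : x ≤ max T1 t := hx.2
        have h3 := (hKs hα).1
        rcases le_max_iff.1 h2 with h4 | h4 <;> linarith
      · simp only [hφ]
        rw [← hχI]
        rw [intervalIntegral.integral_of_le (by have := (hKs hβ).1; linarith)]
        apply setIntegral_eq_integral_of_forall_compl_eq_zero
        intro x hx
        apply hχ0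
        intro hxK
        exact hx ⟨(hKs hxK).1, (hβ' hxK).trans ht.le⟩
    have hts : tsupport φ ⊆ Icc α β := by
      apply closure_minimal _ isClosed_Icc
      intro x hx
      by_contra h'
      exact hx (hφ0 x h')
    have h0 := H φ hφc (isCompact_Icc.of_isClosed_subset (isClosed_tsupport _) hts)
      (hts.trans (Icc_subset_Ioo (hKs hα).1 (hKs hβ).2))
    rw [hdφ] at h0
    have h1 : ∫ t in Ioo T1 T2, χ t * h t = (∫ t in Ioo T1 T2, ψ t * h t) - I * c := by
      rw [hc, ← integral_const_mul, ← integral_sub (hint ψ hψ hk hs) ((hint η hηc hηk hηs).const_mul I)]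
      congr 1; funext t; simp only [hχ]; ring
    have h2 : ∫ x, ψ x • (h x - c) = ∫ x in Ioo T1 T2, ψ x • (h x - c) := by
      symm
      apply setIntegral_eq_integral_of_forall_compl_eq_zero
      intro x hx
      rw [image_eq_zero_of_notMem_tsupport (fun h' => hx (hs h')), zero_smul]
    have h3 : I = ∫ x in Ioo T1 T2, ψ x := by
      symm
      apply setIntegral_eq_integral_of_forall_compl_eq_zero
      intro x hx
      rw [image_eq_zero_of_notMem_tsupport (fun h' => hx (hs h'))]
    rw [h2]
    simp only [smul_eq_mul, mul_sub]
    rw [integral_sub (hint ψ hψ hk hs)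
      ((hψ.continuous.integrable_of_hasCompactSupport hk).mul_const c).integrableOn,
      integral_mul_const, ← h3, ← h1, h0]
  refine ⟨c, fun t ht => ?_⟩
  have : EqOn h (fun _ => c) (Ioo T1 T2) := by
    refine Measure.eqOn_of_ae_eq (μ := volume) (s := Ioo T1 T2) ?_ hh continuousOn_const ?_
    · rw [Filter.EventuallyEq, ae_restrict_iff' measurableSet_Ioo]
      filter_upwards [key] with x hx hx2
      linarith [hx hx2]
    · rw [isOpen_Ioo.interior_eq]; exact subset_closure
  exact this ht

lemma wk_acp_loc {b : ℝ → ℝ} (hc : Continuous b) (hb : Wkloc 1 b) {T1 T2 : ℝ} (hT : T1 < T2) :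
    ∃ g : ℝ → ℝ, MemLp g 2 (volume.restrict (Ioo T1 T2)) ∧
      IntervalIntegrable g volume T1 T2 ∧
      ∃ c, ∀ t ∈ Ioo T1 T2, b t = c + ∫ x in T1..t, g x := by
  obtain ⟨D, h0, h1, h2⟩ := hb T1 T2 hT
  have h1 := h1 0 (by norm_num)
  have h2 := h2 1 le_rfl
  simp only [zero_add] at h1
  rw [h0] at h1
  set g := D 1 with hg
  have hgi : IntervalIntegrable g volume T1 T2 := by
    rw [intervalIntegrable_iff_integrableOn_Ioo_of_le hT.le]
    exact h2.integrable (by norm_num)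
  refine ⟨g, h2, hgi, ?_⟩
  have hac := hgi.absolutelyContinuousOnInterval_intervalIntegral (c := T1) (by simp)
  have hGc := hac.continuousOn
  rw [uIcc_of_le hT.le] at hGc
  set G : ℝ → ℝ := fun t => ∫ x in T1..t, g x with hG
  obtain ⟨c, hcc⟩ := dbr hT (h := fun t => b t - G t)
    (hc.continuousOn.sub (hGc.mono Ioo_subset_Icc_self)) (by
    intro φ hφ hk hs
    have e1 := h1 φ hφ hk hs
    simp only [smul_eq_mul] at e1
    have hφ1 : φ T1 = 0 := image_eq_zero_of_notMem_tsupport (fun h => lt_irrefl _ (hs h).1)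
    have hφ2 : φ T2 = 0 := image_eq_zero_of_notMem_tsupport (fun h => lt_irrefl _ (hs h).2)
    have hφac : AbsolutelyContinuousOnInterval φ T1 T2 :=
      (hφ.of_le (by simp)).contDiffOn.absolutelyContinuousOnInterval
    have e2 := AbsolutelyContinuousOnInterval.integral_deriv_mul_eq_sub hφac hac
    have hdc : Continuous (deriv φ) := hφ.continuous_deriv (by simp)
    have hGc' : ContinuousOn G (uIcc T1 T2) := by rwa [uIcc_of_le hT.le]
    have e3 : ∫ x in T1..T2, φ x * deriv G x = ∫ x in T1..T2, φ x * g x := by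
      apply intervalIntegral.integral_congr_ae
      filter_upwards [hgi.ae_hasDerivAt_integral] with x hx hx2
      rw [(hx (uIoc_subset_uIcc hx2) T1 (by simp)).deriv]
    have hG'i : IntervalIntegrable (fun x => φ x * deriv G x) volume T1 T2 :=
      hac.intervalIntegrable_deriv.continuousOn_mul hφ.continuous.continuousOn
    have hi1 : IntervalIntegrable (fun x => deriv φ x * G x) volume T1 T2 :=
      (hdc.continuousOn.mul hGc').intervalIntegrable
    have hi2 : IntervalIntegrable (fun x => deriv φ x * b x) volume T1 T2 :=
      (hdc.mul hc).intervalIntegrable _ _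
    rw [intervalIntegral.integral_add hi1 hG'i, e3, hφ1, hφ2] at e2
    rw [← integral_Ioc_eq_integral_Ioo, ← intervalIntegral.integral_of_le hT.le,
      ← integral_Ioc_eq_integral_Ioo, ← intervalIntegral.integral_of_le hT.le] at e1
    rw [← integral_Ioc_eq_integral_Ioo, ← intervalIntegral.integral_of_le hT.le]
    simp only [mul_sub]
    rw [intervalIntegral.integral_sub hi2 hi1, e1]
    linarith)
  exact ⟨c, fun t ht => by have := hcc t ht; linarith⟩

lemma wk_acp {b : ℝ → ℝ} (hc : Continuous b) (hb : Wkloc 1 b) :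
    ACP b (deriv b) ∧ L2loc (deriv b) := by
  have key : ∀ s t : ℝ, s < t → MemLp (deriv b) 2 (volume.restrict (Ioo s t)) ∧
      b t - b s = ∫ x in s..t, deriv b x := by
    intro s t hst
    obtain ⟨g, h2, hgi, c, hbg⟩ := wk_acp_loc hc hb (show s - 1 < t + 1 by linarith)
    have hae : ∀ᵐ x, x ∈ Ioo (s-1) (t+1) → deriv b x = g x := by
      filter_upwards [hgi.ae_hasDerivAt_integral] with x hx hx2
      have hx3 : x ∈ uIcc (s-1) (t+1) := by
        rw [uIcc_of_le (by linarith)]; exact Ioo_subset_Icc_self hx2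
      have := (hx hx3 (s-1) (by simp)).const_add c
      refine (this.congr_of_eventuallyEq ?_).deriv
      filter_upwards [Ioo_mem_nhds hx2.1 hx2.2] with y hy using hbg y hy
    have hsub : Ioo s t ⊆ Ioo (s-1) (t+1) := Ioo_subset_Ioo (by linarith) (by linarith)
    constructor
    · refine MemLp.ae_eq ?_ (h2.mono_measure (Measure.restrict_mono_set _ hsub))
      rw [Filter.EventuallyEq, ae_restrict_iff' measurableSet_Ioo]
      filter_upwards [hae] with x hx hx2
      exact (hx (hsub hx2)).symm
    · rw [hbg t ⟨by linarith, by linarith⟩, hbg s ⟨by linarith, by linarith⟩]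
      have hsi : ∀ x ∈ Icc s t, IntervalIntegrable g volume (s-1) x := by
        intro x hx
        refine hgi.mono_set ?_
        rw [uIcc_of_le (by linarith [hx.1]), uIcc_of_le (by linarith)]
        exact Icc_subset_Icc le_rfl (by linarith [hx.2])
      have := intervalIntegral.integral_interval_sub_left (hsi t ⟨hst.le, le_rfl⟩)
        (hsi s ⟨le_rfl, hst.le⟩)
      rw [add_sub_add_left_eq_sub, this]
      apply intervalIntegral.integral_congr_ae
      filter_upwards [hae] with x hx hx2
      rw [uIoc_of_le hst.le] at hx2
      exact (hx ⟨by linarith [hx2.1], by linarith [hx2.2]⟩).symm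
  have hL : L2loc (deriv b) := by
    intro s t
    rcases lt_or_ge s t with h | h
    · exact (key s t h).1
    · simp [Ioo_eq_empty (not_lt.2 h)]
  refine ⟨⟨fun s t => hL.intInt s t, fun s t => ?_⟩, hL⟩
  rcases lt_trichotomy s t with h | h | h
  · exact (key s t h).2
  · simp [h]
  · rw [intervalIntegral.integral_symm, ← (key t s h).2]; ring

def kk (n : ℕ) : ℝ := ((n : ℝ) + 1) * Real.pi

lemma kk_ge (n : ℕ) : 1 ≤ kk n := by
  have := Real.pi_gt_three
  have h : (0:ℝ) ≤ n := Nat.cast_nonneg n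
  unfold kk; nlinarith

lemma kk_pos (n : ℕ) : 0 < kk n := lt_of_lt_of_le one_pos (kk_ge n)

lemma summ_kk {j : ℕ} (hj : 2 ≤ j) : Summable (fun n => 1 / kk n ^ j) := by
  have h : Summable (fun n : ℕ => 1 / ((n:ℝ) + 1) ^ 2) := by
    have := (summable_nat_add_iff 1).2 (Real.summable_one_div_nat_pow.2 (le_refl 2))
    simpa using this
  refine Summable.of_nonneg_of_le (fun n => by have := kk_pos n; positivity) (fun n => ?_) h
  have h0 : (0:ℝ) ≤ n := Nat.cast_nonneg n
  apply one_div_le_one_div_of_le (by positivity)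
  calc ((n:ℝ)+1)^2 ≤ (kk n)^2 := by
        have := Real.pi_gt_three
        unfold kk; gcongr; nlinarith
    _ ≤ kk n ^ j := pow_le_pow_right₀ (kk_ge n) hj

def ymode (l τ a p : ℝ) (d : ℝ → ℝ) (t : ℝ) : ℝ :=
  Real.exp (-l * (t - τ)) * (a - p * ∫ s in τ..t, Real.exp (l * (s - τ)) * d s)

lemma ymode_tau (l τ a p : ℝ) (d : ℝ → ℝ) : ymode l τ a p d τ = a := by simp [ymode]

lemma ymode_split (l τ a p : ℝ) (d : ℝ → ℝ) (t : ℝ) :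
    ymode l τ a p d t = a * Real.exp (-l * (t - τ)) + ymode l τ 0 p d t := by
  simp only [ymode]; ring

lemma ymode_acp (l τ a p : ℝ) {d : ℝ → ℝ} (hd : L2loc d) :
    ACP (ymode l τ a p d) (fun t => -l * ymode l τ a p d t - p * d t) := by
  have h1 : ACP (fun t => Real.exp (-l * (t - τ))) (fun t => -l * Real.exp (-l * (t - τ))) := by
    apply ACP.of_deriv
    · intro x
      have := (((hasDerivAt_id x).sub_const τ).const_mul (-l)).exp
      have e : Real.exp (-l * (id x - τ)) * (-l * 1) = -l * Real.exp (-l * (x - τ)) := by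
        rw [id]; ring
      rw [e] at this; exact this
    · fun_prop
  have h2 := (ACP.of_int (hd.mul_cont (g := fun s => Real.exp (l * (s - τ))) (by fun_prop)).intInt
    τ).const_mul (-p)
  have h3 := h1.mul ((ACP.const a).add h2)
  refine h3.congr (fun x => ?_) (fun x => ?_)
  · simp only [ymode]; ring
  · have : Real.exp (-l * (x - τ)) * Real.exp (l * (x - τ)) = 1 := by
      rw [← Real.exp_add]; simp
    simp only [ymode]
    linear_combination (-p * d x) * (-this)

lemma energy {l p : ℝ} (hl : 0 < l) {d y : ℝ → ℝ} (hd : L2loc d)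
    (hy : ACP y (fun t => -l * y t - p * d t)) {t0 T : ℝ} (hT : t0 ≤ T) :
    y T ^ 2 + l * ∫ t in t0..T, y t ^ 2 ≤ y t0 ^ 2 + p ^ 2 / l * ∫ t in t0..T, d t ^ 2 := by
  have h := (hy.mul hy).eq t0 T
  have hm := (hy.mul hy).int t0 T
  have i1 : IntervalIntegrable (fun t => y t ^ 2) volume t0 T :=
    (hy.continuous.pow 2).intervalIntegrable _ _
  have i2 := hd.intInt_sq t0 T
  have : ∫ x in t0..T, ((-l * y x - p * d x) * y x + y x * (-l * y x - p * d x)) ≤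
      ∫ x in t0..T, (-l * y x ^ 2 + p ^ 2 / l * d x ^ 2) := by
    apply intervalIntegral.integral_mono_on hT hm ((i1.const_mul _).add (i2.const_mul _))
    intro x _
    have : 0 ≤ (l * y x + p * d x) ^ 2 / l := by positivity
    have e : (l * y x + p * d x) ^ 2 / l = l * y x ^ 2 + 2 * p * d x * y x + p ^ 2 / l * d x ^ 2 := by
      field_simp; ring
    rw [e] at this
    nlinarith
  rw [← h, intervalIntegral.integral_add (i1.const_mul _) (i2.const_mul _),
    intervalIntegral.integral_const_mul, intervalIntegral.integral_const_mul] at this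
  nlinarith

lemma int_sq_mono {d : ℝ → ℝ} (hd : L2loc d) {a b c e : ℝ} (h1 : c ≤ a) (h2 : a ≤ b) (h3 : b ≤ e) :
    ∫ t in a..b, d t ^ 2 ≤ ∫ t in c..e, d t ^ 2 :=
  intervalIntegral.integral_mono_interval h1 h2 h3 (Filter.Eventually.of_forall fun x => sq_nonneg _)
    (hd.intInt_sq c e)

/-- basic bound -/
lemma ymode_bound {τ p a : ℝ} {k : ℝ} (hk : 1 ≤ k) (hp : |p| ≤ 4 / k ^ 3) {d : ℝ → ℝ} (hd : L2loc d)
    {t T : ℝ} (h1 : τ ≤ t) (h2 : t ≤ T) :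
    |ymode (k^2) τ a p d t| ≤ |a| * Real.exp (-k^2 * (t - τ)) +
      4 * Real.sqrt (∫ s in τ..T, d s ^ 2) / k ^ 4 := by
  have hk0 : 0 < k := by linarith
  rw [ymode_split]
  refine (abs_add_le _ _).trans (add_le_add ?_ ?_)
  · rw [abs_mul, Real.abs_exp]
  · have h := energy (pow_pos hk0 2) hd (ymode_acp (k^2) τ 0 p hd) h1
    rw [ymode_tau] at h
    have h0 : 0 ≤ ∫ s in τ..t, ymode (k^2) τ 0 p d s ^ 2 :=
      intervalIntegral.integral_nonneg h1 fun x _ => sq_nonneg _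
    have hm := int_sq_mono hd le_rfl h1 h2
    have hK : 0 ≤ ∫ s in τ..T, d s ^ 2 :=
      intervalIntegral.integral_nonneg (h1.trans h2) fun x _ => sq_nonneg _
    set K := ∫ s in τ..T, d s ^ 2
    apply abs_le_of_sq_le_sq _ (by positivity)
    have hp2 : p ^ 2 ≤ (4 / k ^ 3) ^ 2 := by rw [← sq_abs p]; gcongr
    calc _ ≤ p ^ 2 / k^2 * ∫ t in τ..t, d t ^ 2 := by
          have : 0 ≤ k^2 * ∫ s in τ..t, ymode (k^2) τ 0 p d s ^ 2 := by positivity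
          linarith
      _ ≤ (4 / k ^ 3) ^ 2 / k^2 * K := by
        have : 0 ≤ ∫ t in τ..t, d t ^ 2 :=
          intervalIntegral.integral_nonneg h1 fun _ _ => sq_nonneg _
        gcongr
      _ = _ := by
        rw [div_pow _ (k^4), mul_pow, Real.sq_sqrt hK]; field_simp; try ring

lemma exp_bd {x : ℝ} (hx : 0 < x) : Real.exp (-x) ≤ 2 / x ^ 2 := by
  rw [Real.exp_neg, inv_eq_one_div, div_le_div_iff₀ (Real.exp_pos x) (by positivity)]
  have := Real.quadratic_le_exp_of_nonneg hx.le
  nlinarith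

/-- local bounds of order `k⁻ʲ` -/
def LB (τ : ℝ) (j : ℕ) (c : ℕ → ℝ → ℝ) : Prop :=
  ∀ ε > (0:ℝ), ∀ T, ∃ C, ∀ n t, τ + ε ≤ t → t ≤ T → |c n t| ≤ C / kk n ^ j

lemma LB.add {τ : ℝ} {j : ℕ} {c e : ℕ → ℝ → ℝ} (hc : LB τ j c) (he : LB τ j e) :
    LB τ j (fun n t => c n t + e n t) := by
  intro ε hε T
  obtain ⟨C, hC⟩ := hc ε hε T
  obtain ⟨C', hC'⟩ := he ε hε T
  refine ⟨C + C', fun n t h1 h2 => ?_⟩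
  rw [add_div]
  exact (abs_add_le _ _).trans (add_le_add (hC n t h1 h2) (hC' n t h1 h2))

lemma LB.cmul {τ : ℝ} {j : ℕ} {c : ℕ → ℝ → ℝ} (hc : LB τ j c) {g : ℝ → ℝ} (hg : Continuous g) :
    LB τ j (fun n t => g t * c n t) := by
  intro ε hε T
  obtain ⟨C, hC⟩ := hc ε hε T
  obtain ⟨B, hB⟩ := (isCompact_Icc (a := τ + ε) (b := T)).exists_bound_of_continuousOn hg.continuousOn
  refine ⟨B * C, fun n t h1 h2 => ?_⟩
  rw [abs_mul, mul_div_assoc]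
  have h3 := hB t ⟨h1, h2⟩
  exact mul_le_mul h3 (hC n t h1 h2) (abs_nonneg _) ((norm_nonneg _).trans h3)

lemma LB.kmul {τ : ℝ} {j : ℕ} {c : ℕ → ℝ → ℝ} (i : ℕ) (hc : LB τ (j + i) c) :
    LB τ j (fun n t => kk n ^ i * c n t) := by
  intro ε hε T
  obtain ⟨C, hC⟩ := hc ε hε T
  refine ⟨C, fun n t h1 h2 => ?_⟩
  have hk := kk_pos n
  rw [abs_mul, abs_of_pos (pow_pos hk i)]
  calc _ ≤ kk n ^ i * (C / kk n ^ (j + i)) := by gcongr; exact hC n t h1 h2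
    _ = _ := by rw [pow_add]; field_simp

lemma LB.nonneg {τ : ℝ} {j : ℕ} {c : ℕ → ℝ → ℝ} (hc : LB τ j c) :
  ∀ ε > (0:ℝ), ∀ T, ∃ C, 0 ≤ C ∧ ∀ n t, τ + ε ≤ t → t ≤ T → |c n t| ≤ C / kk n ^ j := by
  intro ε hε T
  obtain ⟨C, hC⟩ := hc ε hε T
  refine ⟨|C|, abs_nonneg _, fun n t h1 h2 => (hC n t h1 h2).trans ?_⟩
  have hk := kk_pos n
  gcongr
  exact le_abs_self C

lemma LB.mono {τ : ℝ} {j i : ℕ} (hij : i ≤ j) {c : ℕ → ℝ → ℝ} (hc : LB τ j c) : LB τ i c := by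
  intro ε hε T
  obtain ⟨C, hC0, hC⟩ := hc.nonneg ε hε T
  refine ⟨C, fun n t h1 h2 => (hC n t h1 h2).trans ?_⟩
  have hk := kk_pos n
  have := kk_ge n
  gcongr

lemma LB.const {τ : ℝ} {j : ℕ} {p : ℕ → ℝ} {C : ℝ} (h : ∀ n, |p n| ≤ C / kk n ^ j) :
    LB τ j (fun n _ => p n) := fun _ _ _ => ⟨C, fun n _ _ _ => h n⟩

section modes
variable (τ : ℝ) (a p : ℕ → ℝ) (d : ℝ → ℝ)

def yy (n : ℕ) (t : ℝ) : ℝ := ymode (kk n ^ 2) τ (a n) (p n) d t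

variable {τ a p d}

lemma yy_LB (hd : L2loc d) (hp : ∀ n, |p n| ≤ 4 / kk n ^ 3) {A : ℝ} (ha : ∀ n, |a n| ≤ A) :
    LB τ 4 (yy τ a p d) := by
  intro ε hε T
  refine ⟨2 * A / ε ^ 2 + 4 * Real.sqrt (∫ s in τ..T, d s ^ 2), fun n t h1 h2 => ?_⟩
  have hk := kk_pos n
  refine (ymode_bound (kk_ge n) (hp n) hd (by linarith) h2).trans ?_
  rw [add_div]
  gcongr
  have h3 : Real.exp (-kk n ^ 2 * (t - τ)) ≤ Real.exp (-(kk n ^ 2 * ε)) := by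
    apply Real.exp_le_exp.2
    nlinarith [pow_pos hk 2]
  have h4 := exp_bd (x := kk n ^ 2 * ε) (by positivity)
  have hA : 0 ≤ A := (abs_nonneg _).trans (ha 0)
  calc |a n| * Real.exp (-kk n ^ 2 * (t - τ)) ≤ A * (2 / (kk n ^ 2 * ε) ^ 2) :=
        mul_le_mul (ha n) (h3.trans h4) (Real.exp_pos _).le hA
    _ = _ := by field_simp

lemma yy_bound0 (hd : L2loc d) (hp : ∀ n, |p n| ≤ 4 / kk n ^ 3) (ha : Summable (fun n => |a n|)) (T : ℝ) :
    ∃ M : ℕ → ℝ, Summable M ∧ ∀ n t, τ ≤ t → t ≤ T → |yy τ a p d n t| ≤ M n := by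
  have hs := ha.add ((summ_kk (j := 4) (by norm_num)).mul_left
    (4 * Real.sqrt (∫ s in τ..T, d s ^ 2)))
  refine ⟨_, hs, fun n t h1 h2 => ?_⟩
  refine (ymode_bound (kk_ge n) (hp n) hd h1 h2).trans ?_
  have hk := kk_pos n
  have : Real.exp (-kk n ^ 2 * (t - τ)) ≤ 1 := by
    rw [Real.exp_le_one_iff]
    nlinarith [pow_pos hk 2]
  rw [mul_one_div]
  exact add_le_add (mul_le_of_le_one_right (abs_nonneg _) this) le_rfl

lemma yy_acp (hd : L2loc d) (n : ℕ) :
    ACP (yy τ a p d n) (fun t => - kk n ^ 2 * yy τ a p d n t - p n * d t) :=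
  ymode_acp _ _ _ _ hd

lemma yy_int (hd : L2loc d) (hp : ∀ n, |p n| ≤ 4 / kk n ^ 3) {A : ℝ} (ha : ∀ n, |a n| ≤ A)
    {ε : ℝ} (hε : 0 < ε) {T : ℝ} (hT : τ + ε ≤ T) :
    ∃ C, ∀ n, ∫ t in (τ + ε)..T, (kk n ^ 4 * yy τ a p d n t) ^ 2 ≤ C / kk n ^ 2 := by
  obtain ⟨C, hC⟩ := yy_LB (τ := τ) hd hp ha ε hε T
  refine ⟨C ^ 2 + 16 * ∫ t in (τ+ε)..T, d t ^ 2, fun n => ?_⟩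
  have hk := kk_pos n
  have h := energy (pow_pos hk 2) hd (yy_acp (τ := τ) (a := a) (p := p) hd n) hT
  have h1 := hC n (τ + ε) le_rfl hT
  have h1' : yy τ a p d n (τ + ε) ^ 2 ≤ (C / kk n ^ 4) ^ 2 := by
    rw [← sq_abs]; gcongr
  have hp2 : p n ^ 2 ≤ (4 / kk n ^ 3) ^ 2 := by rw [← sq_abs (p n)]; gcongr; exact hp n
  have hK : 0 ≤ ∫ t in (τ+ε)..T, d t ^ 2 :=
      intervalIntegral.integral_nonneg hT fun x _ => sq_nonneg _
  set K := ∫ t in (τ+ε)..T, d t ^ 2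
  simp only [mul_pow]
  rw [intervalIntegral.integral_const_mul]
  set I := ∫ t in (τ+ε)..T, yy τ a p d n t ^ 2
  have h5 : kk n ^ 2 * I ≤ (C / kk n ^ 4) ^ 2 + (4 / kk n ^ 3) ^ 2 / kk n ^ 2 * K := by
    have : p n ^ 2 / kk n ^ 2 * K ≤ (4 / kk n ^ 3) ^ 2 / kk n ^ 2 * K := by gcongr
    nlinarith [sq_nonneg (yy τ a p d n T)]
  calc (kk n ^ 4) ^ 2 * I = kk n ^ 6 * (kk n ^ 2 * I) := by ring
    _ ≤ kk n ^ 6 * ((C / kk n ^ 4) ^ 2 + (4 / kk n ^ 3) ^ 2 / kk n ^ 2 * K) := by gcongr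
    _ = _ := by field_simp; try ring
end modes

section orth
variable {E : Type*} [NormedAddCommGroup E] [InnerProductSpace ℝ E]

structure Orth (e : ℕ → E) : Prop where
  orth : ∀ i j, i ≠ j → inner ℝ (e i) (e j) = 0
  norm : ∀ i, ‖e i‖ ≤ 1

variable {e : ℕ → E}

lemma Orth.fin (he : Orth e) (c : ℕ → ℝ) (s : Finset ℕ) :
    ‖∑ i ∈ s, c i • e i‖ ^ 2 ≤ ∑ i ∈ s, c i ^ 2 := by
  classical
  induction s using Finset.induction_on with
  | empty => simp
  | insert a s ha ih =>
    rw [Finset.sum_insert ha, Finset.sum_insert ha, norm_add_sq_real]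
    have h1 : inner ℝ (c a • e a) (∑ i ∈ s, c i • e i) = 0 := by
      rw [inner_sum]
      apply Finset.sum_eq_zero
      intro i hi
      rw [inner_smul_left, inner_smul_right, he.orth a i (by rintro rfl; exact ha hi)]
      simp
    have h2 : ‖c a • e a‖ ^ 2 ≤ c a ^ 2 := by
      rw [norm_smul, mul_pow, Real.norm_eq_abs, sq_abs]
      have := he.norm a
      have h3 : ‖e a‖ ^ 2 ≤ 1 := by nlinarith [norm_nonneg (e a)]
      nlinarith [sq_nonneg (c a)]
    rw [h1]; linarith

variable [CompleteSpace E]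

lemma Orth.summable (he : Orth e) {c : ℕ → ℝ} (hc : Summable (fun n => c n ^ 2)) :
    Summable (fun n => c n • e n) := by
  rw [summable_iff_vanishing_norm]
  intro ε hε
  obtain ⟨s, hs⟩ := (summable_iff_vanishing_norm.1 hc) (ε ^ 2) (by positivity)
  refine ⟨s, fun t ht => ?_⟩
  have h1 := hs t ht
  have h2 := he.fin c t
  rw [Real.norm_of_nonneg (Finset.sum_nonneg fun i _ => sq_nonneg _)] at h1
  exact lt_of_pow_lt_pow_left₀ 2 hε.le (h2.trans_lt h1)

lemma Orth.tail (he : Orth e) {c M : ℕ → ℝ} (hM : Summable (fun n => M n ^ 2))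
    (hc : ∀ n, |c n| ≤ M n) (s : Finset ℕ) :
    ‖(∑' n, c n • e n) - ∑ n ∈ s, c n • e n‖ ^ 2 ≤ (∑' n, M n ^ 2) - ∑ n ∈ s, M n ^ 2 := by
  classical
  have hc2 : ∀ n, c n ^ 2 ≤ M n ^ 2 := fun n => by
    rw [← sq_abs]; exact pow_le_pow_left₀ (abs_nonneg _) (hc n) 2
  have hs : Summable (fun n => c n • e n) := he.summable
    (Summable.of_nonneg_of_le (fun n => sq_nonneg _) hc2 hM)
  have ht : Filter.Tendsto (fun t : Finset ℕ => ‖(∑ n ∈ t, c n • e n) - ∑ n ∈ s, c n • e n‖ ^ 2)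
      Filter.atTop (nhds (‖(∑' n, c n • e n) - ∑ n ∈ s, c n • e n‖ ^ 2)) :=
    ((hs.hasSum.sub_const _).norm.pow 2)
  refine le_of_tendsto ht ?_
  filter_upwards [Filter.eventually_ge_atTop s] with t hst
  rw [← Finset.sum_sdiff hst, add_sub_cancel_right]
  refine (he.fin c _).trans ((Finset.sum_le_sum fun i _ => hc2 i).trans ?_)
  have := hM.sum_le_tsum t (fun i _ => sq_nonneg _)
  rw [← Finset.sum_sdiff hst] at this
  linarith

lemma Orth.norm_tsum (he : Orth e) {c : ℕ → ℝ} (hM : Summable (fun n => c n ^ 2)) :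
    ‖(∑' n, c n • e n)‖ ^ 2 ≤ (∑' n, c n ^ 2) := by
  have := he.tail (c := c) (M := fun n => |c n|) (by simpa using hM) (fun n => le_rfl) ∅
  simpa using this

lemma Orth.unif (he : Orth e) {c : ℕ → ℝ → ℝ} {M : ℕ → ℝ} {S : Set ℝ}
    (hM : Summable (fun n => M n ^ 2)) (hc : ∀ n, ∀ t ∈ S, |c n t| ≤ M n) :
    TendstoUniformlyOn (fun (s : Finset ℕ) t => ∑ n ∈ s, c n t • e n) (fun t => ∑' n, c n t • e n)
      Filter.atTop S := by
  rw [Metric.tendstoUniformlyOn_iff]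
  intro ε hε
  have h1 : ∀ᶠ s : Finset ℕ in Filter.atTop, (∑' n, M n ^ 2) - ∑ n ∈ s, M n ^ 2 < ε ^ 2 := by
    have : Filter.Tendsto (fun s : Finset ℕ => (∑' n, M n ^ 2) - ∑ n ∈ s, M n ^ 2) Filter.atTop
      (nhds ((∑' n, M n ^ 2) - ∑' n, M n ^ 2)) := (hM.hasSum.const_sub _)
    rw [sub_self] at this
    exact this.eventually (gt_mem_nhds (by positivity))
  filter_upwards [h1] with s hs t ht
  rw [dist_eq_norm]
  exact lt_of_pow_lt_pow_left₀ 2 hε.le ((he.tail hM (fun n => hc n t ht) s).trans_lt hs)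

lemma kk_sq_summ (C : ℝ) {j : ℕ} (hj : 1 ≤ j) : Summable (fun n => (C / kk n ^ j) ^ 2) := by
  have := (summ_kk (j := j * 2) (by omega)).mul_left (C ^ 2)
  refine this.congr fun n => ?_
  rw [div_pow, ← pow_mul]; ring

lemma Orth.cont_on (he : Orth e) {c : ℕ → ℝ → ℝ} {M : ℕ → ℝ} {S : Set ℝ}
    (hM : Summable (fun n => M n ^ 2)) (hc : ∀ n, ∀ t ∈ S, |c n t| ≤ M n)
    (hcc : ∀ n, Continuous (c n)) :
    ContinuousOn (fun t => ∑' n, c n t • e n) S :=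
  (he.unif hM hc).continuousOn (Filter.Frequently.of_forall fun s => by
    apply Continuous.continuousOn
    exact continuous_finsetSum _ fun i _ => (hcc i).smul continuous_const)

lemma Orth.cont (he : Orth e) {τ : ℝ} {c : ℕ → ℝ → ℝ} (hc : LB τ 1 c)
    (hcc : ∀ n, Continuous (c n)) :
    ContinuousOn (fun t => ∑' n, c n t • e n) (Ioi τ) := by
  intro t ht
  have ht' : τ < t := ht
  obtain ⟨C, hC⟩ := hc ((t - τ) / 2) (by linarith) (t + 1)
  have := he.cont_on (S := Icc (τ + (t - τ)/2) (t + 1)) (kk_sq_summ C le_rfl)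
    (fun n s hs => hC n s hs.1 hs.2) hcc
  exact (this.continuousAt (Icc_mem_nhds (by linarith) (by linarith))).continuousWithinAt

lemma Orth.deriv (he : Orth e) {τ : ℝ} {c c' : ℕ → ℝ → ℝ} (hc : LB τ 1 c) (hc' : LB τ 1 c')
    (hd : ∀ n t, HasDerivAt (c n) (c' n t) t) {t : ℝ} (ht : τ < t) :
    HasDerivAt (fun t => ∑' n, c n t • e n) (∑' n, c' n t • e n) t := by
  obtain ⟨C, hC⟩ := hc ((t - τ) / 2) (by linarith) (t + 1)
  obtain ⟨C', hC'⟩ := hc' ((t - τ) / 2) (by linarith) (t + 1)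
  refine hasDerivAt_of_tendstoUniformlyOn (s := Ioo (τ + (t - τ)/2) (t + 1)) (l := Filter.atTop)
    isOpen_Ioo (he.unif (kk_sq_summ C' le_rfl) (fun n s hs => hC' n s hs.1.le hs.2.le))
    (f := fun (s : Finset ℕ) t => ∑ n ∈ s, c n t • e n) ?_ ?_ ⟨by linarith, by linarith⟩
  · filter_upwards with s x _
    exact HasDerivAt.fun_sum fun i _ => (hd i x).smul_const (e i)
  · intro x hx
    exact (he.unif (kk_sq_summ C le_rfl) (fun n s hs => hC n s hs.1.le hs.2.le)).tendsto_at hx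

lemma parts {U R : ℝ → ℝ} (h : ACP U R) {T1 T2 : ℝ} (hT : T1 < T2) {φ : ℝ → ℝ}
    (hφ : ContDiff ℝ (⊤ : ℕ∞) φ) (hs : tsupport φ ⊆ Ioo T1 T2) :
    ∫ t in Ioo T1 T2, deriv φ t * U t = - ∫ t in Ioo T1 T2, φ t * R t := by
  have hφ1 : φ T1 = 0 := image_eq_zero_of_notMem_tsupport (fun h => lt_irrefl _ (hs h).1)
  have hφ2 : φ T2 = 0 := image_eq_zero_of_notMem_tsupport (fun h => lt_irrefl _ (hs h).2)
  have hdc : Continuous (_root_.deriv φ) := hφ.continuous_deriv (by simp)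
  have hp : ACP φ (_root_.deriv φ) := ACP.of_deriv
    (fun x => (hφ.differentiable (by simp) x).hasDerivAt) hdc
  have e := (hp.mul h).eq T1 T2
  have hi1 : IntervalIntegrable (fun x => _root_.deriv φ x * U x) volume T1 T2 :=
    (hdc.mul h.continuous).intervalIntegrable _ _
  have hi2 : IntervalIntegrable (fun x => φ x * R x) volume T1 T2 :=
    (h.int T1 T2).continuousOn_mul hp.continuous.continuousOn
  rw [intervalIntegral.integral_add hi1 hi2, hφ1, hφ2] at e
  rw [← integral_Ioc_eq_integral_Ioo, ← intervalIntegral.integral_of_le hT.le,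
      ← integral_Ioc_eq_integral_Ioo, ← intervalIntegral.integral_of_le hT.le]
  linarith

lemma sq_int_sum {R : ℕ → ℝ → ℝ} {T1 T2 : ℝ} (hT : T1 < T2) (hR : ∀ n, L2loc (R n))
    (hI : ∃ C, ∀ n, ∫ t in T1..T2, R n t ^ 2 ≤ C / kk n ^ 2) :
    (∀ᵐ t ∂(volume.restrict (Ioo T1 T2)), Summable (fun n => R n t ^ 2)) ∧
    Integrable (fun t => ∑' n, R n t ^ 2) (volume.restrict (Ioo T1 T2)) := by
  obtain ⟨C, hC⟩ := hI
  set μ := volume.restrict (Ioo T1 T2) with hμ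
  have hi : ∀ n, Integrable (fun t => R n t ^ 2) μ := fun n => (hR n T1 T2).integrable_sq
  have hle : ∀ n, ∫⁻ t, ‖R n t ^ 2‖ₑ ∂μ ≤ ENNReal.ofReal (C / kk n ^ 2) := by
    intro n
    rw [← ofReal_integral_norm_eq_lintegral_enorm (hi n)]
    apply ENNReal.ofReal_le_ofReal
    refine le_trans (le_of_eq ?_) (hC n)
    rw [intervalIntegral.integral_of_le hT.le, integral_Ioc_eq_integral_Ioo]
    simp [hμ]
  have hC0 : 0 ≤ C := by
    have h1 := hC 0
    have h2 : 0 ≤ ∫ t in T1..T2, R 0 t ^ 2 :=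
      intervalIntegral.integral_nonneg hT.le fun _ _ => sq_nonneg _
    have h3 := h2.trans h1
    have h4 := pow_pos (kk_pos 0) 2
    by_contra h
    exact absurd h3 (not_le.2 (div_neg_of_neg_of_pos (not_le.1 h) h4))
  have hfin : ∫⁻ t, ∑' n, ‖R n t ^ 2‖ₑ ∂μ ≠ ⊤ := by
    rw [lintegral_tsum (fun n => (hi n).1.enorm)]
    refine ne_top_of_le_ne_top ?_ (ENNReal.tsum_le_tsum hle)
    rw [← ENNReal.ofReal_tsum_of_nonneg]
    · exact ENNReal.ofReal_ne_top
    · intro n; have := kk_pos n; positivity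
    · exact ((summ_kk (j := 2) le_rfl).mul_left C).congr fun n => by ring
  have hae : ∀ᵐ t ∂μ, Summable (fun n => R n t ^ 2) := by
    filter_upwards [ae_lt_top' (AEMeasurable.tsum fun n => (hi n).1.enorm) hfin] with t ht
    have : Summable (fun n => ‖R n t ^ 2‖₊) := by
      rw [← ENNReal.tsum_coe_ne_top_iff_summable]
      exact ht.ne
    have h2 := NNReal.summable_coe.2 this
    simpa using h2
  refine ⟨hae, ?_, ?_⟩
  · refine aestronglyMeasurable_of_tendsto_ae (u := Filter.atTop)
      (f := fun N t => ∑ n ∈ Finset.range N, R n t ^ 2) ?_ ?_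
    · intro N
      exact Finset.aestronglyMeasurable_fun_sum _ fun i _ => (hi i).1
    · filter_upwards [hae] with t ht
      exact ht.hasSum.tendsto_sum_nat
  · rw [HasFiniteIntegral]
    refine lt_of_le_of_lt (lintegral_mono fun t => ?_) (lt_top_iff_ne_top.2 hfin)
    exact enorm_tsum_le_tsum_enorm

lemma Orth.weak (he : Orth e) {U R : ℕ → ℝ → ℝ} {T1 T2 : ℝ} (hT : T1 < T2)
    (hUR : ∀ n, ACP (U n) (R n)) (hR : ∀ n, L2loc (R n))
    (hU : ∃ C, ∀ n t, T1 ≤ t → t ≤ T2 → |U n t| ≤ C / kk n ^ 1)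
    (hI : ∃ C, ∀ n, ∫ t in T1..T2, R n t ^ 2 ≤ C / kk n ^ 2) :
    HasWeakDerivOn (fun t => ∑' n, U n t • e n) (fun t => ∑' n, R n t • e n) (Ioo T1 T2) ∧
    MemLp (fun t => ∑' n, R n t • e n) 2 (volume.restrict (Ioo T1 T2)) := by
  obtain ⟨hae, hQ⟩ := sq_int_sum hT hR hI
  obtain ⟨C, hC⟩ := hU
  set μ := volume.restrict (Ioo T1 T2) with hμ
  have hmp : ∀ N : ℕ, AEStronglyMeasurable (fun t => ∑ n ∈ Finset.range N, R n t • e n) μ :=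
    fun N => Finset.aestronglyMeasurable_fun_sum _ fun i _ => ((hR i T1 T2).1.smul_const (e i))
  have htend : ∀ᵐ t ∂μ, Filter.Tendsto (fun N : ℕ => ∑ n ∈ Finset.range N, R n t • e n) Filter.atTop
      (nhds (∑' n, R n t • e n)) := by
    filter_upwards [hae] with t ht
    exact (he.summable ht).hasSum.tendsto_sum_nat
  have hm : AEStronglyMeasurable (fun t => ∑' n, R n t • e n) μ :=
    aestronglyMeasurable_of_tendsto_ae Filter.atTop hmp htend
  constructor
  · intro φ hφ hk hs
    have hdc : Continuous (_root_.deriv φ) := hφ.continuous_deriv (by simp)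
    obtain ⟨B, hB⟩ := hφ.continuous.bounded_above_of_compact_support hk
    obtain ⟨B', hB'⟩ := hdc.bounded_above_of_compact_support hk.deriv
    have hB0 : 0 ≤ B := (norm_nonneg _).trans (hB 0)
    have hB0' : 0 ≤ B' := (norm_nonneg _).trans (hB' 0)
    have t1 : Filter.Tendsto (fun N : ℕ => ∫ t, φ t • ∑ n ∈ Finset.range N, R n t • e n ∂μ)
        Filter.atTop (nhds (∫ t, φ t • ∑' n, R n t • e n ∂μ)) := by
      refine tendsto_integral_of_dominated_convergence (fun t => B * (1 + ∑' n, R n t ^ 2)) ?_ ?_ ?_ ?_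
      · exact fun N => hφ.continuous.aestronglyMeasurable.smul (hmp N)
      · exact ((integrable_const (1:ℝ)).add hQ).const_mul B
      · intro N
        filter_upwards [hae] with t ht
        rw [norm_smul]
        refine mul_le_mul (hB t) ?_ (norm_nonneg _) hB0
        have h1 := (he.fin (fun n => R n t) (Finset.range N)).trans
          (ht.sum_le_tsum _ fun i _ => sq_nonneg _)
        nlinarith [sq_nonneg (‖∑ n ∈ Finset.range N, R n t • e n‖ - 1)]
      · filter_upwards [htend] with t ht
        exact ht.const_smul _
    have hsC := kk_sq_summ C (le_refl 1)
    have hin : ∀ᵐ t ∂μ, t ∈ Ioo T1 T2 := ae_restrict_mem measurableSet_Ioo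
    have hUs : ∀ t ∈ Ioo T1 T2, ∀ n, U n t ^ 2 ≤ (C / kk n ^ 1) ^ 2 := fun t ht n => by
      rw [← sq_abs]; exact pow_le_pow_left₀ (abs_nonneg _) (hC n t ht.1.le ht.2.le) 2
    have t2 : Filter.Tendsto (fun N : ℕ => ∫ t, _root_.deriv φ t • ∑ n ∈ Finset.range N, U n t • e n ∂μ)
        Filter.atTop (nhds (∫ t, _root_.deriv φ t • ∑' n, U n t • e n ∂μ)) := by
      refine tendsto_integral_of_dominated_convergence
        (fun t => B' * (1 + ∑' n, (C / kk n ^ 1) ^ 2)) ?_ (integrable_const _) ?_ ?_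
      · intro N
        exact (hdc.smul (continuous_finsetSum _ fun i _ =>
          (hUR i).continuous.smul continuous_const)).aestronglyMeasurable
      · intro N
        filter_upwards [hin] with t ht
        rw [norm_smul]
        refine mul_le_mul (hB' t) ?_ (norm_nonneg _) hB0'
        have h1 := (he.fin (fun n => U n t) (Finset.range N)).trans
          ((Finset.sum_le_sum fun i _ => hUs t ht i).trans (hsC.sum_le_tsum _ fun i _ => sq_nonneg _))
        nlinarith [sq_nonneg (‖∑ n ∈ Finset.range N, U n t • e n‖ - 1)]
      · filter_upwards [hin] with t ht
        have hss : Summable (fun n => U n t ^ 2) :=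
          Summable.of_nonneg_of_le (fun n => sq_nonneg _) (hUs t ht) hsC
        exact ((he.summable hss).hasSum.tendsto_sum_nat).const_smul _
    have hint1 : ∀ n, Integrable (fun t => _root_.deriv φ t * U n t) μ := fun n =>
      ((hdc.mul (hUR n).continuous).integrableOn_Icc (a := T1) (b := T2)).mono_set Ioo_subset_Icc_self
    have hint2 : ∀ n, Integrable (fun t => φ t * R n t) μ := fun n =>
      (((hR n).mul_cont hφ.continuous) T1 T2).integrable (by norm_num)
    have heq : ∀ N : ℕ, ∫ t, _root_.deriv φ t • ∑ n ∈ Finset.range N, U n t • e n ∂μ =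
        - ∫ t, φ t • ∑ n ∈ Finset.range N, R n t • e n ∂μ := by
      intro N
      simp only [Finset.smul_sum, smul_smul]
      rw [integral_finsetSum _ fun n _ => (hint1 n).smul_const (e n),
        integral_finsetSum _ fun n _ => (hint2 n).smul_const (e n), ← Finset.sum_neg_distrib]
      refine Finset.sum_congr rfl fun n _ => ?_
      rw [integral_smul_const, integral_smul_const, hμ, parts (hUR n) hT hφ hs, neg_smul]
    simp only [heq] at t2
    exact tendsto_nhds_unique t2 t1.neg
  · rw [memLp_two_iff_integrable_sq_norm hm]
    refine hQ.mono' (hm.norm.pow 2) ?_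
    filter_upwards [hae] with t ht
    rw [Real.norm_of_nonneg (by positivity)]
    exact he.norm_tsum ht

lemma LB.int_sq {τ : ℝ} {c : ℕ → ℝ → ℝ} (hc : LB τ 1 c) (hcc : ∀ n, Continuous (c n))
    {ε T : ℝ} (hε : 0 < ε) (hT : τ + ε ≤ T) :
    ∃ C, ∀ n, ∫ t in (τ + ε)..T, c n t ^ 2 ≤ C / kk n ^ 2 := by
  obtain ⟨C, hC⟩ := hc ε hε T
  refine ⟨(T - (τ + ε)) * C ^ 2, fun n => ?_⟩
  have : ∫ t in (τ + ε)..T, c n t ^ 2 ≤ ∫ t in (τ + ε)..T, (C / kk n ^ 1) ^ 2 := by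
    have hi : IntervalIntegrable (fun t => c n t ^ 2) volume (τ + ε) T :=
      ((hcc n).pow 2).intervalIntegrable _ _
    apply intervalIntegral.integral_mono_on hT hi (by simp)
    intro t ht
    rw [← sq_abs]; exact pow_le_pow_left₀ (abs_nonneg _) (hC n t ht.1 ht.2) 2
  refine this.trans (le_of_eq ?_)
  rw [intervalIntegral.integral_const, smul_eq_mul, div_pow, pow_one, mul_div_assoc]

end orth

lemma sin_cos_zero {h : ℝ → ℝ} (hh : ContinuousOn h (Icc 0 1))
    (h0 : ∀ n, ∫ x in (0:ℝ)..1, h x * Real.sin (kk n * x) = 0) (m : ℕ) : ∀ j : ℕ,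
    ∫ x in (0:ℝ)..1, h x * (Real.sin (j * Real.pi * x) * Real.cos (Real.pi * x) ^ m) = 0 := by
  induction m with
  | zero =>
    intro j
    cases j with
    | zero => simp
    | succ n => have := h0 n; simp only [kk] at this; simpa using this
  | succ m ih =>
    intro j
    cases j with
    | zero => simp
    | succ n =>
      have e : ∀ x : ℝ, h x * (Real.sin ((n + 1 : ℕ) * Real.pi * x) * Real.cos (Real.pi * x) ^ (m + 1))
          = (h x * (Real.sin ((n + 2 : ℕ) * Real.pi * x) * Real.cos (Real.pi * x) ^ m)
            + h x * (Real.sin (n * Real.pi * x) * Real.cos (Real.pi * x) ^ m)) * (1 / 2) := by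
        intro x
        have e1 : ((n + 2 : ℕ) : ℝ) * Real.pi * x = (n + 1 : ℕ) * Real.pi * x + Real.pi * x := by
          push_cast; ring
        have e2 : (n : ℝ) * Real.pi * x = (n + 1 : ℕ) * Real.pi * x - Real.pi * x := by
          push_cast; ring
        rw [e1, e2, Real.sin_add, Real.sin_sub]; ring
      simp only [e]
      have hi : ∀ j : ℕ, IntervalIntegrable (fun x => h x *
          (Real.sin (j * Real.pi * x) * Real.cos (Real.pi * x) ^ m)) volume 0 1 := by
        intro j
        apply ContinuousOn.intervalIntegrable
        rw [uIcc_of_le zero_le_one]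
        exact hh.mul (by fun_prop)
      rw [intervalIntegral.integral_mul_const, intervalIntegral.integral_add (hi _) (hi _), ih, ih]
      simp

lemma sin_poly_zero {h : ℝ → ℝ} (hh : ContinuousOn h (Icc 0 1))
    (h0 : ∀ n, ∫ x in (0:ℝ)..1, h x * Real.sin (kk n * x) = 0) (p : Polynomial ℝ) :
    ∫ x in (0:ℝ)..1, h x * Real.sin (Real.pi * x) * p.eval (Real.cos (Real.pi * x)) = 0 := by
  induction p using Polynomial.induction_on' with
  | add p q hp hq =>
    simp only [Polynomial.eval_add, mul_add]
    have hi : ∀ p : Polynomial ℝ, IntervalIntegrable (fun x => h x * Real.sin (Real.pi * x) *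
        p.eval (Real.cos (Real.pi * x))) volume 0 1 := by
      intro p
      apply ContinuousOn.intervalIntegrable
      rw [uIcc_of_le zero_le_one]
      exact (hh.mul (by fun_prop)).mul
        (p.continuous.comp (by fun_prop : Continuous fun x : ℝ => Real.cos (Real.pi * x))).continuousOn
    rw [intervalIntegral.integral_add (hi _) (hi _), hp, hq, add_zero]
  | monomial m a =>
    have := sin_cos_zero hh h0 m 1
    have e : ∀ x : ℝ, h x * Real.sin (Real.pi * x) * (Polynomial.monomial m a).eval
        (Real.cos (Real.pi * x)) = (h x * (Real.sin ((1:ℕ) * Real.pi * x) *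
          Real.cos (Real.pi * x) ^ m)) * a := by
      intro x; simp; ring
    simp only [e]
    rw [intervalIntegral.integral_mul_const, this, zero_mul]

lemma sin_complete {h : ℝ → ℝ} (hh : ContinuousOn h (Icc 0 1))
    (h0 : ∀ n, ∫ x in (0:ℝ)..1, h x * Real.sin (kk n * x) = 0) :
    ∀ x ∈ Ioo (0:ℝ) 1, h x = 0 := by
  set G : ℝ → ℝ := fun x => h x * Real.sin (Real.pi * x) with hG
  have hGc : ContinuousOn G (Icc 0 1) := hh.mul (by fun_prop)
  have hpi := Real.pi_pos
  have hf : ContinuousOn (fun y => G (Real.arccos y / Real.pi)) (Icc (-1) 1) := by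
    apply hGc.comp (by fun_prop)
    intro y _
    exact ⟨div_nonneg (Real.arccos_nonneg _) hpi.le, (div_le_one hpi).2 (Real.arccos_le_pi _)⟩
  obtain ⟨B, hB⟩ := isCompact_Icc.exists_bound_of_continuousOn hGc
  have hB0 : 0 ≤ B := (norm_nonneg _).trans (hB 0 ⟨le_rfl, zero_le_one⟩)
  have hGi : IntervalIntegrable (fun x => G x ^ 2) volume 0 1 := by
    apply ContinuousOn.intervalIntegrable
    rw [uIcc_of_le zero_le_one]; exact hGc.pow 2
  have key : ∫ x in (0:ℝ)..1, G x ^ 2 ≤ 0 := by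
    apply le_of_forall_pos_le_add
    intro ε hε
    obtain ⟨p, hp⟩ := exists_polynomial_near_of_continuousOn (-1) 1 _ hf (ε / (B + 1)) (by positivity)
    have hpi2 : IntervalIntegrable (fun x => G x * p.eval (Real.cos (Real.pi * x))) volume 0 1 := by
      apply ContinuousOn.intervalIntegrable
      rw [uIcc_of_le zero_le_one]
      exact hGc.mul (p.continuous.comp (by fun_prop : Continuous fun x : ℝ => Real.cos (Real.pi * x))).continuousOn
    have e1 : ∫ x in (0:ℝ)..1, G x ^ 2 = ∫ x in (0:ℝ)..1, (G x ^ 2 - G x * p.eval (Real.cos (Real.pi * x))) := by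
      rw [intervalIntegral.integral_sub hGi hpi2]
      have := sin_poly_zero hh h0 p
      simp only [hG]; rw [this, sub_zero]
    rw [e1, zero_add]
    have : ∫ x in (0:ℝ)..1, (G x ^ 2 - G x * p.eval (Real.cos (Real.pi * x))) ≤ ∫ x in (0:ℝ)..1, ε := by
      apply intervalIntegral.integral_mono_on zero_le_one (hGi.sub hpi2) (by simp)
      intro x hx
      have h1 := hp (Real.cos (Real.pi * x)) ⟨Real.neg_one_le_cos _, Real.cos_le_one _⟩
      have h2 : Real.arccos (Real.cos (Real.pi * x)) / Real.pi = x := by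
        rw [Real.arccos_cos (by have := hx.1; positivity) (by nlinarith [hx.2])]
        field_simp
      rw [h2, abs_sub_comm] at h1
      have h3 := hB x hx
      rw [Real.norm_eq_abs] at h3
      calc G x ^ 2 - G x * p.eval (Real.cos (Real.pi * x))
          = G x * (G x - p.eval (Real.cos (Real.pi * x))) := by ring
        _ ≤ |G x| * |G x - p.eval (Real.cos (Real.pi * x))| := by rw [← abs_mul]; exact le_abs_self _
        _ ≤ B * (ε / (B + 1)) := mul_le_mul h3 h1.le (abs_nonneg _) hB0
        _ ≤ (B + 1) * (ε / (B + 1)) := by gcongr; linarith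
        _ = ε := by field_simp
    simpa using this
  have hz : ∫ x in (0:ℝ)..1, G x ^ 2 = 0 := le_antisymm key
    (intervalIntegral.integral_nonneg zero_le_one fun _ _ => sq_nonneg _)
  intro x hx
  by_contra hne
  have hGx : 0 < G x ^ 2 := by
    have : 0 < Real.sin (Real.pi * x) := Real.sin_pos_of_pos_of_lt_pi (by have := hx.1; positivity)
      (by nlinarith [hx.2])
    have : G x ≠ 0 := mul_ne_zero hne this.ne'
    positivity
  have := intervalIntegral.integral_pos zero_lt_one (f := fun x => G x ^ 2) (hGc.pow 2)
    (fun _ _ => sq_nonneg _) ⟨x, Ioo_subset_Icc_self hx, hGx⟩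
  linarith

lemma sin_orth (i j : ℕ) (hij : i ≠ j) :
    ∫ x in (0:ℝ)..1, Real.sin (kk i * x) * Real.sin (kk j * x) = 0 := by
  have hd : kk i - kk j ≠ 0 := by
    simp only [kk]
    rw [← sub_mul]
    apply mul_ne_zero _ Real.pi_ne_zero
    intro h
    apply hij
    have : (i:ℝ) = j := by linarith
    exact_mod_cast this
  have hs : kk i + kk j ≠ 0 := (add_pos (kk_pos i) (kk_pos j)).ne'
  have hF : ∀ x : ℝ, HasDerivAt (fun x => Real.sin ((kk i - kk j) * x) / (2 * (kk i - kk j)) -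
      Real.sin ((kk i + kk j) * x) / (2 * (kk i + kk j)))
      (Real.sin (kk i * x) * Real.sin (kk j * x)) x := by
    intro x
    have h1 := (((hasDerivAt_id x).const_mul (kk i - kk j)).sin).div_const (2 * (kk i - kk j))
    have h2 := (((hasDerivAt_id x).const_mul (kk i + kk j)).sin).div_const (2 * (kk i + kk j))
    refine (h1.sub h2).congr_deriv ?_
    simp only [id, sub_mul, add_mul, Real.cos_sub, Real.cos_add]
    field_simp
    ring
  rw [intervalIntegral.integral_eq_sub_of_hasDerivAt (fun x _ => hF x)
    (Continuous.intervalIntegrable (by fun_prop) _ _)]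
  have a1 : Real.sin ((kk i - kk j) * 1) = 0 := by
    rw [show (kk i - kk j) * 1 = ((i - j : ℤ) : ℝ) * Real.pi by simp only [kk]; push_cast; ring]
    exact Real.sin_int_mul_pi _
  have a2 : Real.sin ((kk i + kk j) * 1) = 0 := by
    rw [show (kk i + kk j) * 1 = ((i + j + 2 : ℤ) : ℝ) * Real.pi by simp only [kk]; push_cast; ring]
    exact Real.sin_int_mul_pi _
  rw [a1, a2]; simp

lemma cos_orth (i j : ℕ) (hij : i ≠ j) :
    ∫ x in (0:ℝ)..1, Real.cos (kk i * x) * Real.cos (kk j * x) = 0 := by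
  have hd : kk i - kk j ≠ 0 := by
    simp only [kk]
    rw [← sub_mul]
    apply mul_ne_zero _ Real.pi_ne_zero
    intro h
    apply hij
    have : (i:ℝ) = j := by linarith
    exact_mod_cast this
  have hs : kk i + kk j ≠ 0 := (add_pos (kk_pos i) (kk_pos j)).ne'
  have hF : ∀ x : ℝ, HasDerivAt (fun x => Real.sin ((kk i - kk j) * x) / (2 * (kk i - kk j)) +
      Real.sin ((kk i + kk j) * x) / (2 * (kk i + kk j)))
      (Real.cos (kk i * x) * Real.cos (kk j * x)) x := by
    intro x
    have h1 := (((hasDerivAt_id x).const_mul (kk i - kk j)).sin).div_const (2 * (kk i - kk j))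
    have h2 := (((hasDerivAt_id x).const_mul (kk i + kk j)).sin).div_const (2 * (kk i + kk j))
    refine (h1.add h2).congr_deriv ?_
    simp only [id, sub_mul, add_mul, Real.cos_sub, Real.cos_add]
    field_simp
    ring
  rw [intervalIntegral.integral_eq_sub_of_hasDerivAt (fun x _ => hF x)
    (Continuous.intervalIntegrable (by fun_prop) _ _)]
  have a1 : Real.sin ((kk i - kk j) * 1) = 0 := by
    rw [show (kk i - kk j) * 1 = ((i - j : ℤ) : ℝ) * Real.pi by simp only [kk]; push_cast; ring]
    exact Real.sin_int_mul_pi _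
  have a2 : Real.sin ((kk i + kk j) * 1) = 0 := by
    rw [show (kk i + kk j) * 1 = ((i + j + 2 : ℤ) : ℝ) * Real.pi by simp only [kk]; push_cast; ring]
    exact Real.sin_int_mul_pi _
  rw [a1, a2]; simp

lemma sin_kk (n : ℕ) : Real.sin (kk n) = 0 := by
  rw [show kk n = ((n + 1 : ℕ) : ℝ) * Real.pi by simp [kk]]
  exact Real.sin_nat_mul_pi _

lemma sin_norm (i : ℕ) :
    ∫ x in (0:ℝ)..1, Real.sin (kk i * x) * Real.sin (kk i * x) = 1 / 2 := by
  have hs : kk i ≠ 0 := (kk_pos i).ne'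
  have hF : ∀ x : ℝ, HasDerivAt (fun x => x / 2 - Real.sin (kk i * x) * Real.cos (kk i * x) / (2 * kk i))
      (Real.sin (kk i * x) * Real.sin (kk i * x)) x := by
    intro x
    have h0 := (hasDerivAt_id x).const_mul (kk i)
    have h1 := (h0.sin.mul h0.cos).div_const (2 * kk i)
    refine (((hasDerivAt_id x).div_const 2).sub h1).congr_deriv ?_
    have := Real.sin_sq_add_cos_sq (kk i * x)
    simp only [id]
    field_simp
    linear_combination -this
  rw [intervalIntegral.integral_eq_sub_of_hasDerivAt (fun x _ => hF x)
    (Continuous.intervalIntegrable (by fun_prop) _ _)]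
  simp [sin_kk]

def pp (n : ℕ) : ℝ := 2 * (1 - Real.cos (kk n)) / kk n ^ 3

lemma pp_bd (n : ℕ) : |pp n| ≤ 4 / kk n ^ 3 := by
  have h := kk_pos n
  rw [pp, abs_div, abs_of_pos (pow_pos h 3)]
  gcongr
  rw [abs_le]; constructor <;> nlinarith [Real.neg_one_le_cos (kk n), Real.cos_le_one (kk n)]

lemma phi_coef (n : ℕ) :
    2 * ∫ x in (0:ℝ)..1, (x * (1 - x) / 2) * Real.sin (kk n * x) = pp n := by
  have hs : kk n ≠ 0 := (kk_pos n).ne'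
  have hF : ∀ x : ℝ, HasDerivAt (fun x => - (x * (1 - x) / 2) * Real.cos (kk n * x) / kk n
      + (1 / 2 - x) * Real.sin (kk n * x) / kk n ^ 2 - Real.cos (kk n * x) / kk n ^ 3)
      ((x * (1 - x) / 2) * Real.sin (kk n * x)) x := by
    intro x
    have h0 := (hasDerivAt_id x).const_mul (kk n)
    have hq : HasDerivAt (fun x : ℝ => - (x * (1 - x) / 2)) (x - 1 / 2) x := by
      have := (((hasDerivAt_id x).mul ((hasDerivAt_id x).const_sub 1)).div_const 2).neg
      refine this.congr_deriv ?_
      simp; ring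
    have h1 := (hq.mul h0.cos).div_const (kk n)
    have h2 := ((((hasDerivAt_id x).const_sub (1/2))).mul h0.sin).div_const (kk n ^ 2)
    have h3 := h0.cos.div_const (kk n ^ 3)
    refine ((h1.add h2).sub h3).congr_deriv ?_
    simp only [id]
    field_simp
    ring
  rw [intervalIntegral.integral_eq_sub_of_hasDerivAt (fun x _ => hF x)
    (Continuous.intervalIntegrable (by fun_prop) _ _)]
  simp [sin_kk, pp]
  ring

lemma series_cont {c : ℕ → ℝ} (hc : Summable (fun n => |c n|)) :
    Continuous (fun x => ∑' n, c n * Real.sin (kk n * x)) := by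
  refine continuous_tsum (fun n => by fun_prop) hc fun n x => ?_
  rw [Real.norm_eq_abs, abs_mul]
  exact mul_le_of_le_one_right (abs_nonneg _) (Real.abs_sin_le_one _)

lemma sin_series {v : ℝ → ℝ} (hv : ContinuousOn v (Icc 0 1)) {c : ℕ → ℝ}
    (hc : Summable (fun n => |c n|))
    (h : ∀ n, 2 * ∫ x in (0:ℝ)..1, v x * Real.sin (kk n * x) = c n) :
    ∀ x ∈ Ioo (0:ℝ) 1, v x = ∑' n, c n * Real.sin (kk n * x) := by
  have hS := series_cont hc
  have key : ∀ m, ∫ x in (0:ℝ)..1, (∑' n, c n * Real.sin (kk n * x)) * Real.sin (kk m * x) = c m / 2 := by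
    intro m
    have e : ∀ x : ℝ, (∑' n, c n * Real.sin (kk n * x)) * Real.sin (kk m * x) =
        ∑' n, (c n * Real.sin (kk n * x)) * Real.sin (kk m * x) := fun x => tsum_mul_right.symm
    simp only [e]
    have hs := intervalIntegral.hasSum_integral_of_dominated_convergence (μ := volume) (a := 0) (b := 1)
      (F := fun n x => (c n * Real.sin (kk n * x)) * Real.sin (kk m * x))
      (f := fun x => ∑' n, (c n * Real.sin (kk n * x)) * Real.sin (kk m * x))
      (fun n _ => |c n|) (fun n => Continuous.aestronglyMeasurable (by fun_prop))
      (fun n => by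
        filter_upwards with x _
        rw [Real.norm_eq_abs, abs_mul, abs_mul]
        exact mul_le_of_le_one_right (by positivity) (Real.abs_sin_le_one _) |>.trans
          (mul_le_of_le_one_right (abs_nonneg _) (Real.abs_sin_le_one _)))
      (by filter_upwards with x _; exact hc) (by simp)
      (by
        filter_upwards with x _
        apply Summable.hasSum
        refine Summable.mul_right _ (Summable.of_norm_bounded hc fun n => ?_)
        rw [Real.norm_eq_abs, abs_mul]
        exact mul_le_of_le_one_right (abs_nonneg _) (Real.abs_sin_le_one _))
    rw [← hs.tsum_eq, tsum_eq_single m]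
    · simp only [mul_assoc]
      rw [intervalIntegral.integral_const_mul, sin_norm]; ring
    · intro n hn
      simp only [mul_assoc]
      rw [intervalIntegral.integral_const_mul, sin_orth n m hn, mul_zero]
  intro x hx
  have := sin_complete (h := fun x => v x - ∑' n, c n * Real.sin (kk n * x))
    (hv.sub hS.continuousOn) (fun n => by
      simp only [sub_mul]
      rw [intervalIntegral.integral_sub, key, ← h n]
      · ring
      · apply ContinuousOn.intervalIntegrable
        rw [uIcc_of_le zero_le_one]
        exact hv.mul (by fun_prop)
      · exact (hS.mul (by fun_prop)).intervalIntegrable _ _) x hx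
  linarith

lemma pp_summ : Summable (fun n => |pp n|) := by
  refine Summable.of_nonneg_of_le (fun n => abs_nonneg _) pp_bd ?_
  exact ((summ_kk (j := 3) (by norm_num)).mul_left 4).congr fun n => by ring

lemma phi_series : ∀ x ∈ Icc (0:ℝ) 1, x * (1 - x) / 2 = ∑' n, pp n * Real.sin (kk n * x) := by
  intro x hx
  rcases eq_or_ne x 0 with rfl | h0
  · simp
  rcases eq_or_ne x 1 with rfl | h1
  · simp [sin_kk]
  exact sin_series (v := fun x => x * (1 - x) / 2) (by fun_prop) pp_summ phi_coef x
    ⟨lt_of_le_of_ne hx.1 (Ne.symm h0), lt_of_le_of_ne hx.2 h1⟩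

instance instFinMu : IsFiniteMeasure μ01 := by unfold μ01; infer_instance

lemma mu_univ : μ01 univ = 1 := by simp [μ01]

lemma memH {f : ℝ → ℝ} (hf : Continuous f) : MemLp f 2 μ01 := by
  obtain ⟨B, hB⟩ := isCompact_Icc.exists_bound_of_continuousOn (s := Icc (0:ℝ) 1) hf.continuousOn
  refine MemLp.of_bound hf.aestronglyMeasurable B ?_
  unfold μ01
  filter_upwards [ae_restrict_mem measurableSet_Ioo] with x hx
  exact hB x (Ioo_subset_Icc_self hx)

/-- class in `Hsp` of a continuous function -/
def toH (f : ℝ → ℝ) (hf : Continuous f) : Hsp := (memH hf).toLp f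

lemma toH_ae (f : ℝ → ℝ) (hf : Continuous f) : ∀ᵐ x ∂μ01, toH f hf x = f x :=
  (memH hf).coeFn_toLp

lemma toH_norm_le {f : ℝ → ℝ} (hf : Continuous f) {C : ℝ} (hC : 0 ≤ C)
    (h : ∀ x ∈ Ioo (0:ℝ) 1, |f x| ≤ C) : ‖toH f hf‖ ≤ C := by
  have := Lp.norm_le_of_ae_bound (f := toH f hf) (C := C) hC (by
    filter_upwards [toH_ae f hf, (ae_restrict_mem measurableSet_Ioo : ∀ᵐ x ∂μ01, x ∈ Ioo (0:ℝ) 1)]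
      with x h1 h2
    rw [h1, Real.norm_eq_abs]; exact h x h2)
  simpa [measureUnivNNReal, mu_univ] using this

lemma toH_congr {f g : ℝ → ℝ} (hf : Continuous f) (hg : Continuous g)
    (h : ∀ x ∈ Ioo (0:ℝ) 1, f x = g x) : toH f hf = toH g hg := by
  apply Lp.ext
  filter_upwards [toH_ae f hf, toH_ae g hg,
    (ae_restrict_mem measurableSet_Ioo : ∀ᵐ x ∂μ01, x ∈ Ioo (0:ℝ) 1)] with x h1 h2 h3
  rw [h1, h2, h x h3]

lemma toH_add {f g : ℝ → ℝ} (hf : Continuous f) (hg : Continuous g) :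
    toH (fun x => f x + g x) (hf.add hg) = toH f hf + toH g hg := rfl

lemma toH_sub {f g : ℝ → ℝ} (hf : Continuous f) (hg : Continuous g) :
    toH (fun x => f x - g x) (hf.sub hg) = toH f hf - toH g hg := rfl

lemma toH_smul (c : ℝ) {f : ℝ → ℝ} (hf : Continuous f) :
    toH (fun x => c * f x) (hf.const_mul c) = c • toH f hf := rfl

lemma toH_sum {f : ℕ → ℝ → ℝ} (hf : ∀ n, Continuous (f n)) (s : Finset ℕ) :
    toH (fun x => ∑ n ∈ s, f n x) (continuous_finsetSum _ fun i _ => hf i) = ∑ n ∈ s, toH (f n) (hf n) := by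
  classical
  induction s using Finset.induction_on with
  | empty =>
    simp only [Finset.sum_empty]
    rfl
  | insert a s ha ih =>
    rw [Finset.sum_insert ha, ← ih, ← toH_add]
    apply toH_congr
    intro x _
    rw [Finset.sum_insert ha]

lemma toH_tsum {f : ℕ → ℝ → ℝ} (hf : ∀ n, Continuous (f n)) {M : ℕ → ℝ} (hM : Summable M)
    (hb : ∀ n x, |f n x| ≤ M n) (hc : Continuous (fun x => ∑' n, f n x)) :
    HasSum (fun n => toH (f n) (hf n)) (toH (fun x => ∑' n, f n x) hc) := by
  rw [HasSum, SummationFilter.unconditional_filter, tendsto_iff_norm_sub_tendsto_zero]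
  have hM0 : ∀ n, 0 ≤ M n := fun n => (abs_nonneg _).trans (hb n 0)
  have hlim : Filter.Tendsto (fun s : Finset ℕ => (∑' n, M n) - ∑ n ∈ s, M n) Filter.atTop (nhds 0) := by
    have : Filter.Tendsto (fun s : Finset ℕ => (∑' n, M n) - ∑ n ∈ s, M n) Filter.atTop
      (nhds ((∑' n, M n) - ∑' n, M n)) := (hM.hasSum.const_sub _)
    rwa [sub_self] at this
  refine squeeze_zero (fun _ => norm_nonneg _) (fun s => ?_) hlim
  rw [← toH_sum, ← toH_sub]
  apply toH_norm_le
  · have := hM.sum_le_tsum s (fun i _ => hM0 i)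
    linarith
  · intro x _
    have hs : Summable (fun n => f n x) := Summable.of_norm_bounded hM fun n => hb n x
    rw [abs_sub_comm]
    have h1 : Filter.Tendsto (fun t : Finset ℕ => |(∑ n ∈ t, f n x) - ∑ n ∈ s, f n x|) Filter.atTop
      (nhds |(∑' n, f n x) - ∑ n ∈ s, f n x|) := (hs.hasSum.sub_const _).abs
    refine le_of_tendsto h1 ?_
    classical
    filter_upwards [Filter.eventually_ge_atTop s] with t hst
    rw [← Finset.sum_sdiff hst, add_sub_cancel_right]
    refine (Finset.abs_sum_le_sum_abs _ _).trans ((Finset.sum_le_sum fun i _ => hb i x).trans ?_)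
    have := hM.sum_le_tsum t (fun i _ => hM0 i)
    rw [← Finset.sum_sdiff hst] at this
    linarith

lemma toH_inner {f : ℝ → ℝ} (hf : Continuous f) (v : Hsp) :
    inner ℝ (toH f hf) v = ∫ x in Ioo (0:ℝ) 1, f x * v x := by
  rw [L2.inner_def]
  apply integral_congr_ae
  filter_upwards [toH_ae f hf] with x hx
  rw [hx]; simp [mul_comm]

lemma toH_inner' {f g : ℝ → ℝ} (hf : Continuous f) (hg : Continuous g) :
    inner ℝ (toH f hf) (toH g hg) = ∫ x in (0:ℝ)..1, f x * g x := by
  rw [toH_inner, intervalIntegral.integral_of_le zero_le_one, integral_Ioc_eq_integral_Ioo]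
  apply integral_congr_ae
  filter_upwards [toH_ae g hg] with x hx
  rw [hx]

def sb (n : ℕ) : Hsp := toH (fun x => Real.sin (kk n * x)) (by fun_prop)
def cb (n : ℕ) : Hsp := toH (fun x => Real.cos (kk n * x)) (by fun_prop)

lemma sb_orth : Orth sb where
  orth i j h := by rw [sb, sb, toH_inner', sin_orth i j h]
  norm i := toH_norm_le _ zero_le_one fun x _ => Real.abs_sin_le_one _

lemma cb_orth : Orth cb where
  orth i j h := by rw [cb, cb, toH_inner', cos_orth i j h]
  norm i := toH_norm_le _ zero_le_one fun x _ => Real.abs_cos_le_one _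

lemma sb_tsum {c : ℕ → ℝ} (hc : Summable (fun n => |c n|)) :
    ∑' n, c n • sb n = toH (fun x => ∑' n, c n * Real.sin (kk n * x)) (series_cont hc) := by
  have := toH_tsum (f := fun n x => c n * Real.sin (kk n * x)) (fun n => by fun_prop) hc
    (fun n x => by
      rw [abs_mul]
      exact mul_le_of_le_one_right (abs_nonneg _) (Real.abs_sin_le_one _)) (series_cont hc)
  rw [← this.tsum_eq]; rfl

lemma series_cont' {c : ℕ → ℝ} (hc : Summable (fun n => |c n|)) :
    Continuous (fun x => ∑' n, c n * Real.cos (kk n * x)) := by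
  refine continuous_tsum (fun n => by fun_prop) hc fun n x => ?_
  rw [Real.norm_eq_abs, abs_mul]
  exact mul_le_of_le_one_right (abs_nonneg _) (Real.abs_cos_le_one _)

lemma cb_tsum {c : ℕ → ℝ} (hc : Summable (fun n => |c n|)) :
    ∑' n, c n • cb n = toH (fun x => ∑' n, c n * Real.cos (kk n * x)) (series_cont' hc) := by
  have := toH_tsum (f := fun n x => c n * Real.cos (kk n * x)) (fun n => by fun_prop) hc
    (fun n x => by
      rw [abs_mul]
      exact mul_le_of_le_one_right (abs_nonneg _) (Real.abs_cos_le_one _)) (series_cont' hc)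
  rw [← this.tsum_eq]; rfl

lemma wd_iff (v w : Hsp) : IsSpatialWeakDeriv v w ↔
    ∀ φ : ℝ → ℝ, ∀ h : ContDiff ℝ (⊤ : ℕ∞) φ, HasCompactSupport φ → tsupport φ ⊆ Ioo (0:ℝ) 1 →
    inner ℝ (toH (deriv φ) (h.continuous_deriv (by simp))) v = - inner ℝ (toH φ h.continuous) w := by
  simp only [toH_inner]
  rfl

lemma wd_add {v w v' w' : Hsp} (h : IsSpatialWeakDeriv v w) (h' : IsSpatialWeakDeriv v' w') :
    IsSpatialWeakDeriv (v + v') (w + w') := by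
  rw [wd_iff] at *
  intro φ h1 h2 h3
  rw [inner_add_right, inner_add_right, h φ h1 h2 h3, h' φ h1 h2 h3]; ring

lemma wd_smul {v w : Hsp} (c : ℝ) (h : IsSpatialWeakDeriv v w) :
    IsSpatialWeakDeriv (c • v) (c • w) := by
  rw [wd_iff] at *
  intro φ h1 h2 h3
  rw [inner_smul_right, inner_smul_right, h φ h1 h2 h3]; ring

lemma wd_tsum {e e' : ℕ → Hsp} (h : ∀ n, IsSpatialWeakDeriv (e n) (e' n)) (hs : Summable e)
    (hs' : Summable e') : IsSpatialWeakDeriv (∑' n, e n) (∑' n, e' n) := by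
  rw [wd_iff]
  intro φ h1 h2 h3
  have a := (hs.hasSum.mapL (innerSL ℝ (toH (deriv φ) (h1.continuous_deriv (by simp))))).tsum_eq
  have b := (hs'.hasSum.mapL (innerSL ℝ (toH φ h1.continuous))).tsum_eq
  simp only [innerSL_apply_apply] at a b
  rw [← a, ← b, ← tsum_neg]
  exact tsum_congr fun n => (wd_iff _ _).1 (h n) φ h1 h2 h3

lemma wd_classical {f f' : ℝ → ℝ} (hf : Continuous f) (hf' : Continuous f')
    (hd : ∀ x, HasDerivAt f (f' x) x) : IsSpatialWeakDeriv (toH f hf) (toH f' hf') := by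
  rw [wd_iff]
  intro φ h1 h2 h3
  have := parts (ACP.of_deriv hd hf') zero_lt_one h1 h3
  rw [toH_inner', toH_inner', intervalIntegral.integral_of_le zero_le_one,
    integral_Ioc_eq_integral_Ioo, intervalIntegral.integral_of_le zero_le_one,
    integral_Ioc_eq_integral_Ioo, this]

lemma wd_sb (n : ℕ) : IsSpatialWeakDeriv (sb n) (kk n • cb n) := by
  rw [cb, ← toH_smul]
  apply wd_classical
  intro x
  have h0 := ((hasDerivAt_id x).const_mul (kk n)).sin
  refine h0.congr_deriv ?_
  simp; ring

lemma wd_cb (n : ℕ) : IsSpatialWeakDeriv (cb n) ((-kk n) • sb n) := by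
  rw [sb, ← toH_smul]
  apply wd_classical
  intro x
  have h0 := ((hasDerivAt_id x).const_mul (kk n)).cos
  refine h0.congr_deriv ?_
  simp; ring

lemma wd_sb_series {c : ℕ → ℝ} (h0 : Summable fun n => c n ^ 2)
    (h1 : Summable fun n => (kk n * c n) ^ 2) :
    IsSpatialWeakDeriv (∑' n, c n • sb n) (∑' n, (kk n * c n) • cb n) := by
  apply wd_tsum _ (sb_orth.summable h0) (cb_orth.summable h1)
  intro n
  have := wd_smul (c n) (wd_sb n)
  rwa [smul_smul, mul_comm] at this

lemma wd_cb_series {c : ℕ → ℝ} (h0 : Summable fun n => c n ^ 2)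
    (h1 : Summable fun n => (kk n * c n) ^ 2) :
    IsSpatialWeakDeriv (∑' n, c n • cb n) (∑' n, (- (kk n * c n)) • sb n) := by
  apply wd_tsum _ (cb_orth.summable h0) (sb_orth.summable (by simpa using h1))
  intro n
  have := wd_smul (c n) (wd_cb n)
  rwa [smul_smul, mul_comm, neg_mul] at this

lemma der_nonneg {f : ℝ → ℝ} {f' a : ℝ} (h : HasDerivWithinAt f f' (Ioi a) a)
    (hx : ∀ᶠ x in nhdsWithin a (Ioi a), f a ≤ f x) : 0 ≤ f' := by
  rw [hasDerivWithinAt_iff_tendsto_slope' (by simp)] at h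
  refine ge_of_tendsto h ?_
  filter_upwards [hx, self_mem_nhdsWithin] with x h1 h2
  rw [slope_def_field]
  exact div_nonneg (by linarith) (by have : a < x := h2; linarith)

lemma der_nonpos {f : ℝ → ℝ} {f' a : ℝ} (h : HasDerivWithinAt f f' (Iio a) a)
    (hx : ∀ᶠ x in nhdsWithin a (Iio a), f a ≤ f x) : f' ≤ 0 := by
  rw [hasDerivWithinAt_iff_tendsto_slope' (by simp)] at h
  refine le_of_tendsto h ?_
  filter_upwards [hx, self_mem_nhdsWithin] with x h1 h2
  rw [slope_def_field]
  exact div_nonpos_of_nonneg_of_nonpos (by linarith) (by have : x < a := h2; linarith)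

lemma second_der {f g : ℝ → ℝ} {x w : ℝ} (hmin : IsLocalMin f x)
    (hf : ∀ᶠ y in nhds x, HasDerivAt f (g y) y) (hg : HasDerivAt g w x) : 0 ≤ w := by
  by_contra hw
  push Not at hw
  have hd : deriv f =ᶠ[nhds x] g := hf.mono fun y hy => hy.deriv
  have h0 : g x = 0 := hmin.hasDerivAt_eq_zero hf.self_of_nhds
  have hdd : deriv (deriv f) x = w := by rw [hd.deriv_eq, hg.deriv]
  have hmax : IsLocalMax f x := isLocalMax_of_deriv_deriv_neg (by rw [hdd]; exact hw)
    (by rw [hd.self_of_nhds, h0]) hf.self_of_nhds.continuousAt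
  have hc : f =ᶠ[nhds x] fun _ => f x := by
    filter_upwards [hmin, hmax] with y h1 h2
    exact le_antisymm h2 h1
  have : deriv (deriv f) x = 0 := by
    have h1 : deriv f =ᶠ[nhds x] deriv fun _ => f x := hc.deriv
    rw [h1.deriv_eq]; simp
  linarith

lemma maxp {τ T : ℝ} (hT : τ ≤ T) {P Pt Px Pxx : ℝ → ℝ → ℝ}
    (hc : ContinuousOn (fun p : ℝ × ℝ => P p.1 p.2) (Icc τ T ×ˢ Icc 0 1))
    (hτ : ∀ x ∈ Icc (0:ℝ) 1, 0 ≤ P τ x)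
    (h0 : ∀ t ∈ Icc τ T, 0 ≤ P t 0) (h1 : ∀ t ∈ Icc τ T, 0 ≤ P t 1)
    (ht : ∀ t, τ < t → ∀ x ∈ Ioo (0:ℝ) 1, HasDerivAt (fun s => P s x) (Pt t x) t)
    (hx : ∀ t, τ < t → ∀ x ∈ Ioo (0:ℝ) 1, HasDerivAt (P t) (Px t x) x)
    (hxx : ∀ t, τ < t → ∀ x ∈ Ioo (0:ℝ) 1, HasDerivAt (Px t) (Pxx t x) x)
    (hlt : ∀ t, τ < t → ∀ x ∈ Ioo (0:ℝ) 1, Pxx t x < Pt t x) :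
    ∀ t ∈ Icc τ T, ∀ x ∈ Icc (0:ℝ) 1, 0 ≤ P t x := by
  obtain ⟨⟨t0, x0⟩, hm, hmin⟩ := (isCompact_Icc.prod isCompact_Icc).exists_isMinOn
    (s := Icc τ T ×ˢ Icc (0:ℝ) 1) ⟨(τ, 0), ⟨⟨le_rfl, hT⟩, ⟨le_rfl, zero_le_one⟩⟩⟩ hc
  have hmin' : ∀ t ∈ Icc τ T, ∀ x ∈ Icc (0:ℝ) 1, P t0 x0 ≤ P t x := fun t h1 x h2 =>
    hmin (a := (t, x)) ⟨h1, h2⟩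
  obtain ⟨hmt, hmx⟩ := hm
  simp only at hmt hmx
  suffices 0 ≤ P t0 x0 from fun t h1 x h2 => this.trans (hmin' t h1 x h2)
  by_contra hneg
  have ht0 : τ < t0 := lt_of_le_of_ne hmt.1 fun h => hneg (h ▸ hτ x0 hmx)
  have hx0 : x0 ∈ Ioo (0:ℝ) 1 := ⟨lt_of_le_of_ne hmx.1 fun h => hneg (h ▸ h0 t0 hmt),
    lt_of_le_of_ne hmx.2 fun h => hneg (h ▸ h1 t0 hmt)⟩
  have a1 : Pt t0 x0 ≤ 0 := by
    refine der_nonpos (ht t0 ht0 x0 hx0).hasDerivWithinAt ?_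
    filter_upwards [Ioo_mem_nhdsLT ht0] with s hs
    exact hmin' s ⟨hs.1.le, hs.2.le.trans hmt.2⟩ x0 hmx
  have a2 : 0 ≤ Pxx t0 x0 := by
    refine second_der (f := P t0) (g := Px t0) (x := x0) ?_ ?_ (hxx t0 ht0 x0 hx0)
    · filter_upwards [Ioo_mem_nhds hx0.1 hx0.2] with y hy
      exact hmin' t0 hmt y (Ioo_subset_Icc_self hy)
    · filter_upwards [Ioo_mem_nhds hx0.1 hx0.2] with y hy
      exact hx t0 ht0 y hy
  linarith [hlt t0 ht0 x0 hx0]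

lemma lower_sin {vt g : ℝ → ℝ} (hc : ContinuousOn vt (Icc 0 1)) (h0 : vt 0 = 0) (h1 : vt 1 = 0)
    (hd : ∀ x ∈ Icc (0:ℝ) 1, HasDerivWithinAt vt (g x) (Icc 0 1) x)
    (hp : ∀ x ∈ Ioo (0:ℝ) 1, 0 < vt x) (g0 : 0 < g 0) (g1 : g 1 < 0) :
    ∃ c > 0, ∀ x ∈ Icc (0:ℝ) 1, c * Real.sin (Real.pi * x) ≤ vt x := by
  have hpi := Real.pi_pos
  have n0 : ∃ δ ∈ Ioo (0:ℝ) (1/2), ∀ x ∈ Ioo (0:ℝ) δ, g 0 / 2 * x ≤ vt x := by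
    have h := (hd 0 ⟨le_rfl, zero_le_one⟩).mono Ioo_subset_Icc_self
    have h := (hasDerivWithinAt_iff_tendsto_slope' (by simp)).1 h
    rw [nhdsWithin_Ioo_eq_nhdsGT zero_lt_one] at h
    have h := (h.eventually (lt_mem_nhds (show g 0 / 2 < g 0 by linarith))).and
      (Ioo_mem_nhdsGT (show (0:ℝ) < 1/2 by norm_num))
    obtain ⟨δ, hδ, hh⟩ := (mem_nhdsGT_iff_exists_Ioo_subset).1 h
    refine ⟨min δ (1/4), ⟨lt_min hδ (by norm_num), (min_le_right _ _).trans_lt (by norm_num)⟩,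
      fun x hx => ?_⟩
    have h2 := (hh ⟨hx.1, hx.2.trans_le (min_le_left _ _)⟩).1
    simp only [slope_def_field, h0, sub_zero] at h2
    rw [lt_div_iff₀ hx.1] at h2
    exact h2.le
  have n1 : ∃ δ ∈ Ioo (1/2 : ℝ) 1, ∀ x ∈ Ioo δ 1, - g 1 / 2 * (1 - x) ≤ vt x := by
    have h := (hd 1 ⟨zero_le_one, le_rfl⟩).mono Ioo_subset_Icc_self
    have h := (hasDerivWithinAt_iff_tendsto_slope' (by simp)).1 h
    rw [nhdsWithin_Ioo_eq_nhdsLT zero_lt_one] at h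
    have h := (h.eventually (gt_mem_nhds (show g 1 < g 1 / 2 by linarith))).and
      (Ioo_mem_nhdsLT (show (1/2:ℝ) < 1 by norm_num))
    obtain ⟨δ, hδ, hh⟩ := (mem_nhdsLT_iff_exists_Ioo_subset).1 h
    refine ⟨max δ (3/4), ⟨(lt_max_of_lt_right (by norm_num)), max_lt hδ (by norm_num)⟩,
      fun x hx => ?_⟩
    have h2 := (hh ⟨(le_max_left _ _).trans_lt hx.1, hx.2⟩).1
    simp only [slope_def_field, h1, sub_zero] at h2
    have h3 : 0 < 1 - x := by linarith [hx.2]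
    have h4 : vt x / (x - 1) = - (vt x / (1 - x)) := by
      rw [← neg_sub 1 x, div_neg]
    rw [h4, neg_lt, lt_div_iff₀ h3] at h2
    linarith
  obtain ⟨δ, hδ, hn0⟩ := n0
  obtain ⟨η, hη, hn1⟩ := n1
  obtain ⟨xm, hxm, hmin⟩ := isCompact_Icc.exists_isMinOn (s := Icc δ η)
    ⟨δ, le_rfl, by linarith [hδ.2, hη.1]⟩ (hc.mono (Icc_subset_Icc hδ.1.le hη.2.le))
  have hm : 0 < vt xm := hp xm ⟨hδ.1.trans_le hxm.1, hxm.2.trans_lt hη.2⟩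
  set c := min (vt xm) (min (g 0 / 2 / Real.pi) (- g 1 / 2 / Real.pi)) with hcdef
  have hcpos : 0 < c := lt_min hm (lt_min (by positivity) (div_pos (by linarith) hpi))
  refine ⟨c, hcpos, fun x hx => ?_⟩
  rcases eq_or_lt_of_le hx.1 with e | hx0
  · rw [← e]; simp [h0]
  rcases eq_or_lt_of_le hx.2 with e | hx1
  · rw [e]; simp [h1]
  rcases lt_or_ge x δ with hxd | hxd
  · have h2 := hn0 x ⟨hx0, hxd⟩
    have h3 : Real.sin (Real.pi * x) ≤ Real.pi * x := Real.sin_le (by positivity)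
    have h4 : c ≤ g 0 / 2 / Real.pi := (min_le_right _ _).trans (min_le_left _ _)
    rw [le_div_iff₀ hpi] at h4
    nlinarith
  rcases lt_or_ge η x with hxe | hxe
  · have h2 := hn1 x ⟨hxe, hx1⟩
    have h3 : Real.sin (Real.pi * x) ≤ Real.pi * (1 - x) := by
      rw [← Real.sin_pi_sub]
      have : Real.pi - Real.pi * x = Real.pi * (1 - x) := by ring
      rw [this]
      exact Real.sin_le (mul_nonneg hpi.le (by linarith))
    have h4 : c ≤ - g 1 / 2 / Real.pi := (min_le_right _ _).trans (min_le_right _ _)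
    rw [le_div_iff₀ hpi] at h4
    nlinarith
  · have h2 : vt xm ≤ vt x := hmin (a := x) ⟨hxd, hxe⟩
    have h4 : c ≤ vt xm := min_le_left _ _
    nlinarith [Real.sin_le_one (Real.pi * x)]

lemma sin_lower {x : ℝ} (hx : x ∈ Icc (0:ℝ) 1) : 2 * (x * (1 - x)) ≤ Real.sin (Real.pi * x) := by
  have hpi := Real.pi_pos
  have key : ∀ y : ℝ, 0 ≤ y → y ≤ 1/2 → 2 * y ≤ Real.sin (Real.pi * y) := by
    intro y h0 h1
    have := Real.mul_le_sin (x := Real.pi * y) (by positivity) (by nlinarith)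
    have e : 2 / Real.pi * (Real.pi * y) = 2 * y := by field_simp
    rwa [e] at this
  rcases le_total x (1/2) with h | h
  · have := key x hx.1 h
    nlinarith [hx.1]
  · have := key (1 - x) (by linarith [hx.2]) (by linarith)
    rw [show Real.pi * (1 - x) = Real.pi - Real.pi * x by ring, Real.sin_pi_sub] at this
    nlinarith [hx.1, hx.2]

lemma ac_of_dist {X Y : Type*} [PseudoMetricSpace X] [PseudoMetricSpace Y] {f : ℝ → X} {h : ℝ → Y}
    {a b K : ℝ} (hf : AbsolutelyContinuousOnInterval f a b)
    (hd : ∀ s ∈ uIcc a b, ∀ t ∈ uIcc a b, dist (h s) (h t) ≤ K * dist (f s) (f t)) :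
    AbsolutelyContinuousOnInterval h a b := by
  unfold AbsolutelyContinuousOnInterval at hf ⊢
  apply squeeze_zero' ?_ ?_ (by simpa using (hf.const_mul K))
  · exact Filter.Eventually.of_forall <| fun _ => Finset.sum_nonneg (fun i hi => dist_nonneg)
  rw [Filter.eventually_inf_principal]
  filter_upwards with (n, I) hnI
  simp only [Finset.mul_sum]
  exact Finset.sum_le_sum fun i hi => hd _ (hnI.left i hi |>.left) _ (hnI.left i hi |>.right)

lemma ac_normsq {E : Type*} [NormedAddCommGroup E] {z : ℝ → E} {a b : ℝ}
    (hz : AbsolutelyContinuousOnInterval z a b) :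
    AbsolutelyContinuousOnInterval (fun t => ‖z t‖ ^ 2) a b := by
  obtain ⟨C, hC⟩ := hz.exists_bound
  refine ac_of_dist (K := 2 * C) hz fun s hs t ht => ?_
  have h1 := hC s hs
  have h2 := hC t ht
  rw [Real.dist_eq, dist_eq_norm]
  rw [show ‖z s‖ ^ 2 - ‖z t‖ ^ 2 = (‖z s‖ + ‖z t‖) * (‖z s‖ - ‖z t‖) by ring, abs_mul]
  exact mul_le_mul (by rw [abs_of_nonneg (by positivity)]; linarith) (abs_norm_sub_norm_le _ _)
    (abs_nonneg _) (by linarith [norm_nonneg (z s)])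

lemma ac_prim {E : Type*} [NormedAddCommGroup E] [NormedSpace ℝ E] {z' : ℝ → E} {a b : ℝ}
    (p : E) (hi : IntervalIntegrable z' volume a b) :
    AbsolutelyContinuousOnInterval (fun t => p + ∫ s in a..t, z' s) a b := by
  refine ac_of_dist (K := 1) (hi.norm.absolutelyContinuousOnInterval_intervalIntegral
    (c := a) (by simp)) fun s hs t ht => ?_
  have m : ∀ s ∈ uIcc a b, IntervalIntegrable z' volume a s := fun s hs =>
    hi.mono_set (uIcc_subset_uIcc_left hs)
  rw [dist_add_left, dist_eq_norm, Real.dist_eq, one_mul,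
    intervalIntegral.integral_interval_sub_left (m s hs) (m t ht),
    intervalIntegral.integral_interval_sub_left (m s hs).norm (m t ht).norm]
  exact intervalIntegral.norm_integral_le_abs_integral_norm

section gron
variable {E : Type*} [NormedAddCommGroup E] [InnerProductSpace ℝ E] [CompleteSpace E]

lemma gron_step {z z' : ℝ → E} {C T1 T2 : ℝ} (hT : T1 < T2)
    (hi : IntervalIntegrable z' volume T1 T2)
    (hz : ∀ t ∈ Icc T1 T2, z t = z T1 + ∫ s in T1..t, z' s)
    (hC : ∀ᵐ t ∂(volume.restrict (Ioo T1 T2)), inner ℝ (z t) (z' t) ≤ C * ‖z t‖ ^ 2) :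
    ‖z T2‖ ^ 2 * Real.exp (-(2 * C) * T2) ≤ ‖z T1‖ ^ 2 * Real.exp (-(2 * C) * T1) := by
  set y : ℝ → E := fun t => z T1 + ∫ s in T1..t, z' s with hy
  have hyac : AbsolutelyContinuousOnInterval y T1 T2 := ac_prim _ hi
  have hexp : ∀ t : ℝ, HasDerivAt (fun t => Real.exp (-(2 * C) * t))
      (Real.exp (-(2 * C) * t) * (-(2 * C))) t := fun t => by
    simpa using ((hasDerivAt_id t).const_mul (-(2 * C))).exp
  have heac : AbsolutelyContinuousOnInterval (fun t => Real.exp (-(2 * C) * t)) T1 T2 :=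
    (ACP.of_deriv hexp (by fun_prop)).ac _ _
  have hac := (ac_normsq hyac).fun_mul heac
  have hint := hac.integral_deriv_eq_sub
  have hle : ∫ t in T1..T2, deriv (fun t => ‖y t‖ ^ 2 * Real.exp (-(2 * C) * t)) t ≤ 0 := by
    rw [intervalIntegral.integral_of_le hT.le, integral_Ioc_eq_integral_Ioo]
    apply integral_nonpos_of_ae
    have had := ae_restrict_of_ae (s := Ioo T1 T2) (IntervalIntegrable.ae_hasDerivAt_integral hi)
    filter_upwards [had, hC, ae_restrict_mem measurableSet_Ioo] with t h1 h2 h3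
    have h4 := h1 (by rw [uIcc_of_le hT.le]; exact Ioo_subset_Icc_self h3) T1 (by simp)
    have h5 : HasDerivAt y (z' t) t := h4.const_add _
    have h6 := (h5.norm_sq).mul (hexp t)
    have h7 : y t = z t := (hz t (Ioo_subset_Icc_self h3)).symm
    have h8 : deriv (fun t => ‖y t‖ ^ 2 * Real.exp (-(2 * C) * t)) t = _ := h6.deriv
    rw [h8, h7]
    have := Real.exp_pos (-(2 * C) * t)
    simp only [Pi.zero_apply]
    nlinarith
  rw [hint] at hle
  have e1 : y T1 = z T1 := by simp [hy]
  have e2 : y T2 = z T2 := (hz T2 ⟨hT.le, le_rfl⟩).symm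
  rw [e1, e2] at hle
  linarith

lemma gron {z z' : ℝ → E} {C τ T : ℝ} (hc : ContinuousOn z (Ici τ)) (h0 : z τ = 0)
    (hf : ∀ T1 T2 : ℝ, τ < T1 → T1 < T2 → IntervalIntegrable z' volume T1 T2 ∧
      ∀ t ∈ Icc T1 T2, z t = z T1 + ∫ s in T1..t, z' s)
    (hC : ∀ᵐ t ∂(volume.restrict (Ioo τ T)), inner ℝ (z t) (z' t) ≤ C * ‖z t‖ ^ 2) :
    ∀ t ∈ Icc τ T, z t = 0 := by
  intro t ht
  rcases eq_or_lt_of_le ht.1 with e | hlt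
  · rw [← e, h0]
  have hlim : Filter.Tendsto (fun s => ‖z s‖ ^ 2 * Real.exp (-(2 * C) * s)) (nhdsWithin τ (Ioi τ))
      (nhds (‖z τ‖ ^ 2 * Real.exp (-(2 * C) * τ))) := by
    have : ContinuousWithinAt (fun s => ‖z s‖ ^ 2 * Real.exp (-(2 * C) * s)) (Ici τ) τ := by
      have h := hc τ self_mem_Ici
      exact (h.norm.pow 2).mul (by fun_prop)
    exact this.mono Ioi_subset_Ici_self
  have hb : ‖z t‖ ^ 2 * Real.exp (-(2 * C) * t) ≤ ‖z τ‖ ^ 2 * Real.exp (-(2 * C) * τ) := by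
    refine ge_of_tendsto hlim ?_
    filter_upwards [Ioo_mem_nhdsGT hlt] with s hs
    obtain ⟨h1, h2⟩ := hf s t hs.1 hs.2
    exact gron_step hs.2 h1 h2 (ae_restrict_of_ae_restrict_of_subset
      (Ioo_subset_Ioo hs.1.le ht.2) hC)
  rw [h0] at hb
  have := Real.exp_pos (-(2 * C) * t)
  have h3 : ‖z t‖ ^ 2 ≤ 0 := by
    by_contra h
    push Not at h
    have := mul_pos h this
    rw [norm_zero] at hb
    linarith
  have h4 : ‖z t‖ = 0 := by nlinarith [norm_nonneg (z t)]
  exact norm_eq_zero.1 h4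

end gron

lemma cs_int {g : ℝ → ℝ} (hg : Continuous g) {a b : ℝ} (hab : a ≤ b) :
    (∫ x in a..b, g x) ^ 2 ≤ (b - a) * ∫ x in a..b, g x ^ 2 := by
  rcases eq_or_lt_of_le hab with rfl | hlt
  · simp
  set m := (∫ x in a..b, g x) / (b - a) with hm
  have hba : 0 < b - a := by linarith
  have h1 : 0 ≤ ∫ x in a..b, (g x ^ 2 - (2 * m) * g x + m ^ 2) :=
    intervalIntegral.integral_nonneg hab fun x _ => by nlinarith [sq_nonneg (g x - m)]
  have i1 : IntervalIntegrable (fun x => g x ^ 2) volume a b := (hg.pow 2).intervalIntegrable _ _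
  have i2 : IntervalIntegrable (fun x => (2 * m) * g x) volume a b :=
    (hg.const_mul _).intervalIntegrable _ _
  rw [intervalIntegral.integral_add (i1.sub i2) (by simp), intervalIntegral.integral_sub i1 i2,
    intervalIntegral.integral_const_mul, intervalIntegral.integral_const, smul_eq_mul] at h1
  have h2 : ∫ x in a..b, g x = m * (b - a) := by rw [hm]; field_simp
  rw [h2] at h1 ⊢
  nlinarith

lemma dom_lemma {v w : Hsp} (h : InDomainA v w) : ∃ G : ℝ, 0 ≤ G ∧ inner ℝ v w = - G ∧
    ∀ᵐ x ∂μ01, v x ^ 2 ≤ x * G ∧ v x ^ 2 ≤ (1 - x) * G := by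
  obtain ⟨vt, hvc, hv0, hv1, hva, g, hg, hgw⟩ := h
  have hwi : IntegrableOn (fun x => w x) (Ioo 0 1) :=
    (Lp.memLp w).integrable (by norm_num)
  set w1 : ℝ → ℝ := (Ioo (0:ℝ) 1).indicator (fun x => w x) with hw1
  have hw1i : Integrable w1 := hwi.integrable_indicator measurableSet_Ioo
  set g1 : ℝ → ℝ := fun x => g (1/2) + ∫ z in (1/2:ℝ)..x, w1 z with hg1
  have hA : ACP g1 w1 := by
    have := ACP.add (ACP.const (g (1/2))) (ACP.of_int (d := w1) (fun s t => hw1i.intervalIntegrable) (1/2))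
    exact this.congr (fun x => rfl) (fun x => by simp)
  have hgc := hA.continuous
  have hg1e : ∀ x ∈ Ioo (0:ℝ) 1, g1 x = g x := by
    intro x hx
    have h2 := hgw x hx (1/2) (by norm_num)
    have h3 : ∫ z in (1/2:ℝ)..x, w1 z = ∫ z in (1/2:ℝ)..x, w z := by
      apply intervalIntegral.integral_congr
      intro z hz
      have : z ∈ Ioo (0:ℝ) 1 := (ordConnected_Ioo.uIcc_subset (by norm_num) hx) hz
      simp only [hw1, indicator_of_mem this]
    simp only [hg1, h3]; linarith
  have hvB : ACP (fun x => ∫ s in (0:ℝ)..x, g1 s) g1 :=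
    ACP.of_int (fun s t => hgc.intervalIntegrable _ _) 0
  have hve : ∀ x ∈ Icc (0:ℝ) 1, vt x = ∫ s in (0:ℝ)..x, g1 s := by
    intro x hx
    have := intervalIntegral.integral_eq_sub_of_hasDerivAt_of_le (a := 0) (b := x) (f := vt) (f' := g1) hx.1
      (hvc.mono (Icc_subset_Icc le_rfl hx.2)) (fun y hy => by
        have hy' : y ∈ Ioo (0:ℝ) 1 := ⟨hy.1, hy.2.trans_le hx.2⟩
        rw [hg1e y hy']; exact hg y hy') (hgc.intervalIntegrable _ _)
    rw [this, hv0, sub_zero]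
  have e := (hvB.mul hA).eq 0 1
  have hV1 : ∫ s in (0:ℝ)..1, g1 s = 0 := by rw [← hve 1 (by simp), hv1]
  have i1 : IntervalIntegrable (fun x => g1 x * g1 x) volume 0 1 := (hgc.mul hgc).intervalIntegrable _ _
  have i2 : IntervalIntegrable (fun x => (∫ s in (0:ℝ)..x, g1 s) * w1 x) volume 0 1 :=
    (hA.int 0 1).continuousOn_mul hvB.continuous.continuousOn
  rw [intervalIntegral.integral_add i1 i2, hV1] at e
  simp only [intervalIntegral.integral_same, zero_mul, sub_zero] at e
  refine ⟨∫ x in (0:ℝ)..1, g1 x ^ 2, intervalIntegral.integral_nonneg zero_le_one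
    fun _ _ => sq_nonneg _, ?_, ?_⟩
  · have e2 : inner ℝ v w = ∫ x in (0:ℝ)..1, (∫ s in (0:ℝ)..x, g1 s) * w1 x := by
      rw [L2.inner_def, intervalIntegral.integral_of_le zero_le_one, integral_Ioc_eq_integral_Ioo]
      apply integral_congr_ae
      filter_upwards [hva, (ae_restrict_mem measurableSet_Ioo : ∀ᵐ x ∂μ01, x ∈ Ioo (0:ℝ) 1)] with x h1 h2
      rw [← hve x (Ioo_subset_Icc_self h2), h1]
      simp [hw1, indicator_of_mem h2, mul_comm]
    rw [e2]
    have : ∀ x, g1 x ^ 2 = g1 x * g1 x := fun x => sq _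
    simp only [this]
    linarith
  · have i3 : ∀ a b : ℝ, IntervalIntegrable (fun x => g1 x ^ 2) volume a b := fun a b =>
      (hgc.pow 2).intervalIntegrable _ _
    filter_upwards [hva, (ae_restrict_mem measurableSet_Ioo : ∀ᵐ x ∂μ01, x ∈ Ioo (0:ℝ) 1)] with x h1 h2
    rw [← h1, hve x (Ioo_subset_Icc_self h2)]
    have a1 := intervalIntegral.integral_add_adjacent_intervals (i3 0 x) (i3 x 1)
    have a2 := intervalIntegral.integral_add_adjacent_intervals
      (hgc.intervalIntegrable (μ := volume) 0 x) (hgc.intervalIntegrable x 1)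
    have n1 : 0 ≤ ∫ s in (0:ℝ)..x, g1 s ^ 2 :=
      intervalIntegral.integral_nonneg h2.1.le fun _ _ => sq_nonneg _
    have n2 : 0 ≤ ∫ s in x..(1:ℝ), g1 s ^ 2 :=
      intervalIntegral.integral_nonneg h2.2.le fun _ _ => sq_nonneg _
    have c1 := cs_int hgc h2.1.le
    have c2 := cs_int hgc h2.2.le
    rw [hV1] at a2
    have a3 : ∫ s in (0:ℝ)..x, g1 s = - ∫ s in x..(1:ℝ), g1 s := by linarith
    constructor
    · nlinarith [h2.1]
    · rw [a3, neg_sq]; nlinarith [h2.2]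

lemma dom_sub {v w v' w' : Hsp} (h : InDomainA v w) (h' : InDomainA v' w') :
    InDomainA (v - v') (w - w') := by
  obtain ⟨vt, hvc, hv0, hv1, hva, g, hg, hgw⟩ := h
  obtain ⟨vt', hvc', hv0', hv1', hva', g', hg', hgw'⟩ := h'
  refine ⟨fun x => vt x - vt' x, hvc.sub hvc', by simp [hv0, hv0'], by simp [hv1, hv1'], ?_,
    fun x => g x - g' x, fun x hx => (hg x hx).sub (hg' x hx), fun x hx y hy => ?_⟩
  · filter_upwards [hva, hva', Lp.coeFn_sub v v'] with x h1 h2 h3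
    rw [h1, h2, h3]; rfl
  · have hwi : ∀ w : Hsp, IntervalIntegrable (fun x => w x) volume y x := fun w => by
      have : IntegrableOn (fun x => w x) (Ioo 0 1) := (Lp.memLp w).integrable (by norm_num)
      exact (this.mono_set (ordConnected_Ioo.uIcc_subset hy hx)).intervalIntegrable
    have e : ∫ z in y..x, (w - w') z = ∫ z in y..x, (w z - w' z) := by
      apply intervalIntegral.integral_congr_ae
      have := Lp.coeFn_sub w w'
      unfold μ01 at this
      have := (ae_restrict_iff' measurableSet_Ioo).1 this
      filter_upwards [this] with z hz hz2
      have := hz ((ordConnected_Ioo.uIcc_subset hy hx) (uIoc_subset_uIcc hz2))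
      exact this
    rw [e, intervalIntegral.integral_sub (hwi w) (hwi w'), ← hgw x hx y hy, ← hgw' x hx y hy]
    ring

lemma heav_pos {s h : ℝ} (hs : 0 < s) (hh : h ∈ heaviside s) : h = 1 := by
  unfold heaviside at hh
  rw [if_neg (not_lt.2 hs.le), if_neg hs.ne'] at hh
  exact hh

lemma heav_ge {s h : ℝ} (hh : h ∈ heaviside s) : -1 ≤ h := by
  unfold heaviside at hh
  split_ifs at hh with h1 h2
  · rw [mem_singleton_iff] at hh; rw [hh]
  · exact hh.1
  · rw [mem_singleton_iff] at hh; rw [hh]; norm_num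

lemma heav_le {s h : ℝ} (hh : h ∈ heaviside s) : h ≤ 1 := by
  unfold heaviside at hh
  split_ifs at hh with h1 h2
  · rw [mem_singleton_iff] at hh; rw [hh]; norm_num
  · exact hh.2
  · rw [mem_singleton_iff] at hh; rw [hh]

lemma frac_split {x δ q G : ℝ} (hx : 0 < x) (hδ : 0 < δ) (hq : 0 ≤ q) (hG : 0 ≤ G) (h : q ≤ x * G) :
    q / x ≤ q / δ + (Iio δ).indicator (fun _ => G) x := by
  by_cases hd : x < δ
  · rw [indicator_of_mem (show x ∈ Iio δ from hd)]
    have : q / x ≤ G := by rw [div_le_iff₀ hx]; linarith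
    have : 0 ≤ q / δ := by positivity
    linarith
  · rw [indicator_of_notMem (show x ∉ Iio δ from hd), add_zero]
    exact div_le_div_of_nonneg_left hq hδ (not_lt.1 hd)

lemma frac_split' {x δ q G : ℝ} (hx : x < 1) (hδ : 0 < δ) (hq : 0 ≤ q) (hG : 0 ≤ G)
    (h : q ≤ (1 - x) * G) :
    q / (1 - x) ≤ q / δ + (Ioi (1 - δ)).indicator (fun _ => G) x := by
  have hx' : 0 < 1 - x := by linarith
  by_cases hd : 1 - δ < x
  · rw [indicator_of_mem (show x ∈ Ioi (1 - δ) from hd)]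
    have : q / (1 - x) ≤ G := by rw [div_le_iff₀ hx']; linarith
    have : 0 ≤ q / δ := by positivity
    linarith
  · rw [indicator_of_notMem (show x ∉ Ioi (1 - δ) from hd), add_zero]
    exact div_le_div_of_nonneg_left hq hδ (by linarith)

lemma point_ineq {x δ c G a w h1 h2 bt ωt b1 ω1 : ℝ} (hx : x ∈ Ioo (0:ℝ) 1) (hδ : 0 < δ) (hc : 0 < c)
    (hG : 0 ≤ G) (ha : c * (x * (1 - x)) ≤ a) (hh1 : h1 ∈ heaviside a) (hh2 : h2 ∈ heaviside w)
    (hb : 0 ≤ bt) (hb1 : bt ≤ b1) (hω1 : ωt ≤ ω1)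
    (g1 : (a - w) ^ 2 ≤ x * G) (g2 : (a - w) ^ 2 ≤ (1 - x) * G) :
    (a - w) * ((bt * h1 + ωt * a) - (bt * h2 + ωt * w)) ≤ (ω1 + 2 * (2 * b1 / c) / δ) * (a - w) ^ 2
      + (2 * b1 / c) * ((Iio δ).indicator (fun _ => G) x + (Ioi (1 - δ)).indicator (fun _ => G) x) := by
  have hx0 := hx.1
  have hx1 : 0 < 1 - x := by linarith [hx.2]
  have hq : 0 < c * (x * (1 - x)) := by positivity
  have e1 := heav_pos (hq.trans_le ha) hh1
  subst e1
  have hz2 : 0 ≤ (a - w) ^ 2 := sq_nonneg _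
  have s1 := frac_split hx0 hδ hz2 hG g1
  have s2 := frac_split' hx.2 hδ hz2 hG g2
  have hK : 0 ≤ 2 * b1 / c := by have := hb.trans hb1; positivity
  have key : bt * (1 - h2) * (a - w) ≤ (2 * b1 / c) * ((a - w) ^ 2 / x + (a - w) ^ 2 / (1 - x)) := by
    rcases lt_or_ge 0 w with hw | hw
    · rw [heav_pos hw hh2]; simp only [sub_self, mul_zero, zero_mul]
      positivity
    · have l1 := heav_ge hh2
      have l2 := heav_le hh2
      have hz : c * (x * (1 - x)) ≤ a - w := by linarith
      have hz0 : 0 < a - w := by linarith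
      have m1 : bt * (1 - h2) * (a - w) ≤ 2 * b1 * (a - w) := by
        apply mul_le_mul_of_nonneg_right _ hz0.le
        nlinarith
      refine m1.trans ?_
      have e : (2 * b1 / c) * ((a - w) ^ 2 / x + (a - w) ^ 2 / (1 - x)) =
          2 * b1 * (a - w) * ((a - w) / (c * (x * (1 - x)))) := by
        field_simp; ring
      rw [e]
      apply le_mul_of_one_le_right
      · have := hb.trans hb1; positivity
      · rwa [one_le_div hq]
  have m2 : ωt * (a - w) ^ 2 ≤ ω1 * (a - w) ^ 2 := mul_le_mul_of_nonneg_right hω1 hz2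
  have m3 := mul_le_mul_of_nonneg_left (add_le_add s1 s2) hK
  have e2 : (ω1 + 2 * (2 * b1 / c) / δ) * (a - w) ^ 2 = ω1 * (a - w) ^ 2 +
    (2 * b1 / c) * ((a - w) ^ 2 / δ + (a - w) ^ 2 / δ) := by ring
  rw [e2]
  nlinarith

lemma mu_lt {δ : ℝ} (hδ : 0 ≤ δ) : μ01.real (Iio δ) ≤ δ := by
  unfold μ01
  rw [measureReal_restrict_apply measurableSet_Iio]
  have : volume.real (Iio δ ∩ Ioo (0:ℝ) 1) ≤ volume.real (Ioo 0 δ) :=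
    measureReal_mono (fun x hx => ⟨hx.2.1, hx.1⟩) (by simp)
  simpa [hδ] using this

lemma mu_gt {δ : ℝ} (hδ : 0 ≤ δ) : μ01.real (Ioi (1 - δ)) ≤ δ := by
  unfold μ01
  rw [measureReal_restrict_apply measurableSet_Ioi]
  have : volume.real (Ioi (1 - δ) ∩ Ioo (0:ℝ) 1) ≤ volume.real (Ioo (1 - δ) 1) :=
    measureReal_mono (fun x hx => ⟨hx.1, hx.2.2⟩) (by simp)
  simpa [hδ] using this

lemma spatial {c bt ωt b1 ω1 : ℝ} (hc : 0 < c) (hb : 0 ≤ bt) (hb1 : bt ≤ b1) (hω1 : ωt ≤ ω1)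
    {u w r ρ uxx wxx : Hsp} (hpos : ∀ᵐ x ∂μ01, c * (x * (1 - x)) ≤ u x)
    (hu : ∀ᵐ x ∂μ01, ∃ h ∈ heaviside (u x), r x = bt * h + ωt * u x)
    (hw : ∀ᵐ x ∂μ01, ∃ h ∈ heaviside (w x), ρ x = bt * h + ωt * w x)
    (hdu : InDomainA u uxx) (hdw : InDomainA w wxx) :
    inner ℝ (u - w) ((r + uxx) - (ρ + wxx)) ≤
      (ω1 + 2 * (2 * b1 / c) / (1 / (2 * (2 * b1 / c) + 1))) * ‖u - w‖ ^ 2 := by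
  obtain ⟨G, hG, hin, hgx⟩ := dom_lemma (dom_sub hdu hdw)
  have hK : 0 ≤ 2 * b1 / c := by have := hb.trans hb1; positivity
  set K := 2 * b1 / c with hKd
  set δ := 1 / (2 * K + 1) with hδd
  have hδ : 0 < δ := by positivity
  rw [show (r + uxx) - (ρ + wxx) = (r - ρ) + (uxx - wxx) by abel, inner_add_right, hin]
  have hmain : inner ℝ (u - w) (r - ρ) ≤ (ω1 + 2 * K / δ) * ‖u - w‖ ^ 2 + K * (δ * G + δ * G) := by
    rw [← real_inner_self_eq_norm_sq, L2.inner_def, L2.inner_def]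
    have i1 : Integrable (fun x => inner ℝ ((u - w : Hsp) x) ((r - ρ : Hsp) x)) μ01 :=
      L2.integrable_inner _ _
    have i2 : Integrable (fun x => inner ℝ ((u - w : Hsp) x) ((u - w : Hsp) x)) μ01 :=
      L2.integrable_inner _ _
    have i3 : Integrable (fun x => (Iio δ).indicator (fun _ => G) x) μ01 :=
      (integrable_const G).indicator measurableSet_Iio
    have i4 : Integrable (fun x => (Ioi (1 - δ)).indicator (fun _ => G) x) μ01 :=
      (integrable_const G).indicator measurableSet_Ioi
    have i34 : Integrable (fun x => K * ((Iio δ).indicator (fun _ => G) x +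
        (Ioi (1 - δ)).indicator (fun _ => G) x)) μ01 := (i3.add i4).const_mul _
    have i2a : Integrable (fun x => (ω1 + 2 * K / δ) *
        inner ℝ ((u - w : Hsp) x) ((u - w : Hsp) x)) μ01 := i2.const_mul _
    calc ∫ x, inner ℝ ((u - w : Hsp) x) ((r - ρ : Hsp) x) ∂μ01
        ≤ ∫ x, ((ω1 + 2 * K / δ) * inner ℝ ((u - w : Hsp) x) ((u - w : Hsp) x) +
          K * ((Iio δ).indicator (fun _ => G) x + (Ioi (1 - δ)).indicator (fun _ => G) x)) ∂μ01 := by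
          apply integral_mono_ae i1 (i2a.add i34)
          filter_upwards [hpos, hu, hw, hgx, Lp.coeFn_sub u w, Lp.coeFn_sub r ρ,
            (ae_restrict_mem measurableSet_Ioo : ∀ᵐ x ∂μ01, x ∈ Ioo (0:ℝ) 1)]
            with x h1 h2 h3 h4 h5 h6 h7
          obtain ⟨a1, ha1, hr⟩ := h2
          obtain ⟨a2, ha2, hρ⟩ := h3
          simp only [Pi.sub_apply] at h5 h6
          rw [h5] at h4
          rw [h5, h6, hr, hρ]
          have := point_ineq h7 hδ hc hG h1 ha1 ha2 hb hb1 hω1 h4.1 h4.2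
          simp only [RCLike.inner_apply, conj_trivial] at this ⊢
          rw [← hKd] at this
          simp only [Pi.add_apply]
          rw [h5]
          linarith
      _ = (ω1 + 2 * K / δ) * (∫ x, inner ℝ ((u - w : Hsp) x) ((u - w : Hsp) x) ∂μ01) +
          K * (μ01.real (Iio δ) * G + μ01.real (Ioi (1 - δ)) * G) := by
          rw [integral_add i2a i34, integral_const_mul,
            integral_const_mul, integral_add i3 i4, integral_indicator_const _ measurableSet_Iio,
            integral_indicator_const _ measurableSet_Ioi]
          rfl
      _ ≤ _ := by
          have m1 := mu_lt hδ.le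
          have m2 := mu_gt hδ.le
          gcongr
  have : K * (δ * G + δ * G) ≤ G := by
    have e : K * (δ * G + δ * G) = (2 * K) * δ * G := by ring
    have : (2 * K) * δ ≤ 1 := by
      rw [hδd, mul_one_div, div_le_one (by positivity)]; linarith
    rw [e]; nlinarith
  linarith

lemma uniq {b ω : ℝ → ℝ} {b0 b1 ω0 ω1 τ : ℝ} (hC : Cond1 b ω b0 b1 ω0 ω1) {u w : ℝ → Hsp}
    (hu : IsStrongSolution b ω τ u) (hw : IsStrongSolution b ω τ w) (h0 : w τ = u τ) {T c : ℝ} (hc : 0 < c)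
    (hpos : ∀ t ∈ Ioo τ T, ∀ᵐ x ∂μ01, c * (x * (1 - x)) ≤ u t x) :
    ∀ t ∈ Icc τ T, w t = u t := by
  obtain ⟨r, u', uxx, hu⟩ := hu
  obtain ⟨ρ, w', wxx, hw⟩ := hw
  have := gron (z := fun t => u t - w t) (z' := fun t => u' t - w' t) (τ := τ) (T := T)
    (C := (ω1 + 2 * (2 * b1 / c) / (1 / (2 * (2 * b1 / c) + 1)))) (hu.cont.sub hw.cont) (by simp [h0])
    (fun T1 T2 h1 h2 => by
      obtain ⟨a1, a2⟩ := hu.fund T1 T2 h1 h2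
      obtain ⟨c1, c2⟩ := hw.fund T1 T2 h1 h2
      refine ⟨a1.sub c1, fun t ht => ?_⟩
      have hsub : uIcc T1 t ⊆ uIcc T1 T2 := uIcc_subset_uIcc_left (by
        rw [uIcc_of_le h2.le]; exact ht)
      rw [intervalIntegral.integral_sub (a1.mono_set hsub) (c1.mono_set hsub)]
      rw [a2 t ht, c2 t ht]; abel)
    (by
      have hs : Ioo τ T ⊆ Ioi τ := fun x hx => hx.1
      filter_upwards [ae_restrict_of_ae_restrict_of_subset hs hu.sel,
        ae_restrict_of_ae_restrict_of_subset hs hw.sel, ae_restrict_of_ae_restrict_of_subset hs hu.dom,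
        ae_restrict_of_ae_restrict_of_subset hs hw.dom, ae_restrict_of_ae_restrict_of_subset hs hu.eq,
        ae_restrict_of_ae_restrict_of_subset hs hw.eq, ae_restrict_mem measurableSet_Ioo]
        with t a1 a2 a3 a4 a5 a6 a7
      rw [a5, a6]
      exact spatial hc (hC.b0pos.le.trans (hC.blb t)) (hC.bub t) (hC.ωub t) (hpos t a7) a1 a2 a3 a4)
  intro t ht
  have := this t ht
  change u t - w t = 0 at this
  exact (sub_eq_zero.1 this).symm

def IB (T1 T2 : ℝ) (R : ℕ → ℝ → ℝ) : Prop :=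
  (∀ n, L2loc (R n)) ∧ ∃ C, ∀ n, ∫ t in T1..T2, R n t ^ 2 ≤ C / kk n ^ 2

lemma IB.add {T1 T2 : ℝ} (hT : T1 ≤ T2) {R S : ℕ → ℝ → ℝ} (hR : IB T1 T2 R) (hS : IB T1 T2 S) :
    IB T1 T2 (fun n t => R n t + S n t) := by
  refine ⟨fun n => (hR.1 n).add (hS.1 n), ?_⟩
  obtain ⟨C, hC⟩ := hR.2
  obtain ⟨D, hD⟩ := hS.2
  refine ⟨2 * C + 2 * D, fun n => ?_⟩
  calc ∫ t in T1..T2, (R n t + S n t) ^ 2 ≤ ∫ t in T1..T2, (2 * R n t ^ 2 + 2 * S n t ^ 2) := by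
        apply intervalIntegral.integral_mono_on hT (((hR.1 n).add (hS.1 n)).intInt_sq _ _)
          ((((hR.1 n).intInt_sq _ _).const_mul 2).add (((hS.1 n).intInt_sq _ _).const_mul 2))
        intro t _
        nlinarith [sq_nonneg (R n t - S n t)]
    _ = 2 * (∫ t in T1..T2, R n t ^ 2) + 2 * ∫ t in T1..T2, S n t ^ 2 := by
        rw [intervalIntegral.integral_add (((hR.1 n).intInt_sq _ _).const_mul 2)
          (((hS.1 n).intInt_sq _ _).const_mul 2), intervalIntegral.integral_const_mul,
          intervalIntegral.integral_const_mul]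
    _ ≤ 2 * (C / kk n ^ 2) + 2 * (D / kk n ^ 2) := by
        have := hC n; have := hD n; linarith
    _ = _ := by ring

lemma IB.cl {T1 T2 : ℝ} (hT : T1 ≤ T2) {c : ℕ → ℝ → ℝ} {f : ℝ → ℝ} (hf : L2loc f)
    (hcc : ∀ n, Continuous (c n)) (hc : ∃ C, ∀ n t, T1 ≤ t → t ≤ T2 → |c n t| ≤ C / kk n ^ 1) :
    IB T1 T2 (fun n t => c n t * f t) := by
  refine ⟨fun n => hf.mul_cont (hcc n), ?_⟩
  obtain ⟨C, hC⟩ := hc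
  refine ⟨C ^ 2 * ∫ t in T1..T2, f t ^ 2, fun n => ?_⟩
  calc ∫ t in T1..T2, (c n t * f t) ^ 2 ≤ ∫ t in T1..T2, (C / kk n ^ 1) ^ 2 * f t ^ 2 := by
        apply intervalIntegral.integral_mono_on hT ((hf.mul_cont (hcc n)).intInt_sq _ _)
          ((hf.intInt_sq _ _).const_mul _)
        intro t ht
        rw [mul_pow]
        gcongr ?_ * _
        rw [← sq_abs]
        have := hC n t ht.1 ht.2
        gcongr
    _ = _ := by
        rw [intervalIntegral.integral_const_mul]; ring

lemma IB.bmul {T1 T2 : ℝ} (hT : T1 ≤ T2) {R : ℕ → ℝ → ℝ} (hR : IB T1 T2 R) {g : ℝ → ℝ}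
    (hg : Continuous g) : IB T1 T2 (fun n t => g t * R n t) := by
  refine ⟨fun n => (hR.1 n).mul_cont hg, ?_⟩
  obtain ⟨C, hC⟩ := hR.2
  obtain ⟨G, hG⟩ := (isCompact_Icc (a := T1) (b := T2)).exists_bound_of_continuousOn hg.continuousOn
  refine ⟨G ^ 2 * C, fun n => ?_⟩
  calc ∫ t in T1..T2, (g t * R n t) ^ 2 ≤ ∫ t in T1..T2, G ^ 2 * R n t ^ 2 := by
        apply intervalIntegral.integral_mono_on hT (((hR.1 n).mul_cont hg).intInt_sq _ _)
          (((hR.1 n).intInt_sq _ _).const_mul _)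
        intro t ht
        rw [mul_pow]
        gcongr ?_ * _
        rw [← sq_abs]
        have := hG t ht
        rw [Real.norm_eq_abs] at this
        gcongr
    _ = G ^ 2 * ∫ t in T1..T2, R n t ^ 2 := by
        rw [intervalIntegral.integral_const_mul]
    _ ≤ G ^ 2 * (C / kk n ^ 2) := by
        gcongr
        exact hC n
    _ = _ := by ring

structure Sol (b ω : ℝ → ℝ) (τ : ℝ) (e : ℝ → ℝ) (z : ℕ → ℝ → ℝ) : Prop where
  cb : Continuous b
  cω : Continuous ω
  aω : ACP ω (deriv ω)
  lω : L2loc (deriv ω)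
  le : L2loc e
  ab : ACP b (fun t => e t + ω t * b t)
  az : ∀ n, ACP (z n) (fun t => (ω t - kk n ^ 2) * z n t - pp n * e t)
  z4 : LB τ 4 z
  z0 : ∀ T, ∃ M : ℕ → ℝ, Summable M ∧ ∀ n t, τ ≤ t → t ≤ T → |z n t| ≤ M n
  zi : ∀ ε > (0:ℝ), ∀ T, τ + ε ≤ T →
    ∃ C, ∀ n, ∫ t in (τ + ε)..T, (kk n ^ 4 * z n t) ^ 2 ≤ C / kk n ^ 2

lemma exists_sol {b ω : ℝ → ℝ} (hb : Continuous b) (hω : Continuous ω) (wb : Wkloc 1 b)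
    (wω : Wkloc 1 ω) (τ : ℝ) {a : ℕ → ℝ} (ha : Summable (fun n => |a n|)) :
    ∃ e z, Sol b ω τ e z ∧ ∀ n, z n τ = a n := by
  obtain ⟨ab, lb⟩ := wk_acp hb wb
  obtain ⟨aω, lω⟩ := wk_acp hω wω
  set E : ℝ → ℝ := fun t => Real.exp (∫ s in τ..t, ω s) with hE
  have hEd : ∀ t, HasDerivAt E (ω t * E t) t := by
    intro t
    have := (intervalIntegral.integral_hasDerivAt_right (hω.intervalIntegrable τ t)
      (hω.stronglyMeasurableAtFilter _ _) hω.continuousAt).exp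
    rw [mul_comm] at this
    exact this
  have hEc : Continuous E := continuous_iff_continuousAt.2 fun t => (hEd t).continuousAt
  have hEp : ∀ t, 0 < E t := fun t => Real.exp_pos _
  have hEi : Continuous (fun t => (E t)⁻¹) := hEc.inv₀ fun t => (hEp t).ne'
  have aE : ACP E (fun t => ω t * E t) := ACP.of_deriv hEd (hω.mul hEc)
  have le : L2loc (fun t => deriv b t + (- (ω t * b t))) := lb.add (L2loc.of_cont (by fun_prop))
  have ld : L2loc (fun t => (E t)⁻¹ * (deriv b t + (- (ω t * b t)))) := le.mul_cont hEi
  set d := (fun t => (E t)⁻¹ * (deriv b t + (- (ω t * b t)))) with hd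
  have hA : ∀ n, |a n| ≤ ∑' n, |a n| := fun n => ha.le_tsum n fun _ _ => abs_nonneg _
  refine ⟨_, fun n t => E t * yy τ a pp d n t, ⟨hb, hω, aω, lω, le, ?_, ?_, ?_, ?_, ?_⟩, ?_⟩
  · exact ab.congr (fun _ => rfl) (fun x => by ring)
  · intro n
    refine (aE.mul (yy_acp (τ := τ) (a := a) (p := pp) ld n)).congr (fun _ => rfl) fun t => ?_
    have : E t * d t = deriv b t + (- (ω t * b t)) := by
      rw [hd]; field_simp [(hEp t).ne']
    rw [← this]; ring
  · exact (yy_LB ld pp_bd hA).cmul hEc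
  · intro T
    obtain ⟨M, hM, h⟩ := yy_bound0 (τ := τ) ld pp_bd ha T
    obtain ⟨G, hG⟩ := (isCompact_Icc (a := τ) (b := T)).exists_bound_of_continuousOn hEc.continuousOn
    refine ⟨fun n => |G| * M n, hM.mul_left _, fun n t h1 h2 => ?_⟩
    rw [abs_mul]
    exact mul_le_mul ((hG t ⟨h1, h2⟩).trans (le_abs_self _)) (h n t h1 h2) (abs_nonneg _) (abs_nonneg _)
  · intro ε hε T hT
    have h1 : IB (τ + ε) T (fun n t => kk n ^ 4 * yy τ a pp d n t) :=
      ⟨fun n => L2loc.of_cont (continuous_const.mul (yy_acp ld n).continuous), yy_int ld pp_bd hA hε hT⟩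
    obtain ⟨C, hC⟩ := (h1.bmul hT hEc).2
    refine ⟨C, fun n => ?_⟩
    refine le_of_eq_of_le (intervalIntegral.integral_congr fun t _ => ?_) (hC n)
    ring
  · intro n
    simp [hE, yy, ymode_tau]

namespace Sol

variable {b ω e : ℝ → ℝ} {τ : ℝ} {z : ℕ → ℝ → ℝ}

def U (b : ℝ → ℝ) (z : ℕ → ℝ → ℝ) (n : ℕ) (t : ℝ) : ℝ := b t * pp n + z n t
def D (b ω : ℝ → ℝ) (z : ℕ → ℝ → ℝ) (n : ℕ) (t : ℝ) : ℝ := ω t * U b z n t + -(kk n ^ 2 * z n t)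
def R (b ω e : ℝ → ℝ) (z : ℕ → ℝ → ℝ) (n : ℕ) (t : ℝ) : ℝ :=
  U b z n t * deriv ω t + (ω t * (D b ω z n t + -(kk n ^ 2 * z n t)) + (kk n ^ 4 * z n t +
    (kk n ^ 2 * pp n) * e t))

lemma zc (h : Sol b ω τ e z) (n : ℕ) : Continuous (z n) := (h.az n).continuous
lemma Uc (h : Sol b ω τ e z) (n : ℕ) : Continuous (U b z n) :=
  (h.cb.mul continuous_const).add (h.zc n)
lemma Dc (h : Sol b ω τ e z) (n : ℕ) : Continuous (D b ω z n) :=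
  (h.cω.mul (h.Uc n)).add (continuous_const.mul (h.zc n)).neg

lemma LBneg {j : ℕ} {c : ℕ → ℝ → ℝ} (h : LB τ j c) : LB τ j (fun n t => - c n t) := by
  simpa [LB] using h

lemma UACP (h : Sol b ω τ e z) (n : ℕ) : ACP (U b z n) (D b ω z n) := by
  refine ((h.ab.const_mul (pp n)).add (h.az n)).congr (fun x => by simp [U]; ring)
    (fun x => by simp only [D, U]; ring)

lemma Ud (h : Sol b ω τ e z) (n : ℕ) (t : ℝ) : HasDerivAt (U b z n) (D b ω z n t) t :=
  (h.UACP n).hasDerivAt (h.Dc n) t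

lemma DACP (h : Sol b ω τ e z) (n : ℕ) : ACP (D b ω z n) (R b ω e z n) := by
  refine ((h.aω.mul (h.UACP n)).add ((h.az n).const_mul (-(kk n ^ 2)))).congr
    (fun x => by simp [D]) (fun x => by simp only [R]; ring)

lemma ULB (h : Sol b ω τ e z) : LB τ 3 (U b z) :=
  (((LB.const pp_bd).cmul h.cb)).add (h.z4.mono (by norm_num))

lemma z2 (h : Sol b ω τ e z) : LB τ 2 (fun n t => kk n ^ 2 * z n t) := LB.kmul 2 h.z4

lemma DLB (h : Sol b ω τ e z) : LB τ 2 (D b ω z) :=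
  ((h.ULB.mono (by norm_num)).cmul h.cω).add (LBneg h.z2)

lemma RIB (h : Sol b ω τ e z) {ε T : ℝ} (hε : 0 < ε) (hT : τ + ε ≤ T) : IB (τ + ε) T (R b ω e z) := by
  unfold R
  refine IB.add hT (IB.cl hT h.lω h.Uc ?_) (IB.add hT ?_ (IB.add hT ?_ (IB.cl hT h.le ?_ ?_)))
  · exact (h.ULB.mono (by norm_num : 1 ≤ 3)) ε hε T
  · have hcc : ∀ n, Continuous fun t => D b ω z n t + -(kk n ^ 2 * z n t) :=
      fun n => (h.Dc n).add (continuous_const.mul (h.zc n)).neg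
    have : LB τ 1 (fun n t => D b ω z n t + -(kk n ^ 2 * z n t)) :=
      (h.DLB.add (LBneg h.z2)).mono (by norm_num)
    exact IB.bmul hT ⟨fun n => L2loc.of_cont (hcc n), this.int_sq hcc hε hT⟩ h.cω
  · exact ⟨fun n => L2loc.of_cont (continuous_const.mul (h.zc n)), h.zi ε hε T hT⟩
  · exact fun n => continuous_const
  · refine ⟨4, fun n t _ _ => ?_⟩
    have hk := kk_pos n
    rw [abs_mul, abs_of_pos (by positivity : 0 < kk n ^ 2)]
    calc kk n ^ 2 * |pp n| ≤ kk n ^ 2 * (4 / kk n ^ 3) := by gcongr; exact pp_bd n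
      _ = _ := by field_simp

lemma U0 (h : Sol b ω τ e z) (T : ℝ) :
    ∃ M : ℕ → ℝ, Summable M ∧ ∀ n t, τ ≤ t → t ≤ T → |U b z n t| ≤ M n := by
  obtain ⟨M, hM, h0⟩ := h.z0 T
  obtain ⟨G, hG⟩ := (isCompact_Icc (a := τ) (b := T)).exists_bound_of_continuousOn h.cb.continuousOn
  refine ⟨fun n => |G| * |pp n| + M n, (pp_summ.mul_left _).add hM, fun n t h1 h2 => ?_⟩
  refine (abs_add_le _ _).trans (add_le_add ?_ (h0 n t h1 h2))
  rw [abs_mul]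
  exact mul_le_mul_of_nonneg_right ((hG t ⟨h1, h2⟩).trans (le_abs_self _)) (abs_nonneg _)

end Sol

lemma LB.summ {τ : ℝ} {c : ℕ → ℝ → ℝ} (hc : LB τ 2 c) {t : ℝ} (ht : τ < t) :
    Summable (fun n => |c n t|) := by
  obtain ⟨C, hC⟩ := hc (t - τ) (by linarith) t
  refine Summable.of_nonneg_of_le (fun _ => abs_nonneg _) (fun n => hC n t (by linarith) le_rfl) ?_
  simpa [div_eq_mul_inv] using (summ_kk (le_refl 2)).mul_left C

lemma LB.summ_sq {τ : ℝ} {c : ℕ → ℝ → ℝ} (hc : LB τ 1 c) {t : ℝ} (ht : τ < t) :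
    Summable (fun n => c n t ^ 2) := by
  obtain ⟨C, hC⟩ := hc (t - τ) (by linarith) t
  refine Summable.of_nonneg_of_le (fun _ => sq_nonneg _) (fun n => ?_) (kk_sq_summ C (le_refl 1))
  rw [← sq_abs]
  have := hC n t (by linarith) le_rfl
  gcongr

lemma ser_cont0 {c f : ℕ → ℝ → ℝ} (hf : ∀ n, Continuous (f n)) (hf1 : ∀ n x, |f n x| ≤ 1)
    (hcc : ∀ n, Continuous (c n)) {M : ℕ → ℝ} (hM : Summable M) {S : Set ℝ}
    (h : ∀ n, ∀ t ∈ S, |c n t| ≤ M n) :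
    ContinuousOn (fun p : ℝ × ℝ => ∑' n, c n p.1 * f n p.2) (S ×ˢ univ) := by
  refine continuousOn_tsum (u := M) (fun n => ?_) hM ?_
  · exact (((hcc n).comp continuous_fst).mul ((hf n).comp continuous_snd)).continuousOn
  · rintro n ⟨t, x⟩ ⟨ht, _⟩
    rw [Real.norm_eq_abs, abs_mul]
    have := mul_le_mul (h n t ht) (hf1 n x) (abs_nonneg _) ((abs_nonneg _).trans (h n t ht))
    simpa using this

lemma ser_cont {τ : ℝ} {c f : ℕ → ℝ → ℝ} (hf : ∀ n, Continuous (f n)) (hf1 : ∀ n x, |f n x| ≤ 1)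
    (hcc : ∀ n, Continuous (c n)) (hc : LB τ 2 c) :
    ContinuousOn (fun p : ℝ × ℝ => ∑' n, c n p.1 * f n p.2) (Ioi τ ×ˢ univ) := by
  rintro ⟨t, x⟩ ⟨ht, _⟩
  have ht : τ < t := ht
  obtain ⟨C, hC⟩ := hc ((t - τ) / 2) (by linarith) (t + 1)
  have h1 := ser_cont0 hf hf1 hcc (M := fun n => C / kk n ^ 2) (S := Ioo (τ + (t - τ) / 2) (t + 1))
    (by simpa [div_eq_mul_inv] using (summ_kk (le_refl 2)).mul_left C)
    (fun n s hs => hC n s hs.1.le hs.2.le)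
  refine (h1.continuousAt ?_).continuousWithinAt
  refine (isOpen_Ioo.prod isOpen_univ).mem_nhds ⟨⟨?_, ?_⟩, mem_univ _⟩ <;> simp <;> linarith

lemma ser_t {τ : ℝ} {c c' : ℕ → ℝ → ℝ} (f : ℕ → ℝ) (hf : ∀ n, |f n| ≤ 1)
    (hc : LB τ 2 c) (hc' : LB τ 2 c') (hd : ∀ n t, HasDerivAt (c n) (c' n t) t) {t : ℝ} (ht : τ < t) :
    HasDerivAt (fun s => ∑' n, c n s * f n) (∑' n, c' n t * f n) t := by
  obtain ⟨C, hC⟩ := hc' ((t - τ) / 2) (by linarith) (t + 1)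
  refine hasDerivAt_tsum_of_isPreconnected (u := fun n => C / kk n ^ 2) (t := Ioo (τ + (t - τ) / 2) (t + 1))
    (g := fun n s => c n s * f n) (g' := fun n s => c' n s * f n) (y₀ := t)
    (by simpa [div_eq_mul_inv] using (summ_kk (le_refl 2)).mul_left C) isOpen_Ioo isPreconnected_Ioo
    (fun n s _ => (hd n s).mul_const _) (fun n s hs => ?_) ?_ ?_ ?_
  · rw [Real.norm_eq_abs, abs_mul]
    have h0 := hC n s hs.1.le hs.2.le
    have := mul_le_mul h0 (hf n) (abs_nonneg _) ((abs_nonneg _).trans h0)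
    simpa using this
  · constructor <;> linarith
  · refine Summable.of_norm_bounded (hc.summ ht) fun n => ?_
    rw [Real.norm_eq_abs, abs_mul]
    exact mul_le_of_le_one_right (abs_nonneg _) (hf n)
  · constructor <;> linarith

lemma ser_sin {c c' : ℕ → ℝ} (hc' : ∀ n, c' n = kk n * c n) (h : Summable fun n => |c n|)
    (h' : Summable fun n => |c' n|) (x : ℝ) :
    HasDerivAt (fun x => ∑' n, c n * Real.sin (kk n * x)) (∑' n, c' n * Real.cos (kk n * x)) x := by
  refine hasDerivAt_tsum (u := fun n => |c' n|) (g := fun n x => c n * Real.sin (kk n * x))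
    (g' := fun n x => c' n * Real.cos (kk n * x)) (y₀ := 0) h' (fun n y => ?_) (fun n y => ?_) ?_ x
  · have := (((hasDerivAt_id y).const_mul (kk n)).sin).const_mul (c n)
    refine this.congr_deriv ?_
    simp [hc']; ring
  · rw [Real.norm_eq_abs, abs_mul]
    exact mul_le_of_le_one_right (abs_nonneg _) (Real.abs_cos_le_one _)
  · simp

lemma ser_cos {c c' : ℕ → ℝ} (hc' : ∀ n, c' n = kk n * c n) (h : Summable fun n => |c n|)
    (h' : Summable fun n => |c' n|) (x : ℝ) :
    HasDerivAt (fun x => ∑' n, c n * Real.cos (kk n * x)) (- ∑' n, c' n * Real.sin (kk n * x)) x := by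
  rw [← tsum_neg]
  refine hasDerivAt_tsum (u := fun n => |c' n|) (g := fun n x => c n * Real.cos (kk n * x))
    (g' := fun n x => -(c' n * Real.sin (kk n * x))) (y₀ := 0) h' (fun n y => ?_) (fun n y => ?_) ?_ x
  · have := (((hasDerivAt_id y).const_mul (kk n)).cos).const_mul (c n)
    refine this.congr_deriv ?_
    simp [hc']; ring
  · rw [Real.norm_eq_abs, abs_neg, abs_mul]
    exact mul_le_of_le_one_right (abs_nonneg _) (Real.abs_sin_le_one _)
  · simpa using h.of_abs

lemma summ_sin {c : ℕ → ℝ} (h : Summable fun n => |c n|) (x : ℝ) :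
    Summable fun n => c n * Real.sin (kk n * x) := by
  refine Summable.of_norm_bounded h fun n => ?_
  rw [Real.norm_eq_abs, abs_mul]
  exact mul_le_of_le_one_right (abs_nonneg _) (Real.abs_sin_le_one _)

namespace Sol

variable {b ω e : ℝ → ℝ} {τ : ℝ} {z : ℕ → ℝ → ℝ}

def S0 (z : ℕ → ℝ → ℝ) (t x : ℝ) : ℝ := ∑' n, z n t * Real.sin (kk n * x)
def S1 (z : ℕ → ℝ → ℝ) (t x : ℝ) : ℝ := ∑' n, (kk n ^ 1 * z n t) * Real.cos (kk n * x)
def S2 (z : ℕ → ℝ → ℝ) (t x : ℝ) : ℝ := ∑' n, (kk n ^ 2 * z n t) * Real.sin (kk n * x)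
def F (b : ℝ → ℝ) (z : ℕ → ℝ → ℝ) (t x : ℝ) : ℝ := b t * (x * (1 - x) / 2) + S0 z t x
def Fx (b : ℝ → ℝ) (z : ℕ → ℝ → ℝ) (t x : ℝ) : ℝ := b t * (1 / 2 - x) + S1 z t x
def Fxx (b : ℝ → ℝ) (z : ℕ → ℝ → ℝ) (t x : ℝ) : ℝ := - b t - S2 z t x
def Ft (b ω : ℝ → ℝ) (z : ℕ → ℝ → ℝ) (t x : ℝ) : ℝ := ω t * F b z t x - S2 z t x

lemma z1 (h : Sol b ω τ e z) : LB τ 3 (fun n t => kk n ^ 1 * z n t) := LB.kmul 1 h.z4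
lemma z3 (h : Sol b ω τ e z) : LB τ 1 (fun n t => kk n ^ 3 * z n t) := LB.kmul 3 h.z4
lemma kzc (h : Sol b ω τ e z) (i n : ℕ) : Continuous (fun t => kk n ^ i * z n t) :=
  continuous_const.mul (h.zc n)

lemma s0 (h : Sol b ω τ e z) {t : ℝ} (ht : τ ≤ t) : Summable fun n => |z n t| := by
  obtain ⟨M, hM, h0⟩ := h.z0 t
  exact Summable.of_nonneg_of_le (fun _ => abs_nonneg _) (fun n => h0 n t ht le_rfl) hM

lemma sU (h : Sol b ω τ e z) {t : ℝ} (ht : τ ≤ t) : Summable fun n => |U b z n t| := by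
  obtain ⟨M, hM, h0⟩ := h.U0 t
  exact Summable.of_nonneg_of_le (fun _ => abs_nonneg _) (fun n => h0 n t ht le_rfl) hM

lemma F_ser (h : Sol b ω τ e z) {t : ℝ} (ht : τ ≤ t) {x : ℝ} (hx : x ∈ Icc (0:ℝ) 1) :
    F b z t x = ∑' n, U b z n t * Real.sin (kk n * x) := by
  rw [F, phi_series x hx, S0, ← tsum_mul_left, ← Summable.tsum_add]
  · exact tsum_congr fun n => by simp only [U]; ring
  · exact (summ_sin pp_summ x).mul_left _
  · exact summ_sin (h.s0 ht) x

lemma F_t (h : Sol b ω τ e z) {t : ℝ} (ht : τ < t) {x : ℝ} (hx : x ∈ Icc (0:ℝ) 1) :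
    HasDerivAt (fun s => F b z s x) (Ft b ω z t x) t := by
  have h1 := ser_t (fun n => Real.sin (kk n * x)) (fun n => Real.abs_sin_le_one _)
    (h.ULB.mono (by norm_num)) h.DLB h.Ud ht
  have h2 : (∑' n, D b ω z n t * Real.sin (kk n * x)) = Ft b ω z t x := by
    rw [Ft, h.F_ser ht.le hx, S2, ← tsum_mul_left, ← Summable.tsum_sub]
    · exact tsum_congr fun n => by simp only [D]; ring
    · exact (summ_sin (h.sU ht.le) x).mul_left _
    · exact summ_sin (h.z2.summ ht) x
  rw [h2] at h1
  refine h1.congr_of_eventuallyEq ?_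
  filter_upwards [Ioi_mem_nhds ht] with s hs
  exact h.F_ser (le_of_lt hs) hx

lemma F_x (h : Sol b ω τ e z) {t : ℝ} (ht : τ < t) (x : ℝ) :
    HasDerivAt (F b z t) (Fx b z t x) x := by
  have h1 := ser_sin (c := fun n => z n t) (c' := fun n => kk n ^ 1 * z n t) (fun n => by ring)
    (h.s0 ht.le) ((h.z1.mono (by norm_num : 2 ≤ 3)).summ ht) x
  have h2 : HasDerivAt (fun x : ℝ => b t * (x * (1 - x) / 2)) (b t * (1 / 2 - x)) x := by
    have := (((hasDerivAt_id x).mul ((hasDerivAt_id x).const_sub 1)).div_const 2).const_mul (b t)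
    refine this.congr_deriv ?_
    simp only [id]; ring
  exact h2.add h1

lemma F_xx (h : Sol b ω τ e z) {t : ℝ} (ht : τ < t) (x : ℝ) :
    HasDerivAt (Fx b z t) (Fxx b z t x) x := by
  have h1 := ser_cos (c := fun n => kk n ^ 1 * z n t) (c' := fun n => kk n ^ 2 * z n t) (fun n => by ring)
    ((h.z1.mono (by norm_num : 2 ≤ 3)).summ ht) (h.z2.summ ht) x
  have h2 : HasDerivAt (fun x : ℝ => b t * (1 / 2 - x)) (- b t) x := by
    have := ((hasDerivAt_id x).const_sub (1/2)).const_mul (b t)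
    refine this.congr_deriv ?_
    simp
  refine (h2.add h1).congr_deriv ?_
  rw [Fxx, S2]; ring

lemma S2c (h : Sol b ω τ e z) : ContinuousOn (fun p : ℝ × ℝ => S2 z p.1 p.2) (Ioi τ ×ˢ univ) :=
  ser_cont (f := fun n x => Real.sin (kk n * x)) (fun n => by fun_prop)
    (fun n x => Real.abs_sin_le_one _) (h.kzc 2) h.z2

lemma FcI (h : Sol b ω τ e z) (T : ℝ) :
    ContinuousOn (fun p : ℝ × ℝ => F b z p.1 p.2) (Icc τ T ×ˢ univ) := by
  obtain ⟨M, hM, h0⟩ := h.z0 T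
  have h1 : ContinuousOn (fun p : ℝ × ℝ => S0 z p.1 p.2) (Icc τ T ×ˢ univ) :=
    ser_cont0 (f := fun n x => Real.sin (kk n * x)) (fun n => by fun_prop)
      (fun n x => Real.abs_sin_le_one _) h.zc hM fun n t ht => h0 n t ht.1 ht.2
  have h2 : Continuous (fun p : ℝ × ℝ => b p.1 * (p.2 * (1 - p.2) / 2)) := by
    have := h.cb; fun_prop
  exact h2.continuousOn.add h1

lemma Fco (h : Sol b ω τ e z) :
    ContinuousOn (fun p : ℝ × ℝ => F b z p.1 p.2) (Ioi τ ×ˢ univ) := by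
  have h1 : ContinuousOn (fun p : ℝ × ℝ => S0 z p.1 p.2) (Ioi τ ×ˢ univ) :=
    ser_cont (f := fun n x => Real.sin (kk n * x)) (fun n => by fun_prop)
      (fun n x => Real.abs_sin_le_one _) h.zc (h.z4.mono (by norm_num))
  have h2 : Continuous (fun p : ℝ × ℝ => b p.1 * (p.2 * (1 - p.2) / 2)) := by
    have := h.cb; fun_prop
  exact h2.continuousOn.add h1

lemma Ftc (h : Sol b ω τ e z) :
    ContinuousOn (fun p : ℝ × ℝ => Ft b ω z p.1 p.2) (Ioi τ ×ˢ univ) :=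
  ((h.cω.comp continuous_fst).continuousOn.mul h.Fco).sub h.S2c

lemma Fxxc (h : Sol b ω τ e z) :
    ContinuousOn (fun p : ℝ × ℝ => Fxx b z p.1 p.2) (Ioi τ ×ˢ univ) :=
  (h.cb.comp continuous_fst).neg.continuousOn.sub h.S2c

lemma Fc (h : Sol b ω τ e z) {t : ℝ} (ht : τ ≤ t) : Continuous (F b z t) := by
  have := h.cb
  have h2 : Continuous (fun x : ℝ => b t * (x * (1 - x) / 2)) := by fun_prop
  exact h2.add (series_cont (h.s0 ht))

def u (b : ℝ → ℝ) (z : ℕ → ℝ → ℝ) (t : ℝ) : Hsp := ∑' n, U b z n t • sb n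

lemma u_eq (h : Sol b ω τ e z) {t : ℝ} (ht : τ ≤ t) : u b z t = toH (F b z t) (h.Fc ht) := by
  rw [u, sb_tsum (h.sU ht)]
  exact toH_congr _ _ fun x hx => (h.F_ser ht ⟨hx.1.le, hx.2.le⟩).symm

lemma u_ae (h : Sol b ω τ e z) {t : ℝ} (ht : τ ≤ t) : ∀ᵐ x ∂μ01, F b z t x = u b z t x := by
  rw [h.u_eq ht]
  filter_upwards [toH_ae _ (h.Fc ht)] with x hx using hx.symm

lemma F_0 (t : ℝ) : F b z t 0 = 0 := by simp [F, S0]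
lemma F_1 (t : ℝ) : F b z t 1 = 0 := by simp [F, S0, sin_kk]

lemma classical (h : Sol b ω τ e z) : ClassicalUtUxx τ (u b z) := by
  refine ⟨F b z, Fx b z, Ft b ω z, Fxx b z, fun t ht => h.u_ae (le_of_lt ht),
    fun t ht x hx => h.F_t ht hx, fun t ht x _ => (h.F_x ht x).hasDerivWithinAt,
    fun t ht x _ => (h.F_xx ht x).hasDerivWithinAt, h.Ftc.mono ?_, h.Fxxc.mono ?_⟩ <;>
  exact prod_mono_right (subset_univ _)

end Sol

namespace Sol

variable {b ω e : ℝ → ℝ} {τ : ℝ} {z : ℕ → ℝ → ℝ}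

lemma lower (h : Sol b ω τ e z) (hb : ∀ t, 0 < b t) (hω : ∀ t, 0 ≤ ω t) {c : ℝ} (hc : 0 < c)
    (h0 : ∀ x ∈ Icc (0:ℝ) 1, c * Real.sin (Real.pi * x) ≤ F b z τ x) (T : ℝ) :
    ∃ c' > 0, ∀ t ∈ Icc τ T, ∀ x ∈ Icc (0:ℝ) 1, 2 * c' * (x * (1 - x)) ≤ F b z t x := by
  by_cases hT : τ ≤ T
  swap
  · exact ⟨1, one_pos, fun t ht => absurd (ht.1.trans ht.2) hT⟩
  set G : ℝ → ℝ := fun t => Real.exp (-∫ s in τ..t, ω s) with hG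
  have hGd : ∀ t, HasDerivAt G (-(ω t * G t)) t := by
    intro t
    have := (intervalIntegral.integral_hasDerivAt_right (h.cω.intervalIntegrable τ t)
      (h.cω.stronglyMeasurableAtFilter _ _) h.cω.continuousAt).neg.exp
    refine this.congr_deriv ?_
    change Real.exp (-∫ (x : ℝ) in τ..t, ω x) * -ω t = -(ω t * Real.exp (-∫ (x : ℝ) in τ..t, ω x))
    ring
  have hGc : Continuous G := continuous_iff_continuousAt.2 fun t => (hGd t).continuousAt
  have hGp : ∀ t, 0 < G t := fun t => Real.exp_pos _
  set K : ℝ → ℝ := fun t => c * Real.exp (-Real.pi ^ 2 * (t - τ)) with hK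
  have hKd : ∀ t, HasDerivAt K (-Real.pi ^ 2 * K t) t := by
    intro t
    have := ((((hasDerivAt_id t).sub_const τ).const_mul (-Real.pi ^ 2)).exp).const_mul c
    refine this.congr_deriv ?_
    simp only [hK, id]; ring
  have hKc : Continuous K := continuous_iff_continuousAt.2 fun t => (hKd t).continuousAt
  have hKp : ∀ t, 0 < K t := fun t => mul_pos hc (Real.exp_pos _)
  have key := maxp hT (P := fun t x => G t * F b z t x - K t * Real.sin (Real.pi * x))
    (Pt := fun t x => (-(ω t * G t) * F b z t x + G t * Ft b ω z t x) -
      (-Real.pi ^ 2 * K t) * Real.sin (Real.pi * x))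
    (Px := fun t x => G t * Fx b z t x - K t * (Real.pi * Real.cos (Real.pi * x)))
    (Pxx := fun t x => G t * Fxx b z t x - K t * (Real.pi * (-(Real.pi * Real.sin (Real.pi * x)))))
    ?_ ?_ ?_ ?_ ?_ ?_ ?_ ?_
  · refine ⟨K T, hKp T, fun t ht x hx => ?_⟩
    have h1 : 0 ≤ G t * F b z t x - K t * Real.sin (Real.pi * x) := key t ht x hx
    have h2 := sin_lower hx
    have h3 : 0 ≤ x * (1 - x) := mul_nonneg hx.1 (by linarith [hx.2])
    have h4 : K T ≤ K t := by
      simp only [hK]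
      have := ht.2
      refine mul_le_mul_of_nonneg_left (Real.exp_le_exp.2 ?_) hc.le
      nlinarith [sq_nonneg Real.pi]
    have h5 : G t ≤ 1 := by
      simp only [hG]
      rw [Real.exp_le_one_iff]
      have := intervalIntegral.integral_nonneg (μ := volume) ht.1 (fun s _ => hω s)
      linarith
    have h6 : K T * (2 * (x * (1 - x))) ≤ G t * F b z t x := by
      have a1 : K T * (2 * (x * (1 - x))) ≤ K t * (2 * (x * (1 - x))) := by gcongr
      have a2 : K t * (2 * (x * (1 - x))) ≤ K t * Real.sin (Real.pi * x) := by
        have := hKp t; gcongr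
      linarith
    have h7 : 0 ≤ G t * F b z t x := le_trans (by have := hKp T; positivity) h6
    have h8 : 0 ≤ F b z t x := nonneg_of_mul_nonneg_right h7 (hGp t)
    nlinarith
  · have := (h.FcI T).mono (prod_mono_right (subset_univ (Icc (0:ℝ) 1)))
    have hs : Continuous (fun p : ℝ × ℝ => K p.1 * Real.sin (Real.pi * p.2)) := by fun_prop
    exact ((hGc.comp continuous_fst).continuousOn.mul this).sub hs.continuousOn
  · intro x hx
    have := h0 x hx
    simp only [hG, hK]
    simp
    linarith
  · intro t _
    simp [F_0]
  · intro t _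
    simp [F_1]
  · intro t ht x hx
    exact ((hGd t).mul (h.F_t ht ⟨hx.1.le, hx.2.le⟩)).sub ((hKd t).mul_const _)
  · intro t ht x hx
    refine ((h.F_x ht x).const_mul _).sub (HasDerivAt.const_mul _ ?_)
    have := ((hasDerivAt_id x).const_mul Real.pi).sin
    refine this.congr_deriv ?_
    simp only [id]; ring
  · intro t ht x hx
    refine ((h.F_xx ht x).const_mul _).sub (HasDerivAt.const_mul _ (HasDerivAt.const_mul _ ?_))
    have := ((hasDerivAt_id x).const_mul Real.pi).cos
    refine this.congr_deriv ?_
    simp only [id]; ring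
  · intro t ht x hx
    have := mul_pos (hGp t) (hb t)
    simp only [Fxx, Ft]
    nlinarith

lemma posb (h : Sol b ω τ e z) {t c : ℝ} (ht : τ < t) (hc : 0 < c)
    (hl : ∀ x ∈ Icc (0:ℝ) 1, 2 * c * (x * (1 - x)) ≤ F b z t x) :
    PositiveWithBoundaryDerivs (u b z t) := by
  have hq : ∀ x : ℝ, HasDerivAt (fun x => F b z t x - 2 * c * (x * (1 - x)))
      (Fx b z t x - 2 * c * (1 - 2 * x)) x := by
    intro x
    refine (h.F_x ht x).sub (HasDerivAt.const_mul _ ?_)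
    have := (hasDerivAt_id x).mul ((hasDerivAt_id x).const_sub 1)
    refine this.congr_deriv ?_
    simp only [id]; ring
  refine ⟨F b z t, Fx b z t, (h.Fc ht.le).continuousOn, F_0 t, F_1 t, h.u_ae ht.le,
    fun x _ => (h.F_x ht x).hasDerivWithinAt,
    (continuous_iff_continuousAt.2 fun x => (h.F_xx ht x).continuousAt).continuousOn,
    fun x hx => ?_, ?_, ?_⟩
  · refine lt_of_lt_of_le ?_ (hl x ⟨hx.1.le, hx.2.le⟩)
    have := mul_pos hx.1 (sub_pos.2 hx.2)
    positivity
  · have := der_nonneg (hq 0).hasDerivWithinAt (by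
      filter_upwards [Ioo_mem_nhdsGT (zero_lt_one (α := ℝ))] with x hx
      simp only [F_0]
      have := hl x ⟨hx.1.le, hx.2.le⟩
      linarith)
    linarith
  · have := der_nonpos (hq 1).hasDerivWithinAt (by
      filter_upwards [Ioo_mem_nhdsLT (zero_lt_one (α := ℝ))] with x hx
      simp only [F_1]
      have := hl x ⟨hx.1.le, hx.2.le⟩
      linarith)
    linarith

def ut (b ω : ℝ → ℝ) (z : ℕ → ℝ → ℝ) (t : ℝ) : Hsp := ∑' n, D b ω z n t • sb n

lemma u_deriv (h : Sol b ω τ e z) {t : ℝ} (ht : τ < t) : HasDerivAt (u b z) (ut b ω z t) t :=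
  sb_orth.deriv (h.ULB.mono (by norm_num)) (h.DLB.mono (by norm_num)) h.Ud ht

lemma ut_cont (h : Sol b ω τ e z) : ContinuousOn (ut b ω z) (Ioi τ) :=
  sb_orth.cont (h.DLB.mono (by norm_num)) h.Dc

lemma u_cont (h : Sol b ω τ e z) : ContinuousOn (u b z) (Ici τ) := by
  intro t ht
  obtain ⟨M, hM, h0⟩ := h.U0 (t + 1)
  have ht : τ ≤ t := ht
  have hMn : ∀ n, 0 ≤ M n := fun n => (abs_nonneg _).trans (h0 n τ le_rfl (by linarith))
  have hM2 : Summable (fun n => M n ^ 2) := by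
    refine Summable.of_nonneg_of_le (fun _ => sq_nonneg _) (fun n => ?_) (hM.mul_left (∑' n, M n))
    rw [sq]
    exact mul_le_mul_of_nonneg_right (hM.le_tsum n fun _ _ => hMn _) (hMn n)
  have h1 := sb_orth.cont_on (c := U b z) (S := Icc τ (t + 1)) hM2 (fun n s hs => h0 n s hs.1 hs.2) h.Uc
  refine (h1 t ⟨ht, by linarith⟩).mono_of_mem_nhdsWithin ?_
  rw [mem_nhdsWithin]
  exact ⟨Iio (t + 1), isOpen_Iio, by simp, fun s hs => ⟨hs.2, le_of_lt hs.1⟩⟩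

lemma TimeCk_one {v v' : ℝ → Hsp} {S : Set ℝ} (hS : ∀ t ∈ S, HasDerivAt v (v' t) t)
    (hc : ContinuousOn v' S) : TimeCk 1 v S := by
  refine ⟨fun j => if j = 0 then v else v', rfl, fun j hj t ht => ?_, fun j hj => ?_⟩
  · obtain rfl : j = 0 := by omega
    simpa using hS t ht
  · by_cases hj0 : j = 0
    · simp only [hj0, if_true]
      exact fun t ht => (hS t ht).continuousAt.continuousWithinAt
    · simpa only [hj0, if_false] using hc

lemma TimeCk_zero {v : ℝ → Hsp} {S : Set ℝ} (hc : ContinuousOn v S) : TimeCk 0 v S :=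
  ⟨fun _ => v, rfl, fun j hj => absurd hj (by omega), fun _ _ => hc⟩

lemma kULB (h : Sol b ω τ e z) : LB τ 2 (fun n t => kk n * U b z n t) := by
  simpa using LB.kmul 1 h.ULB

lemma kDLB (h : Sol b ω τ e z) : LB τ 1 (fun n t => kk n * D b ω z n t) := by
  simpa using LB.kmul 1 h.DLB

lemma intoV (h : Sol b ω τ e z) : CkIntoV 1 (u b z) (Ioi τ) := by
  refine ⟨TimeCk_one (fun t ht => h.u_deriv ht) h.ut_cont,
    fun t => ∑' n, (kk n * U b z n t) • _root_.cb n, fun t ht => ?_, ?_⟩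
  · exact wd_sb_series ((h.ULB.mono (by norm_num : 1 ≤ 3)).summ_sq ht)
      ((h.kULB.mono (by norm_num : 1 ≤ 2)).summ_sq ht)
  · exact TimeCk_one (v' := fun t => ∑' n, (kk n * D b ω z n t) • _root_.cb n)
      (fun t ht => cb_orth.deriv (h.kULB.mono (by norm_num)) h.kDLB
        (fun n t => (h.Ud n t).const_mul _) ht)
      (cb_orth.cont h.kDLB fun n => continuous_const.mul (h.Dc n))

lemma chain (h : Sol b ω τ e z) : HasL2locTimeDerivChain 2 (u b z) τ := by
  refine ⟨fun j => if j = 0 then u b z else if j = 1 then ut b ω z else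
    fun t => ∑' n, R b ω e z n t • sb n, rfl, fun ε hε T hT => ?_⟩
  have h1 := sb_orth.weak hT h.UACP (fun n => L2loc.of_cont (h.Dc n))
    ((h.ULB.mono (by norm_num : 1 ≤ 3)) ε hε T)
    ((h.DLB.mono (by norm_num : 1 ≤ 2)).int_sq h.Dc hε hT.le)
  have h2 := sb_orth.weak hT h.DACP (h.RIB hε hT.le).1
    ((h.DLB.mono (by norm_num : 1 ≤ 2)) ε hε T) (h.RIB hε hT.le).2
  refine ⟨fun j hj => ?_, h2.2⟩
  interval_cases j
  · exact h1.1
  · exact h2.1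

def ph (i : ℕ) : ℝ → ℝ := match i with
  | 0 => fun x => x * (1 - x) / 2
  | 1 => fun x => 1 / 2 - x
  | 2 => fun _ => -1
  | _ => fun _ => 0

lemma ph_c (i : ℕ) : Continuous (ph i) := by
  match i with
  | 0 => simp only [ph]; fun_prop
  | 1 => simp only [ph]; fun_prop
  | 2 => simp only [ph]; fun_prop
  | (n + 3) => simp only [ph]; fun_prop

lemma ph_d (i : ℕ) : IsSpatialWeakDeriv (toH (ph i) (ph_c i)) (toH (ph (i + 1)) (ph_c (i + 1))) := by
  apply wd_classical
  intro x
  match i with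
  | 0 =>
    have := ((hasDerivAt_id x).mul ((hasDerivAt_id x).const_sub 1)).div_const 2
    refine this.congr_deriv ?_
    simp only [ph, id]; ring
  | 1 => exact (hasDerivAt_id x).const_sub (1/2)
  | 2 => exact hasDerivAt_const _ _
  | (n + 3) => exact hasDerivAt_const _ _

lemma u_split (h : Sol b ω τ e z) {t : ℝ} (ht : τ ≤ t) :
    u b z t = b t • toH (ph 0) (ph_c 0) + ∑' n, z n t • sb n := by
  rw [h.u_eq ht, sb_tsum (h.s0 ht), ← toH_smul, ← toH_add]
  rfl

lemma intoH3 (h : Sol b ω τ e z) : CjIntoHm 0 3 (u b z) (Ioi τ) := by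
  have k1 : LB τ 3 (fun n t => kk n * z n t) := by simpa using LB.kmul 1 h.z4
  have k2 : LB τ 2 (fun n t => kk n * (kk n * z n t)) := by simpa using LB.kmul 1 k1
  have k3 : LB τ 1 (fun n t => kk n * (kk n * (kk n * z n t))) := by simpa using LB.kmul 1 k2
  have c1 : ∀ n, Continuous (fun t => kk n * z n t) := fun n => continuous_const.mul (h.zc n)
  have c2 : ∀ n, Continuous (fun t => kk n * (kk n * z n t)) := fun n => continuous_const.mul (c1 n)
  have q0 := fun {t : ℝ} (ht : τ < t) => (h.z4.mono (by norm_num : 1 ≤ 4)).summ_sq ht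
  have q1 := fun {t : ℝ} (ht : τ < t) => (k1.mono (by norm_num : 1 ≤ 3)).summ_sq ht
  have q2 := fun {t : ℝ} (ht : τ < t) => (k2.mono (by norm_num : 1 ≤ 2)).summ_sq ht
  have q3 := fun {t : ℝ} (ht : τ < t) => k3.summ_sq ht
  refine ⟨fun i => if i = 0 then u b z else fun t => b t • toH (ph i) (ph_c i) +
    (if i = 1 then ∑' n, (kk n * z n t) • _root_.cb n else
      if i = 2 then ∑' n, (-(kk n * (kk n * z n t))) • sb n else
      ∑' n, (kk n * -(kk n * (kk n * z n t))) • _root_.cb n), rfl, fun i hi t ht => ?_, fun i hi => TimeCk_zero ?_⟩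
  · have ht : τ < t := ht
    interval_cases i
    · simp only [if_true]
      rw [h.u_split ht.le]
      exact wd_add (wd_smul _ (ph_d 0)) (wd_sb_series (q0 ht) (q1 ht))
    · exact wd_add (wd_smul _ (ph_d 1)) (wd_cb_series (q1 ht) (q2 ht))
    · refine wd_add (wd_smul _ (ph_d 2)) (wd_sb_series (c := fun n => -(kk n * (kk n * z n t))) ?_ ?_)
      · simpa using q2 ht
      · simpa using q3 ht
  · have hbc : ∀ i, ContinuousOn (fun t => b t • toH (ph i) (ph_c i)) (Ioi τ) := fun i =>
      (h.cb.smul continuous_const).continuousOn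
    interval_cases i
    · exact h.u_cont.mono Ioi_subset_Ici_self
    · exact (hbc 1).add (cb_orth.cont (k1.mono (by norm_num)) c1)
    · exact (hbc 2).add (sb_orth.cont (LBneg (k2.mono (by norm_num))) fun n => (c2 n).neg)
    · refine (hbc 3).add (cb_orth.cont (c := fun n t => kk n * -(kk n * (kk n * z n t))) ?_ fun n => ?_)
      · simpa [LB] using k3
      · exact continuous_const.mul (c2 n).neg

end Sol

namespace Sol

variable {b ω e : ℝ → ℝ} {τ : ℝ} {z : ℕ → ℝ → ℝ}

def rr (b ω : ℝ → ℝ) (z : ℕ → ℝ → ℝ) (t : ℝ) : Hsp :=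
  b t • toH (fun _ => 1) continuous_const + ω t • u b z t

lemma rr_ae (b ω : ℝ → ℝ) (z : ℕ → ℝ → ℝ) (t : ℝ) :
    ∀ᵐ x ∂μ01, rr b ω z t x = b t + ω t * u b z t x := by
  filter_upwards [Lp.coeFn_add (b t • toH (fun _ => 1) continuous_const) (ω t • u b z t),
    Lp.coeFn_smul (b t) (toH (fun _ => 1) continuous_const), Lp.coeFn_smul (ω t) (u b z t),
    toH_ae (fun _ => 1) continuous_const] with x h1 h2 h3 h4
  rw [rr, h1, Pi.add_apply, h2, h3, Pi.smul_apply, Pi.smul_apply, h4]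
  simp

lemma ut_ae (h : Sol b ω τ e z) {t : ℝ} (ht : τ < t) :
    ∀ᵐ x ∂μ01, ut b ω z t x = Ft b ω z t x := by
  rw [ut, sb_tsum (h.DLB.summ ht)]
  filter_upwards [toH_ae _ (series_cont (h.DLB.summ ht)),
    (ae_restrict_mem measurableSet_Ioo : ∀ᵐ x ∂μ01, x ∈ Ioo (0:ℝ) 1)] with x h1 hx
  rw [h1, Ft, h.F_ser ht.le ⟨hx.1.le, hx.2.le⟩, S2, ← tsum_mul_left, ← Summable.tsum_sub]
  · exact tsum_congr fun n => by simp only [D]; ring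
  · exact (summ_sin (h.sU ht.le) x).mul_left _
  · exact summ_sin (h.z2.summ ht) x

lemma dom (h : Sol b ω τ e z) {t : ℝ} (ht : τ < t) :
    InDomainA (u b z t) (ut b ω z t - rr b ω z t) := by
  refine ⟨F b z t, (h.Fc ht.le).continuousOn, F_0 t, F_1 t, h.u_ae ht.le, Fx b z t,
    fun x _ => h.F_x ht x, fun x hx y hy => ?_⟩
  have hc : Continuous (Fxx b z t) := by
    refine continuous_iff_continuousAt.2 fun x => ?_
    have h1 : ContinuousAt (fun p : ℝ × ℝ => Fxx b z p.1 p.2) (t, x) :=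
      h.Fxxc.continuousAt ((isOpen_Ioi.prod isOpen_univ).mem_nhds ⟨ht, mem_univ x⟩)
    exact ContinuousAt.comp (f := fun x : ℝ => (t, x)) h1 (by fun_prop)
  rw [← intervalIntegral.integral_eq_sub_of_hasDerivAt (fun s _ => h.F_xx ht s)
    (hc.intervalIntegrable _ _)]
  refine intervalIntegral.integral_congr_ae ?_
  have : ∀ᵐ s ∂μ01, Fxx b z t s = (ut b ω z t - rr b ω z t : Hsp) s := by
    filter_upwards [Lp.coeFn_sub (ut b ω z t) (rr b ω z t), h.ut_ae ht, rr_ae b ω z t, h.u_ae ht.le]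
      with s h1 h2 h3 h4
    rw [h1, Pi.sub_apply, h2, h3, ← h4, Fxx, Ft]; ring
  filter_upwards [(ae_restrict_iff' measurableSet_Ioo).1 this] with s hs hm
  apply hs
  have := uIoc_subset_uIcc hm
  exact (ordConnected_Ioo.uIcc_subset hy hx) this

lemma strong (h : Sol b ω τ e z) (hp : ∀ t, τ < t → ∀ x ∈ Ioo (0:ℝ) 1, 0 < F b z t x) :
    IsStrongSolution b ω τ (u b z) := by
  have hrc : ContinuousOn (rr b ω z) (Ici τ) :=
    (h.cb.smul continuous_const).continuousOn.add (h.cω.continuousOn.smul h.u_cont)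
  refine ⟨rr b ω z, ut b ω z, fun t => ut b ω z t - rr b ω z t, h.u_cont, ?_, ?_, ?_, ?_, ?_⟩
  · intro T hT
    obtain ⟨C, hC⟩ := (isCompact_Icc (a := τ) (b := T)).exists_bound_of_continuousOn
      (hrc.mono Icc_subset_Ici_self)
    refine MemLp.of_bound ((hrc.mono (Ioo_subset_Ioi_self.trans Ioi_subset_Ici_self)).aestronglyMeasurable
      measurableSet_Ioo) C ?_
    filter_upwards [ae_restrict_mem measurableSet_Ioo] with t ht
    exact hC t ⟨ht.1.le, ht.2.le⟩
  · filter_upwards [ae_restrict_mem measurableSet_Ioi] with t ht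
    have ht : τ < t := ht
    filter_upwards [rr_ae b ω z t, h.u_ae ht.le,
      (ae_restrict_mem measurableSet_Ioo : ∀ᵐ x ∂μ01, x ∈ Ioo (0:ℝ) 1)] with x h1 h2 hx
    have := hp t ht x hx
    rw [h2] at this
    refine ⟨1, ?_, by rw [h1]; ring⟩
    simp [heaviside, this.ne', this.le.not_gt]
  · filter_upwards [ae_restrict_mem measurableSet_Ioi] with t ht using h.dom ht
  · exact Filter.Eventually.of_forall fun t => by simp
  · intro T1 T2 h1 h2
    have hi : ∀ t ∈ Icc T1 T2, IntervalIntegrable (ut b ω z) volume T1 t := by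
      intro t ht
      refine (h.ut_cont.mono ?_).intervalIntegrable
      rw [uIcc_of_le ht.1]
      exact fun s hs => lt_of_lt_of_le h1 hs.1
    refine ⟨hi T2 ⟨h2.le, le_rfl⟩, fun t ht => ?_⟩
    rw [intervalIntegral.integral_eq_sub_of_hasDerivAt (fun s hs => h.u_deriv ?_) (hi t ht)]
    · abel
    · rw [uIcc_of_le ht.1] at hs
      exact lt_of_lt_of_le h1 hs.1

end Sol

lemma coef_summ {r : ℝ} (hr : 3 / 4 < r) {v : Hsp} (hv : MemV2r r v) :
    Summable (fun n => |2 * sinCoeff v n|) := by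
  have h2 := summ_kk (le_refl 2)
  refine Summable.of_nonneg_of_le (fun _ => abs_nonneg _) (fun n => ?_) (hv.add h2)
  change _ ≤ kk n ^ (4 * r) * sinCoeff v n ^ 2 + _
  have hk := kk_ge n
  have h3 : kk n ^ 2 ≤ kk n ^ (4 * r) := by
    rw [← Real.rpow_natCast]
    exact Real.rpow_le_rpow_of_exponent_le hk (by push_cast; linarith)
  have hk2 : 0 < kk n ^ 2 := by have := kk_pos n; positivity
  have h4 : kk n ^ 2 * sinCoeff v n ^ 2 ≤ kk n ^ (4 * r) * sinCoeff v n ^ 2 := by gcongr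
  refine le_trans ?_ (add_le_add_left h4 _)
  rw [abs_mul, abs_two, ← sq_abs (sinCoeff v n)]
  have hk0 := kk_pos n
  have : kk n ^ 2 * |sinCoeff v n| ^ 2 + 1 / kk n ^ 2 - 2 * |sinCoeff v n| =
    (kk n * |sinCoeff v n| - 1 / kk n) ^ 2 := by field_simp; ring
  nlinarith [sq_nonneg (kk n * |sinCoeff v n| - 1 / kk n)]

lemma coef_eq {v : Hsp} {vt : ℝ → ℝ} (h : ∀ᵐ x ∂μ01, vt x = v x) (n : ℕ) :
    ∫ x in (0:ℝ)..1, vt x * Real.sin (kk n * x) = sinCoeff v n := by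
  rw [sinCoeff, intervalIntegral.integral_of_le zero_le_one, intervalIntegral.integral_of_le zero_le_one,
    integral_Ioc_eq_integral_Ioo, integral_Ioc_eq_integral_Ioo]
  apply integral_congr_ae
  filter_upwards [h] with x hx
  rw [hx, kk]

/-- for a positive initial datum `u_τ ∈ V^{2r}`, `3/4 < r < 1`,
with `u_τ'(0) > 0` and `u_τ'(1) < 0`, and `b, ω ∈ W^{1,2}_loc(ℝ)`, there is a
unique strong solution (in the class of all solutions); it stays positive with
nonvanishing boundary derivatives for all `t ≥ τ` and enjoys the regularity
`u ∈ C((τ,∞),H³) ∩ C¹((τ,∞),V)`, `d²u/dt² ∈ L²_loc(τ+ε,∞;H)`, and `u_t`, `u_xx`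
classical and continuous on `(τ,∞)×[0,1]`. -/
theorem statement7
    (b ω : ℝ → ℝ) (b0 b1 ω0 ω1 τ : ℝ) (hC : Cond1 b ω b0 b1 ω0 ω1)
    (hb : Wkloc 1 b) (hω : Wkloc 1 ω)
    (r : ℝ) (hr1 : 3 / 4 < r) (hr2 : r < 1)
    (uτ : Hsp) (hV2r : MemV2r r uτ)
    (hpos : PositiveWithBoundaryDerivs uτ) :
    ∃ u : ℝ → Hsp,
      IsStrongSolution b ω τ u ∧ u τ = uτ ∧
      (∀ w : ℝ → Hsp, IsStrongSolution b ω τ w → w τ = uτ →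
        ∀ t, τ ≤ t → w t = u t) ∧
      (∀ t, τ ≤ t → PositiveWithBoundaryDerivs (u t)) ∧
      CjIntoHm 0 3 u (Ioi τ) ∧
      CkIntoV 1 u (Ioi τ) ∧
      HasL2locTimeDerivChain 2 u τ ∧
      ClassicalUtUxx τ u := by
  obtain ⟨vt, g, v1, v2, v3, v4, v5, v6, v7, v8, v9⟩ := id hpos
  have hs := coef_summ hr1 hV2r
  obtain ⟨e, z, h, hz⟩ := exists_sol hC.contb hC.contω hb hω τ
    (a := fun n => 2 * sinCoeff uτ n - b τ * pp n) (by
      refine Summable.of_nonneg_of_le (fun _ => abs_nonneg _) (fun n => abs_sub _ _)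
        (hs.add (g := fun n => |b τ * pp n|) ?_)
      simpa [abs_mul] using pp_summ.mul_left |b τ|)
  have hU : ∀ n, Sol.U b z n τ = 2 * sinCoeff uτ n := fun n => by rw [Sol.U, hz]; ring
  have hF : ∀ x ∈ Icc (0:ℝ) 1, Sol.F b z τ x = vt x := by
    intro x hx
    rcases eq_or_lt_of_le hx.1 with h0 | h0
    · rw [← h0, Sol.F_0, v2]
    rcases eq_or_lt_of_le hx.2 with h1 | h1
    · rw [h1, Sol.F_1, v3]
    rw [h.F_ser le_rfl hx, sin_series v1 hs (fun n => by rw [coef_eq v4]) x ⟨h0, h1⟩]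
    exact tsum_congr fun n => by rw [hU]
  have hτ : Sol.u b z τ = uτ := by
    apply Lp.ext
    filter_upwards [h.u_ae le_rfl, v4,
      (ae_restrict_mem measurableSet_Ioo : ∀ᵐ x ∂μ01, x ∈ Ioo (0:ℝ) 1)] with x h1 h2 h3
    rw [← h1, ← h2, hF x ⟨h3.1.le, h3.2.le⟩]
  obtain ⟨c, hc, hl⟩ := lower_sin v1 v2 v3 v5 v7 v8 v9
  have hlow := h.lower (fun t => hC.b0pos.trans_le (hC.blb t))
    (fun t => hC.ω0nonneg.trans (hC.ωlb t)) hc (fun x hx => by rw [hF x hx]; exact hl x hx)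
  have hst : IsStrongSolution b ω τ (Sol.u b z) := by
    refine h.strong fun t ht x hx => ?_
    obtain ⟨c', hc', hl'⟩ := hlow t
    refine lt_of_lt_of_le ?_ (hl' t ⟨ht.le, le_rfl⟩ x ⟨hx.1.le, hx.2.le⟩)
    have := mul_pos hx.1 (sub_pos.2 hx.2)
    positivity
  refine ⟨Sol.u b z, hst, hτ, fun w hw hw0 t ht => ?_, fun t ht => ?_, h.intoH3, h.intoV, h.chain,
    h.classical⟩
  · obtain ⟨c', hc', hl'⟩ := hlow t
    refine uniq hC hst hw (hw0.trans hτ.symm) (c := 2 * c') (by positivity) (T := t) (fun s hs => ?_) t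
      ⟨ht, le_rfl⟩
    filter_upwards [h.u_ae hs.1.le,
      (ae_restrict_mem measurableSet_Ioo : ∀ᵐ x ∂μ01, x ∈ Ioo (0:ℝ) 1)] with x h1 h2
    rw [← h1]
    exact hl' s ⟨hs.1.le, hs.2.le⟩ x ⟨h2.1.le, h2.2.le⟩
  · rcases eq_or_lt_of_le ht with h0 | h0
    · rw [← h0, hτ]; exact hpos
    · obtain ⟨c', hc', hl'⟩ := hlow t
      exact h.posb h0 hc' (hl' t ⟨ht, le_rfl⟩)

end
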